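/- Fix a positive odd integer u. Let K be an imaginary triquadratic field such that the exponent E(K) of Cl(K) divides u. Then K = ℚ(√p₁*, √p₂*, √p₃*) for some p₁*, p₂* ∈ P*₋ and p₃* ∈ P* such that E(ℚ(√p₁*)) and E(ℚ(√p₂*)) both divide u, and moreover: if p₃* < 0 then E(ℚ(√p₃*)) divides u, while if p₃* > 0 then E(ℚ(√(p₁*p₃*))) and E(ℚ(√(p₂*p₃*))) both divide 2u. -/

import Mathlib

open NumberField

/-- `Qsqrt m` is the subfield `ℚ(√m)` of `ℂ`, generated by a square root of `m`. -/
noncomputable def Qsqrt (m : ℤ) : IntermediateField ℚ ℂ :=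
  IntermediateField.adjoin ℚ {(m : ℂ) ^ ((1 : ℂ) / 2)}

/-- `m` belongs to `P* = {8, -4, -8} ∪ {p* : p odd prime}` where `p* = (-1)^((p-1)/2) * p`. -/
def Pstar (m : ℤ) : Prop :=
  m = 8 ∨ m = -4 ∨ m = -8 ∨ ∃ p : ℕ, p.Prime ∧ Odd p ∧ m = (-1) ^ ((p - 1) / 2) * (p : ℤ)

/-- An `n`-quadratic field realized as a subfield of `ℂ`. -/
def IsNQuadratic (n : ℕ) (K : IntermediateField ℚ ℂ) : Prop :=
  FiniteDimensional ℚ K ∧ IsGalois ℚ K ∧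
    Nonempty ((K ≃ₐ[ℚ] K) ≃* (Fin n → Multiplicative (ZMod 2)))

/-- A subfield of `ℂ` is imaginary if it is not contained in `ℝ`. -/
def IsImaginary (K : IntermediateField ℚ ℂ) : Prop :=
  ∃ x : K, (x : ℂ).im ≠ 0

/-- The exponent `E(K)` of the class group of a subfield `K` of `ℂ`. -/
noncomputable def Efield (K : IntermediateField ℚ ℂ) : ℕ :=
  Monoid.exponent (ClassGroup (𝓞 K))

section

/-- The squares have index `2 ^ (rank + 1)` in the unit group. -/
theorem units_sq_index (K : Type*) [Field K] [NumberField K] :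
    (powMonoidHom 2 : (𝓞 K)ˣ →* (𝓞 K)ˣ).range.index = 2 ^ (Units.rank K + 1) := by
  let f : Units.torsion K × (Fin (Units.rank K) → Multiplicative ℤ) →* (𝓞 K)ˣ :=
    { toFun := fun x => (x.1 : (𝓞 K)ˣ) * ∏ i, (Units.fundSystem K i) ^ ((x.2 i).toAdd)
      map_one' := by simp
      map_mul' := fun x y => by
        simp only [Prod.fst_mul, Subgroup.coe_mul, Prod.snd_mul, Pi.mul_apply, toAdd_mul, zpow_add,
          Finset.prod_mul_distrib]
        exact mul_mul_mul_comm _ _ _ _ }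
  have hf : Function.Bijective f := by
    constructor
    · intro x y hxy
      obtain ⟨z, -, hz⟩ := Units.exist_unique_eq_mul_prod K (f x)
      have h1 := hz (x.1, fun i => (x.2 i).toAdd) rfl
      have h2 := hz (y.1, fun i => (y.2 i).toAdd) hxy
      have h3 := h1.trans h2.symm
      simp only [Prod.mk.injEq] at h3
      ext1
      · exact h3.1
      · funext i
        exact Multiplicative.toAdd.injective (congrFun h3.2 i)
    · intro x
      obtain ⟨z, hz, -⟩ := Units.exist_unique_eq_mul_prod K x
      exact ⟨(z.1, fun i => Multiplicative.ofAdd (z.2 i)), hz.symm⟩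
  let e := MulEquiv.ofBijective f hf
  have h1 : (powMonoidHom 2 : (𝓞 K)ˣ →* (𝓞 K)ˣ).range =
      (((powMonoidHom 2 : Units.torsion K →* Units.torsion K).range.prod
        (Subgroup.pi Set.univ (fun _ : Fin (Units.rank K) =>
          (powMonoidHom 2 : Multiplicative ℤ →* Multiplicative ℤ).range)))).map
        (e : _ →* (𝓞 K)ˣ) := by
    ext x
    constructor
    · rintro ⟨y, rfl⟩
      obtain ⟨z, rfl⟩ := e.surjective y
      refine ⟨z ^ 2, ?_, by simp⟩
      refine ⟨⟨z.1, rfl⟩, fun i _ => ⟨z.2 i, rfl⟩⟩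
    · rintro ⟨z, ⟨⟨a, ha⟩, hz⟩, rfl⟩
      choose b hb using fun i => hz i (Set.mem_univ i)
      refine ⟨e (a, b), ?_⟩
      simp only [powMonoidHom_apply, ← map_pow]
      exact congrArg e (Prod.ext ha (funext hb))
  rw [h1, Subgroup.index_map_equiv, Subgroup.index_prod, Subgroup.index_pi,
    IsCyclic.index_powMonoidHom_range, Nat.gcd_eq_right]
  · have : (powMonoidHom 2 : Multiplicative ℤ →* Multiplicative ℤ).range.index = 2 := by
      have h2 : (powMonoidHom 2 : Multiplicative ℤ →* Multiplicative ℤ).range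
        = AddSubgroup.toSubgroup (AddSubgroup.zmultiples (2 : ℤ)) := by
        ext x
        constructor
        · rintro ⟨y, rfl⟩
          refine ⟨y.toAdd, ?_⟩
          simp [mul_comm]
        · rintro ⟨y, hy⟩
          refine ⟨Multiplicative.ofAdd y, ?_⟩
          apply Multiplicative.toAdd.injective
          rw [← hy]
          simp [mul_comm]
      rw [h2, AddSubgroup.index_toSubgroup]
      simp
    simp [this, pow_succ, mul_comm]
  · exact (Units.even_torsionOrder K).two_dvd

/-- Index count behind Hilbert's Theorem 94 (quadratic case). -/
theorem herbrand_count {E F : Type*} [CommGroup E] [CommGroup F] (i : F →* E) (N : E →* F)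
    (hi : Function.Injective i) (hNi : ∀ a, N (i a) = a ^ 2)
    (h90 : ∀ e, N e = 1 → ∃ e', e * e' ^ 2 = i (N e'))
    (h1 : ∀ e : E, e ^ 2 = 1 → e ∈ i.range) (m : F) (hm : m ≠ 1) (hm2 : m ^ 2 = 1)
    (hfin : (powMonoidHom 2 : F →* F).range.index ≠ 0) :
    2 * (powMonoidHom 2 : E →* E).range.index ≤ (powMonoidHom 2 : F →* F).range.index ^ 2 := by
  set E2 := (powMonoidHom 2 : E →* E).range with hE2
  set F2 := (powMonoidHom 2 : F →* F).range with hF2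
  set H := i.range ⊔ E2 with hH
  have hEH : E2 ≤ H := le_sup_right
  have e1 : E2.relIndex H * H.index = E2.index := Subgroup.relIndex_mul_index hEH
  have e2 : E2.relIndex H = (E2.comap i).index := by
    rw [hH, sup_comm, Subgroup.relIndex_sup_left, Subgroup.index_comap]
  have hFle : F2 ≤ E2.comap i := by
    rintro _ ⟨a, rfl⟩
    exact ⟨i a, by simp⟩
  have e3 : F2.relIndex (E2.comap i) * (E2.comap i).index = F2.index :=
    Subgroup.relIndex_mul_index hFle
  have e4 : F2.relIndex (E2.comap i) ≠ 1 := by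
    rw [Ne, Subgroup.relIndex_eq_one]
    intro hle
    obtain ⟨e0, he0⟩ := h90 (i m) (by rw [hNi, hm2])
    have hmem : m⁻¹ * N e0 ∈ E2.comap i := by
      refine ⟨e0, ?_⟩
      simp only [powMonoidHom_apply, map_mul, map_inv, ← he0]
      simp
    obtain ⟨b, hb⟩ := hle hmem
    simp only [powMonoidHom_apply] at hb
    have h2 : (e0 * (i b)⁻¹) ^ 2 = 1 := by
      rw [mul_pow, inv_pow, ← map_pow, hb, map_mul, ← he0, map_inv]
      simp
    obtain ⟨c, hc⟩ := h1 _ h2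
    have h3 : e0 = i (c * b) := by rw [map_mul, hc]; simp
    rw [h3, hNi, ← map_pow, ← map_mul] at he0
    exact hm (mul_eq_right.mp (hi he0))
  have e5 : H.index ≤ F2.index := by
    have hle : F2.comap N ≤ H := by
      rintro e ⟨a, ha⟩
      have ha : a ^ 2 = N e := ha
      have h2 : N (e * (i a)⁻¹) = 1 := by
        rw [map_mul, map_inv, hNi, ha, mul_inv_cancel]
      obtain ⟨e', he'⟩ := h90 _ h2
      have h3 : e = i (N e' * a) * (e'⁻¹) ^ 2 := by
        rw [map_mul, ← he']
        rw [inv_pow, eq_mul_inv_iff_mul_eq, mul_right_comm, inv_mul_cancel_right]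
      rw [h3]
      exact Subgroup.mul_mem_sup ⟨_, rfl⟩ ⟨_, rfl⟩
    have h4 : (F2.comap N).index ∣ F2.index := by
      rw [Subgroup.index_comap]
      exact Subgroup.relIndex_dvd_index_of_normal _ _
    exact Nat.le_of_dvd (Nat.pos_of_ne_zero hfin) ((Subgroup.index_dvd_of_le hle).trans h4)
  have e6 : 2 ≤ F2.relIndex (E2.comap i) := by
    have : F2.relIndex (E2.comap i) ≠ 0 := by
      intro h0; rw [h0, zero_mul] at e3; exact hfin e3.symm
    omega
  rw [← e1, e2, sq]
  calc 2 * ((E2.comap i).index * H.index) = (2 * (E2.comap i).index) * H.index := by ring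
    _ ≤ F2.index * F2.index := by
      apply Nat.mul_le_mul _ e5
      rw [← e3]
      exact Nat.mul_le_mul_right _ e6

end

section

theorem rank_add_one_tc (K : Type*) [Field K] [NumberField K] [IsTotallyComplex K] :
    2 * (Units.rank K + 1) = Module.finrank ℚ K := by
  classical
  have h1 := IsTotallyComplex.finrank K
  have h2 := InfinitePlace.card_eq_nrRealPlaces_add_nrComplexPlaces K
  rw [IsTotallyComplex.nrRealPlaces_eq_zero, zero_add] at h2
  have h3 : 0 < Fintype.card (InfinitePlace K) := Fintype.card_pos
  rw [h1, ← h2]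
  unfold Units.rank
  omega

theorem fixed_int {K L : Type*} [Field K] [Field L] [Algebra K L]
    (σ : L ≃ₐ[K] L) (hfix : ∀ x, σ x = x → ∃ a : K, algebraMap K L a = x)
    (x : 𝓞 L) (hx : σ (x : L) = x) : ∃ a : 𝓞 K, algebraMap (𝓞 K) (𝓞 L) a = x := by
  obtain ⟨a, ha⟩ := hfix _ hx
  have hInt : IsIntegral ℤ a := by
    have h : IsIntegral ℤ (algebraMap K L a) := by rw [ha]; exact RingOfIntegers.isIntegral_coe x
    exact (isIntegral_algebraMap_iff (algebraMap K L).injective).mp h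
  refine ⟨⟨a, hInt⟩, ?_⟩
  apply RingOfIntegers.coe_injective
  exact ha

/-- Hilbert 94 for quadratic unramified extensions: impossible when class exponents are odd. -/
theorem no_unramified (K L : Type*) [Field K] [NumberField K] [Field L] [NumberField L]
    [Algebra K L] [IsTotallyComplex K] (hfr : Module.finrank K L = 2) (σ : L ≃ₐ[K] L)
    (hσ : ∀ x, σ (σ x) = x) (hfix : ∀ x, σ x = x → ∃ a : K, algebraMap K L a = x)
    (b : 𝓞 L) (hb0 : b ≠ 0) (hb : σ (b : L) = -b) (u : ℕ) (hu : Odd u)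
    (hcl : ∀ I : Ideal (𝓞 K), ∃ a, I ^ u = Ideal.span {a})
    (s : 𝓞 L ≃+* 𝓞 L) (hs : ∀ x : 𝓞 L, ((s x : 𝓞 L) : L) = σ x)
    (φ₁ θ₁ φ₂ θ₂ : 𝓞 L) (hun : φ₁ * (θ₁ - s θ₁) + φ₂ * (θ₂ - s θ₂) = 1) : False := by
  classical
  have hss : ∀ x, s (s x) = x := fun x => RingOfIntegers.coe_injective (by
    change ((s (s x) : 𝓞 L) : L) = x
    rw [hs, hs, hσ])
  have hsb : s b = -b := RingOfIntegers.coe_injective (by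
    change ((s b : 𝓞 L) : L) = ((-b : 𝓞 L) : L)
    rw [hs, hb]; simp)
  set j := algebraMap (𝓞 K) (𝓞 L) with hj
  have hjinj : Function.Injective j := RingOfIntegers.algebraMap.injective K L
  have hsj : ∀ a, s (j a) = j a := fun a => RingOfIntegers.coe_injective (by
    change ((s (j a) : 𝓞 L) : L) = ((j a : 𝓞 L) : L)
    rw [hs]
    exact σ.commutes (a : K))
  have hfixO : ∀ x : 𝓞 L, s x = x → ∃ a, j a = x := fun x hx =>
    fixed_int σ hfix x (by rw [← hs, hx])
  -- invariant ideals descend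
  have hdesc : ∀ I : Ideal (𝓞 L), (∀ x ∈ I, s x ∈ I) → (I.comap j).map j = I := by
    intro I hI
    apply le_antisymm Ideal.map_comap_le
    intro x hx
    have key : ∀ y : 𝓞 L, y * x + s (y * x) ∈ (I.comap j).map j := by
      intro y
      obtain ⟨a, ha⟩ := hfixO (y * x + s (y * x)) (by rw [map_add, hss, add_comm])
      rw [← ha]
      apply Ideal.mem_map_of_mem
      rw [Ideal.mem_comap, ha]
      exact I.add_mem (I.mul_mem_left _ hx) (hI _ (I.mul_mem_left _ hx))
    have e : x = φ₁ * (θ₁ * x + s (θ₁ * x)) + φ₂ * (θ₂ * x + s (θ₂ * x))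
        - (φ₁ * s θ₁ + φ₂ * s θ₂) * (1 * x + s (1 * x)) := by
      simp only [map_mul, map_one]
      linear_combination (-x) * hun
    rw [e]
    exact Ideal.sub_mem _ (Ideal.add_mem _ (Ideal.mul_mem_left _ _ (key _))
      (Ideal.mul_mem_left _ _ (key _))) (Ideal.mul_mem_left _ _ (key _))
  -- the norm map on units
  have hN : ∀ e : (𝓞 L)ˣ, ∃ a : (𝓞 K)ˣ, j a = e * s e := by
    intro e
    obtain ⟨a, ha⟩ := hfixO (e * s e) (by rw [map_mul, hss, mul_comm])
    obtain ⟨a', ha'⟩ := hfixO ((e⁻¹ : (𝓞 L)ˣ) * s (e⁻¹ : (𝓞 L)ˣ)) (by rw [map_mul, hss, mul_comm])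
    have h1 : a * a' = 1 := by
      apply hjinj
      rw [map_mul, ha, ha', map_one, mul_mul_mul_comm, ← map_mul]
      simp
    exact ⟨⟨a, a', h1, by rw [mul_comm, h1]⟩, ha⟩
  choose Nf hNf using hN
  let N : (𝓞 L)ˣ →* (𝓞 K)ˣ :=
    { toFun := Nf
      map_one' := Units.ext (hjinj (by simp [hNf]))
      map_mul' := fun x y => Units.ext (hjinj (by
        simp only [hNf, Units.val_mul, map_mul]; ring)) }
  let i : (𝓞 K)ˣ →* (𝓞 L)ˣ := Units.map (j : 𝓞 K →* 𝓞 L)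
  have hiv : ∀ a, ((i a : (𝓞 L)ˣ) : 𝓞 L) = j a := fun a => rfl
  -- Hilbert 90
  have h90 : ∀ e, N e = 1 → ∃ e', e * e' ^ 2 = i (N e') := by
    intro e he
    have hes : (e : 𝓞 L) * s e = 1 := by
      rw [← hNf]; change j ((N e : (𝓞 K)ˣ) : 𝓞 K) = 1; rw [he]; simp
    -- integral `α` with `s α = e α`
    obtain ⟨α, hα0, hα⟩ : ∃ α : 𝓞 L, α ≠ 0 ∧ s α = e * α := by
      by_cases h : (1 + s e : 𝓞 L) = 0
      · refine ⟨b, hb0, ?_⟩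
        have h2 : s (e : 𝓞 L) = -1 := by linear_combination h
        have h3 : (e : 𝓞 L) = -1 := by
          have := congrArg s h2
          rw [hss] at this; simpa using this
        rw [hsb, h3]; ring
      · refine ⟨1 + s e, h, ?_⟩
        rw [map_add, hss, map_one, mul_add, hes]; ring
    obtain ⟨I, hI⟩ : ∃ I : Ideal (𝓞 K), I.map j = Ideal.span {α} := by
      refine ⟨_, hdesc (Ideal.span {α}) ?_⟩
      intro x hx
      obtain ⟨y, rfl⟩ := Ideal.mem_span_singleton'.mp hx
      rw [map_mul, hα]
      exact Ideal.mem_span_singleton'.mpr ⟨s y * e, by ring⟩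
    obtain ⟨a, ha⟩ := hcl I
    have h1 : Ideal.span {α ^ u} = Ideal.span {j a} := by
      rw [← Ideal.span_singleton_pow, ← hI, ← Ideal.map_pow, ha, Ideal.map_span]
      simp
    obtain ⟨v, hv⟩ := Ideal.span_singleton_eq_span_singleton.mp h1
    -- `α ^ u * v = j a`
    have h2 : (e : 𝓞 L) ^ u * s v = v := by
      have h3 := congrArg s hv
      rw [map_mul, map_pow, hα, hsj, ← hv, mul_pow] at h3
      have h4 : α ^ u ≠ 0 := pow_ne_zero _ hα0
      apply mul_left_cancel₀ h4
      linear_combination h3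
    obtain ⟨k, hk⟩ := hu
    -- e = v / s v * (e^2)^(-k), and  e^2 = e / s e
    refine ⟨e ^ k * v⁻¹, ?_⟩
    apply Units.ext
    rw [hiv]
    change _ = j (Nf _)
    rw [hNf]
    have hv' : s (v : 𝓞 L) * s ((v⁻¹ : (𝓞 L)ˣ) : 𝓞 L) = 1 := by rw [← map_mul]; simp
    have hv'' : (v : 𝓞 L) * ((v⁻¹ : (𝓞 L)ˣ) : 𝓞 L) = 1 := by simp
    have hek : (e : 𝓞 L) ^ k * s (e : 𝓞 L) ^ k = 1 := by rw [← mul_pow, hes, one_pow]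
    push_cast
    rw [map_mul, map_pow]
    have h5 : (e : 𝓞 L) ^ u = v * s ((v⁻¹ : (𝓞 L)ˣ) : 𝓞 L) := by
      rw [← h2]; linear_combination (-(e : 𝓞 L) ^ u) * hv'
    have h6 : (e : 𝓞 L) * (e ^ k) ^ 2 = e ^ u := by rw [hk]; ring
    rw [mul_pow, ← mul_assoc, h6, h5]
    generalize s ((v⁻¹ : (𝓞 L)ˣ) : 𝓞 L) = sv at *
    generalize ((v⁻¹ : (𝓞 L)ˣ) : 𝓞 L) = vi at *
    generalize (e : 𝓞 L) ^ k = ek at *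
    generalize s (e : 𝓞 L) ^ k = sk at *
    linear_combination (sv * vi) * hv'' - vi * sv * hek
  have hcount := herbrand_count i N
    (fun a a' h => Units.ext (hjinj (by rw [← hiv, ← hiv, h])))
    (fun a => Units.ext (hjinj (by
      change j (Nf (i a)) = _
      rw [hNf, hiv, hsj]; simp [sq])))
    h90
    (fun e he => by
      have h1 : ((e : 𝓞 L) - 1) * (e + 1) = 0 := by
        have := congrArg Units.val he
        push_cast at this
        linear_combination this
      rcases mul_eq_zero.mp h1 with h | h
      · exact ⟨1, Units.ext (by rw [hiv]; push_cast; rw [map_one]; linear_combination -h)⟩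
      · exact ⟨-1, Units.ext (by rw [hiv]; push_cast; rw [map_neg, map_one]; linear_combination -h)⟩)
    (-1) (by
      intro h
      have h1 := congrArg Units.val h
      push_cast at h1
      have h2 : (2 : 𝓞 K) = 0 := by linear_combination -h1
      exact two_ne_zero h2) (by simp)
    (by rw [units_sq_index]; positivity)
  rw [units_sq_index, units_sq_index] at hcount
  haveI : IsTotallyComplex L := isTotallyComplex_of_algebra K L
  have r1 := rank_add_one_tc K
  have r2 := rank_add_one_tc L
  have r3 := Module.finrank_mul_finrank ℚ K L
  rw [hfr] at r3
  have r4 : Units.rank L + 1 = (Units.rank K + 1) * 2 := by omega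
  rw [r4, pow_mul] at hcount
  have : 0 < (2 ^ (Units.rank K + 1)) ^ 2 := by positivity
  omega

end

section

theorem isInt_quad_aux {A B : Type*} [CommRing A] [Nontrivial A] [CommRing B] [Algebra A B] (x : B) (p q : A)
    (h : x ^ 2 = algebraMap A B p * x + algebraMap A B q) : IsIntegral A x := by
  refine ⟨Polynomial.X ^ 2 - (Polynomial.C p * Polynomial.X + Polynomial.C q), ?_, ?_⟩
  · apply Polynomial.monic_X_pow_sub
    exact lt_of_le_of_lt Polynomial.degree_linear_le (by norm_num)
  · simp [h]

theorem isInt_quad {L : Type*} [Field L] (x p q : L) (hp : IsIntegral ℤ p) (hq : IsIntegral ℤ q)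
    (h : x ^ 2 = p * x + q) : IsIntegral ℤ x := by
  have : IsIntegral (integralClosure ℤ L) x := isInt_quad_aux x ⟨p, hp⟩ ⟨q, hq⟩ h
  exact isIntegral_trans x this

theorem sqrt_core (K L : Type*) [Field K] [NumberField K] [Field L] [NumberField L]
    [Algebra K L] [IsTotallyComplex K] (hfr : Module.finrank K L = 2) (σ : L ≃ₐ[K] L)
    (hσ : ∀ x, σ (σ x) = x) (hfix : ∀ x, σ x = x → ∃ a : K, algebraMap K L a = x)
    (u : ℕ) (hu : Odd u)
    (hcl : ∀ I : Ideal (𝓞 K), ∃ a, I ^ u = Ideal.span {a})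
    (δ δ' ρ κ : 𝓞 K) (h1 : δ * δ' = ρ ^ 2) (h2 : 4 ∣ δ - κ ^ 2) (h3 : IsCoprime δ (4 * δ'))
    (β : L) (hβ0 : β ≠ 0) (hβ : β ^ 2 = algebraMap K L δ) (hσβ : σ β = -β) : False := by
  obtain ⟨w, hw⟩ := h2
  obtain ⟨a, b, hab⟩ := h3
  have hInt : ∀ x : 𝓞 K, IsIntegral ℤ (algebraMap K L x) := fun x =>
    (RingOfIntegers.isIntegral_coe x).algebraMap
  have h4 : algebraMap K L ((4 : 𝓞 K) : K) = 4 := by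
    rw [show ((4 : 𝓞 K) : K) = 4 from map_ofNat (algebraMap (𝓞 K) K) 4, map_ofNat]
  have h22 : ((2 : 𝓞 K) : K) = 2 := map_ofNat (algebraMap (𝓞 K) K) 2
  have hz : IsIntegral ℤ (0 : L) := isIntegral_zero
  have iβ : IsIntegral ℤ β := isInt_quad β 0 _ hz (hInt δ) (by rw [hβ]; ring)
  have h1' : algebraMap K L δ * algebraMap K L δ' = algebraMap K L ρ ^ 2 := by
    have := congrArg (fun z : 𝓞 K => algebraMap K L z) h1
    simpa using this
  have hw' : algebraMap K L δ = algebraMap K L κ ^ 2 + 4 * algebraMap K L w := by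
    have := congrArg (fun z : 𝓞 K => algebraMap K L z) hw
    simp only [map_sub, map_mul, map_pow] at this
    rw [h4] at this
    linear_combination this
  have hab' : algebraMap K L a * algebraMap K L δ + algebraMap K L b * (4 * algebraMap K L δ') = 1 := by
    have := congrArg (fun z : 𝓞 K => algebraMap K L z) hab
    simp only [map_add, map_mul, map_one] at this
    rw [h4] at this
    exact this
  have hβ' : (algebraMap K L ρ / β) ^ 2 = algebraMap K L δ' := by
    rw [div_pow, ← h1', ← hβ]
    field_simp
  have iβ' : IsIntegral ℤ (algebraMap K L ρ / β) := isInt_quad _ 0 _ hz (hInt δ') (by rw [hβ']; ring)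
  have iθ : IsIntegral ℤ ((algebraMap K L κ + β) / 2) :=
    isInt_quad _ _ _ (hInt κ) (hInt w) (by
      field_simp
      linear_combination hβ + hw')
  have hsβ' : σ (algebraMap K L ρ / β) = - (algebraMap K L ρ / β) := by
    rw [map_div₀, hσβ, σ.commutes, div_neg]
  let j := algebraMap (𝓞 K) (𝓞 L)
  have hj : ∀ x : 𝓞 K, ((j x : 𝓞 L) : L) = algebraMap K L x := fun x => rfl
  refine no_unramified K L hfr σ hσ hfix ⟨β, iβ⟩ ?_ hσβ u hu hcl
    (RingOfIntegers.mapRingEquiv (σ : L ≃+* L)) (fun x => rfl)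
    (j a * ⟨β, iβ⟩) ⟨_, iθ⟩ (j (2 * b) * ⟨_, iβ'⟩) ⟨_, iβ'⟩ ?_
  · intro h
    exact hβ0 (congrArg (fun z : 𝓞 L => (z : L)) h)
  · apply RingOfIntegers.coe_injective
    change (algebraMap K L a * β) * ((algebraMap K L κ + β) / 2 - σ ((algebraMap K L κ + β) / 2)) +
      (algebraMap K L (((2 : 𝓞 K) : K) * b) * (algebraMap K L ρ / β)) *
      ((algebraMap K L ρ / β) - σ (algebraMap K L ρ / β)) = 1
    rw [hsβ', h22, map_mul, map_div₀, map_add, hσβ, σ.commutes]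
    simp only [map_ofNat]
    rw [← hab', ← hβ, ← hβ']
    field_simp
    ring

theorem sqrt_lemma (K : Type*) [Field K] [NumberField K] [IsTotallyComplex K]
    (u : ℕ) (hu : Odd u)
    (hcl : ∀ I : Ideal (𝓞 K), ∃ a, I ^ u = Ideal.span {a})
    (δ δ' ρ κ : 𝓞 K) (h1 : δ * δ' = ρ ^ 2) (h2 : 4 ∣ δ - κ ^ 2) (h3 : IsCoprime δ (4 * δ')) :
    ∃ x : K, x ^ 2 = algebraMap (𝓞 K) K δ := by
  by_contra hno
  push Not at hno
  have hF : Fact (∀ r : K, r ^ 2 ≠ (δ : K) + 0 * r) := ⟨fun r => by simpa using hno r⟩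
  have : NumberField (QuadraticAlgebra K (δ : K) 0) := NumberField.of_module_finite K _
  let σ : QuadraticAlgebra K (δ : K) 0 ≃ₐ[K] QuadraticAlgebra K (δ : K) 0 :=
    AlgEquiv.ofRingEquiv (f := (starRingAut : RingAut (QuadraticAlgebra K (δ : K) 0))) (fun r => by
      change star _ = _
      ext <;> simp)
  have hσ : ∀ x : QuadraticAlgebra K (δ : K) 0, σ x = star x := fun _ => rfl
  refine sqrt_core K (QuadraticAlgebra K (δ : K) 0) (QuadraticAlgebra.finrank_eq_two _ _) σ
    (fun x => ?_) (fun x hx => ?_) u hu hcl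
    δ δ' ρ κ h1 h2 h3 ⟨0, 1⟩ ?_ ?_ ?_
  · rw [hσ, hσ, star_star]
  · rw [hσ] at hx
    have := congrArg QuadraticAlgebra.im hx
    simp only [QuadraticAlgebra.im_star] at this
    refine ⟨x.re, ?_⟩
    ext
    · rfl
    · change 0 = x.im
      linear_combination (1/2) * this
  · intro h
    have := congrArg QuadraticAlgebra.im h
    simp at this
  · rw [pow_two]
    ext <;> simp
  · rw [hσ]
    ext <;> simp

end

section

/-- Square root of an integer exists in `K`. -/
def HasSqrt (K : Type*) [Field K] (d : ℤ) : Prop := ∃ x : K, x ^ 2 = (d : K)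

theorem isInt_sqrt {K : Type*} [Field K] {x : K} {d : ℤ} (h : x ^ 2 = (d : K)) : IsIntegral ℤ x :=
  isInt_quad x 0 d isIntegral_zero (isIntegral_intCast d) (by rw [h]; ring)

theorem toO {K : Type*} [Field K] {x : K} (h : IsIntegral ℤ x) :
    ∃ X : 𝓞 K, algebraMap (𝓞 K) K X = x := ⟨⟨x, h⟩, rfl⟩

theorem O_inj {K : Type*} [Field K] {x y : 𝓞 K} (h : algebraMap (𝓞 K) K x = algebraMap (𝓞 K) K y) :
    x = y := RingOfIntegers.coe_injective h

theorem app1 (K : Type*) [Field K] [NumberField K] [IsTotallyComplex K]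
    (u : ℕ) (hu : Odd u) (hcl : ∀ I : Ideal (𝓞 K), ∃ a, I ^ u = Ideal.span {a})
    (p : ℕ) (hp : p.Prime) (hpo : Odd p) (e : ℤ) (hpe : ¬ (p : ℤ) ∣ e)
    (hd : HasSqrt K (p * e)) : HasSqrt K ((-1) ^ ((p - 1) / 2) * (p : ℤ)) := by
  obtain ⟨x, hx⟩ := hd
  set ε : ℤ := (-1) ^ ((p - 1) / 2) with hε
  have hεε : ε * ε = 1 := by rw [hε, ← pow_add, ← two_mul, pow_mul]; norm_num
  have h4 : (4 : ℤ) ∣ ε * p - 1 := by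
    obtain ⟨k, hk⟩ := hpo
    have : (p - 1) / 2 = k := by omega
    rw [hε, this, hk]
    rcases Nat.even_or_odd k with h | h
    · rw [h.neg_one_pow]; obtain ⟨l, hl⟩ := h; exact ⟨l, by rw [hl]; push_cast; ring⟩
    · rw [h.neg_one_pow]; obtain ⟨l, hl⟩ := h; exact ⟨-l - 1, by rw [hl]; push_cast; ring⟩
  have hcop : IsCoprime (ε * p) (4 * (ε * e)) := by
    have hpp : Prime (p : ℤ) := Nat.prime_iff_prime_int.mp hp
    have hεu : IsUnit ε := IsUnit.of_mul_eq_one ε hεε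
    have hc2 : IsCoprime (p : ℤ) 2 := by
      rw [hpp.coprime_iff_not_dvd]
      intro h
      have : p ∣ 2 := by exact_mod_cast h
      have := (Nat.prime_dvd_prime_iff_eq hp Nat.prime_two).mp this
      subst this
      revert hpo; decide
    have hce : IsCoprime (p : ℤ) e := (hpp.coprime_iff_not_dvd).mpr hpe
    have h1 : IsCoprime (p : ℤ) (4 * (ε * e)) := by
      apply IsCoprime.mul_right
      · have := hc2.mul_right hc2; norm_num at this; exact this
      · exact (isCoprime_mul_unit_left_right hεu _ _).mpr hce
    exact (isCoprime_mul_unit_left_left hεu _ _).mpr h1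
  obtain ⟨X, rfl⟩ := toO (isInt_sqrt hx)
  have := sqrt_lemma K u hu hcl ((ε * p : ℤ) : 𝓞 K) ((ε * e : ℤ) : 𝓞 K) X 1 ?_ ?_ ?_
  · obtain ⟨y, hy⟩ := this
    exact ⟨y, by rw [hy, map_intCast]⟩
  · apply O_inj
    rw [map_mul, map_pow, map_intCast, map_intCast, hx]
    have : ((ε * ε : ℤ) : K) = 1 := by rw [hεε]; simp
    push_cast at this ⊢
    linear_combination (p * e : K) * this
  · obtain ⟨k, hk⟩ := h4
    refine ⟨(k : 𝓞 K), ?_⟩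
    have := congrArg (fun z : ℤ => (z : 𝓞 K)) hk
    push_cast at this ⊢
    linear_combination this
  · have := hcop.map (Int.castRingHom (𝓞 K))
    simpa using this

theorem redei (K : Type*) [Field K] [NumberField K] [IsTotallyComplex K]
    (u : ℕ) (hu : Odd u) (hcl : ∀ I : Ideal (𝓞 K), ∃ a, I ^ u = Ideal.span {a})
    (a b x y z : ℤ) (α β : K) (hα : α ^ 2 = (a : K)) (hβ : β ^ 2 = (b : K))
    (h : x ^ 2 = a * y ^ 2 + b * z ^ 2) (hodd : Odd (b * z ^ 2)) (hcop : IsCoprime x (a * y ^ 2))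
    (κ w : 𝓞 K) (hκ : (x : K) + y * α = algebraMap (𝓞 K) K κ ^ 2 + 4 * algebraMap (𝓞 K) K w)
    (g : K ≃ₐ[ℚ] K) (hg : ∀ t, g (g t) = t) (hgα : g α = -α) (hgβ : g β = -β) : False := by
  obtain ⟨A, hA⟩ := toO (isInt_sqrt hα)
  obtain ⟨Bb, hB⟩ := toO (isInt_sqrt hβ)
  have hA2 : A ^ 2 = (a : 𝓞 K) := O_inj (by
    rw [map_pow, hA, map_intCast, hα])
  have hB2 : Bb ^ 2 = (b : 𝓞 K) := O_inj (by
    rw [map_pow, hB, map_intCast, hβ])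
  have hO : (x : 𝓞 K) ^ 2 = a * y ^ 2 + b * z ^ 2 := by exact_mod_cast congrArg (fun t : ℤ => (t : 𝓞 K)) h
  have hprod : ((x : 𝓞 K) + y * A) * (x - y * A) = (z * Bb) ^ 2 := by
    linear_combination hO - (y : 𝓞 K) ^ 2 * hA2 - (z : 𝓞 K) ^ 2 * hB2
  have hprod' : ((x : 𝓞 K) + y * A) * (x - y * A) = ((b * z ^ 2 : ℤ) : 𝓞 K) := by
    rw [hprod]; push_cast; linear_combination (z : 𝓞 K) ^ 2 * hB2
  have hc2 : IsCoprime ((x : 𝓞 K) + y * A) 2 := by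
    have h2 : IsCoprime (b * z ^ 2) (2 : ℤ) := by
      obtain ⟨k, hk⟩ := hodd
      exact ⟨1, -k, by rw [hk]; ring⟩
    have := h2.map (Int.castRingHom (𝓞 K))
    simp only [eq_intCast] at this
    rw [← hprod'] at this
    have := this.of_mul_left_left
    simpa using this
  have hc4 : IsCoprime ((x : 𝓞 K) + y * A) 4 := by
    have := hc2.mul_right hc2; norm_num at this; exact this
  have hcc : IsCoprime ((x : 𝓞 K) + y * A) (x - y * A) := by
    obtain ⟨C, D, hCD⟩ := hc2
    obtain ⟨r, s, hrs⟩ := hcop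
    have hrs' : (r : 𝓞 K) * x + s * (a * y ^ 2) = 1 := by
      exact_mod_cast congrArg (fun t : ℤ => (t : 𝓞 K)) hrs
    refine ⟨C + D * (r + s * y * A), D * (r - s * y * A), ?_⟩
    linear_combination hCD + 2 * D * hrs' + 2 * D * s * y ^ 2 * hA2
  obtain ⟨B, hB⟩ := sqrt_lemma K u hu hcl ((x : 𝓞 K) + y * A) (x - y * A) (z * Bb) κ hprod
    ⟨w, by
      apply O_inj
      rw [map_sub, map_add, map_mul, map_mul, map_pow, map_intCast, map_intCast, map_ofNat, hA]
      linear_combination hκ⟩ (hc4.mul_right hcc)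
  have hB' : B ^ 2 = (x : K) + y * α := by
    rw [hB, map_add, map_mul, map_intCast, map_intCast, hA]
  have hgB' : (g B) ^ 2 = (x : K) - y * α := by
    rw [← map_pow, hB', map_add, map_mul, map_intCast, map_intCast, hgα]; ring
  have hsq : (B * g B) ^ 2 = (z * β) ^ 2 := by
    have hK : (x : K) ^ 2 = a * y ^ 2 + b * z ^ 2 := by exact_mod_cast congrArg (fun t : ℤ => (t : K)) h
    rw [mul_pow, hB', hgB', mul_pow, hβ]
    linear_combination hK - (y : K) ^ 2 * hα
  have hfix : g (B * g B) = B * g B := by rw [map_mul, hg, mul_comm]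
  have hne : (z : K) * β ≠ 0 := by
    intro h0
    have : ((b * z ^ 2 : ℤ) : K) = 0 := by
      push_cast; rw [← hβ]; linear_combination (z * β : K) * h0
    have : b * z ^ 2 = 0 := by exact_mod_cast this
    rw [this] at hodd; simp at hodd
  have hm : g (z * β) = -(z * β) := by rw [map_mul, map_intCast, hgβ]; ring
  rcases sq_eq_sq_iff_eq_or_eq_neg.mp hsq with h' | h'
  · rw [h', hm] at hfix
    apply hne; linear_combination (-1/2) * hfix
  · rw [h', map_neg, hm] at hfix
    apply hne; linear_combination (1/2) * hfix

end

section

theorem Pstar.ne_zero {m : ℤ} (h : Pstar m) : m ≠ 0 := by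
  rcases h with h | h | h | ⟨p, hp, -, h⟩
  · omega
  · omega
  · omega
  · rw [h]; exact mul_ne_zero (pow_ne_zero _ (by norm_num)) (by exact_mod_cast hp.ne_zero)

section
variable (K : Type*) [Field K] [NumberField K]

theorem sign_act {x : K} {d : ℤ} (h : x ^ 2 = (d : K)) (g : K ≃ₐ[ℚ] K) : g x = x ∨ g x = -x := by
  have : (g x) ^ 2 = x ^ 2 := by rw [← map_pow, h, map_intCast]
  exact sq_eq_sq_iff_eq_or_eq_neg.mp this

theorem sq_ne_zero' {x : K} {d : ℤ} (h : x ^ 2 = (d : K)) (hd : d ≠ 0) : x ≠ 0 := by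
  rintro rfl
  apply hd
  have : (d : K) = 0 := by rw [← h]; simp
  exact_mod_cast this

theorem S2 [IsTotallyComplex K]
    (u : ℕ) (hu : Odd u) (hcl : ∀ I : Ideal (𝓞 K), ∃ a, I ^ u = Ideal.span {a})
    (g : K ≃ₐ[ℚ] K) : ∀ n : ℕ, ∀ d : ℤ, d ≠ 0 → d.natAbs = n → ∀ x : K, x ^ 2 = (d : K) → g x = -x →
      ∃ m, Pstar m ∧ ∃ y : K, y ^ 2 = (m : K) ∧ g y = -y := by
  intro n
  induction n using Nat.strong_induction_on with
  | _ n ih =>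
  intro d hd hn x hx hg
  -- square factors
  have hsq : ∀ p : ℕ, p.Prime → ∀ e : ℤ, d = p * (p * e) →
      ∃ m, Pstar m ∧ ∃ y : K, y ^ 2 = (m : K) ∧ g y = -y := by
    intro p hp e he
    have hpK : (p : K) ≠ 0 := by exact_mod_cast hp.ne_zero
    have he0 : e ≠ 0 := by rintro rfl; simp at he; exact hd he
    refine ih e.natAbs ?_ e he0 rfl (x / p) ?_ ?_
    · rw [← hn, he, Int.natAbs_mul, Int.natAbs_mul, Int.natAbs_natCast]
      have := hp.two_le
      have : 0 < e.natAbs := Int.natAbs_pos.mpr he0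
      have h1 : 2 * e.natAbs ≤ p * e.natAbs := Nat.mul_le_mul_right _ hp.two_le
      have h2 : 2 * (p * e.natAbs) ≤ p * (p * e.natAbs) := Nat.mul_le_mul_right _ hp.two_le
      omega
    · rw [div_pow, hx, he]; push_cast; field_simp
    · rw [map_div₀, hg, map_natCast]; ring
  by_cases h1 : ∃ p : ℕ, p.Prime ∧ Odd p ∧ (p : ℤ) ∣ d
  · obtain ⟨p, hp, hpo, e, he⟩ := h1
    by_cases hpe : (p : ℤ) ∣ e
    · obtain ⟨e', he'⟩ := hpe
      exact hsq p hp e' (by rw [he, he'])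
    · obtain ⟨y, hy⟩ := app1 K u hu hcl p hp hpo e hpe ⟨x, by rw [hx, he]⟩
      have hP : Pstar ((-1) ^ ((p - 1) / 2) * (p : ℤ)) := Or.inr (Or.inr (Or.inr ⟨p, hp, hpo, rfl⟩))
      rcases sign_act K hy g with h | h
      · have he0 : e ≠ 0 := by rintro rfl; simp at he; exact hd he
        have hy0 := sq_ne_zero' K hy hP.ne_zero
        set ε : ℤ := (-1) ^ ((p - 1) / 2) with hε
        have hεε : ε * ε = 1 := by rw [hε, ← pow_add, ← two_mul, pow_mul]; norm_num
        have hεK : (ε : K) * ε = 1 := by exact_mod_cast congrArg (fun t : ℤ => (t : K)) hεε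
        have hεn : ε.natAbs = 1 := by
          have := congrArg Int.natAbs hεε
          rw [Int.natAbs_mul] at this
          exact Nat.eq_one_of_mul_eq_one_left this
        refine ih (ε * e).natAbs ?_ (ε * e) ?_ rfl (x / y) ?_ ?_
        · rw [← hn, he, Int.natAbs_mul, Int.natAbs_mul, Int.natAbs_natCast, hεn]
          have := hp.two_le
          have : 0 < e.natAbs := Int.natAbs_pos.mpr he0
          nlinarith
        · apply mul_ne_zero _ he0
          rintro h0; rw [h0] at hεε; simp at hεε
        · rw [div_pow, div_eq_iff (pow_ne_zero 2 hy0), hx, hy, he]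
          push_cast
          linear_combination (-(p : K) * e) * hεK
        · rw [map_div₀, hg, h]; ring
      · exact ⟨_, hP, y, hy, h⟩
  · push Not at h1
    by_cases h2 : (2 : ℤ) ∣ d
    · obtain ⟨e, he⟩ := h2
      by_cases h3 : (2 : ℤ) ∣ e
      · obtain ⟨e', he'⟩ := h3
        exact hsq 2 Nat.prime_two e' (by rw [he, he']; rfl)
      · have : e.natAbs = 1 := by
          by_contra hne
          obtain ⟨q, hq, hqe⟩ := Nat.exists_prime_and_dvd hne
          have hqe' : (q : ℤ) ∣ e := Int.natCast_dvd.mpr hqe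
          rcases hq.eq_two_or_odd' with h | h
          · subst h; exact h3 hqe'
          · exact h1 q hq h (he ▸ hqe'.mul_left 2)
        have hg2 : g (2 * x) = -(2 * x) := by rw [map_mul, hg, map_ofNat]; ring
        rcases Int.natAbs_eq e with h | h <;> rw [this] at h
        · refine ⟨8, Or.inl rfl, 2 * x, ?_, hg2⟩
          rw [mul_pow, hx, he, h]; norm_num
        · refine ⟨-8, Or.inr (Or.inr (Or.inl rfl)), 2 * x, ?_, hg2⟩
          rw [mul_pow, hx, he, h]; norm_num
    · have : d.natAbs = 1 := by
        by_contra hne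
        obtain ⟨q, hq, hqe⟩ := Nat.exists_prime_and_dvd hne
        have hqe' : (q : ℤ) ∣ d := Int.natCast_dvd.mpr hqe
        rcases hq.eq_two_or_odd' with h | h
        · subst h; exact h2 hqe'
        · exact h1 q hq h hqe'
      have hg2 : g (2 * x) = -(2 * x) := by rw [map_mul, hg, map_ofNat]; ring
      rcases Int.natAbs_eq d with h | h <;> rw [this] at h
      · exfalso
        have hx1 : x ^ 2 = 1 := by rw [hx, h]; simp
        rcases sq_eq_sq_iff_eq_or_eq_neg.mp (hx1.trans (one_pow 2).symm) with h | h
        · rw [h, map_one] at hg; norm_num at hg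
        · rw [h, map_neg, map_one] at hg; norm_num at hg
      · refine ⟨-4, Or.inr (Or.inl rfl), 2 * x, ?_, hg2⟩
        rw [mul_pow, hx, h]; norm_num

theorem S1 [IsTotallyComplex K] [IsGalois ℚ K]
    (u : ℕ) (hu : Odd u) (hcl : ∀ I : Ideal (𝓞 K), ∃ a, I ^ u = Ideal.span {a})
    (hG : ∀ g : K ≃ₐ[ℚ] K, ∀ t, g (g t) = t) (hcomm : ∀ g h : K ≃ₐ[ℚ] K, ∀ t, g (h t) = h (g t))
    (g : K ≃ₐ[ℚ] K) (hg : g ≠ 1) :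
      ∃ m, Pstar m ∧ ∃ y : K, y ^ 2 = (m : K) ∧ g y = -y := by
  have key : ∀ l : List (K ≃ₐ[ℚ] K), ∃ t : K, t ≠ 0 ∧ g t = -t ∧ ∀ h ∈ l, h t = t ∨ h t = -t := by
    intro l
    induction l with
    | nil =>
      obtain ⟨s, hs⟩ : ∃ s, g s ≠ s := by
        by_contra hno
        push Not at hno
        exact hg (AlgEquiv.ext hno)
      refine ⟨s - g s, sub_ne_zero.mpr (Ne.symm hs), by rw [map_sub, hG]; ring, by simp⟩
    | cons k l ih =>
      obtain ⟨t, ht, hgt, hl⟩ := ih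
      by_cases h0 : t + k t = 0
      · refine ⟨t, ht, hgt, ?_⟩
        intro h hh
        rcases List.mem_cons.mp hh with rfl | hh
        · right; linear_combination h0
        · exact hl h hh
      · refine ⟨t + k t, h0, by rw [map_add, hcomm g k, hgt, map_neg]; ring, ?_⟩
        intro h hh
        rcases List.mem_cons.mp hh with rfl | hh
        · left; rw [map_add, hG, add_comm]
        · rw [map_add, hcomm h k]
          rcases hl h hh with e | e
          · left; rw [e]
          · right; rw [e, map_neg]; ring
  obtain ⟨t, ht, hgt, hl⟩ := key (Finset.univ : Finset (K ≃ₐ[ℚ] K)).toList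
  have hfix : ∀ h : K ≃ₐ[ℚ] K, h (t ^ 2) = t ^ 2 := by
    intro h
    rw [map_pow]
    rcases hl h (by simp) with e | e <;> rw [e]; ring
  obtain ⟨q, hq⟩ := (IsGalois.mem_range_algebraMap_iff_fixed (F := ℚ) (t ^ 2)).mpr hfix
  have hq' : (q : K) = t ^ 2 := by rw [← hq]; simp
  have hq0 : q ≠ 0 := by
    rintro rfl
    simp at hq'
    exact ht (pow_eq_zero_iff two_ne_zero |>.mp hq'.symm)
  have hden : (q.den : K) ≠ 0 := by exact_mod_cast q.den_ne_zero
  refine S2 K u hu hcl g _ (q.num * q.den) (mul_ne_zero (Rat.num_ne_zero.mpr hq0)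
    (by exact_mod_cast q.den_ne_zero)) rfl (q.den * t) ?_ ?_
  · rw [mul_pow, ← hq']
    have : (q : K) = q.num / q.den := by exact_mod_cast congrArg (fun z : ℚ => (z : K)) (Rat.num_div_den q).symm
    rw [this]
    push_cast
    field_simp
  · rw [map_mul, hgt, map_natCast]; ring
end

end

section

/-- Independent square roots generating the Galois structure. -/
def Tri (K : Type*) [Field K] [Algebra ℚ K] (m1 m2 m3 : ℤ) : Prop :=
  ∃ x1 x2 x3 : K, x1 ^ 2 = (m1 : K) ∧ x2 ^ 2 = (m2 : K) ∧ x3 ^ 2 = (m3 : K) ∧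
    (∀ e1 e2 e3 : K, e1 * e1 = 1 → e2 * e2 = 1 → e3 * e3 = 1 → ∃ g : K ≃ₐ[ℚ] K,
      g x1 = e1 * x1 ∧ g x2 = e2 * x2 ∧ g x3 = e3 * x3) ∧
    (∀ g : K ≃ₐ[ℚ] K, g x1 = x1 → g x2 = x2 → g x3 = x3 → g = 1)

section
variable {K : Type*} [Field K] [Algebra ℚ K]

theorem Tri.swap12 {m1 m2 m3 : ℤ} (h : Tri K m1 m2 m3) : Tri K m2 m1 m3 := by
  obtain ⟨x1, x2, x3, h1, h2, h3, hs, ht⟩ := h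
  refine ⟨x2, x1, x3, h2, h1, h3, fun e1 e2 e3 a b c => ?_, fun g a b c => ht g b a c⟩
  obtain ⟨g, p, q, r⟩ := hs e2 e1 e3 b a c
  exact ⟨g, q, p, r⟩

theorem Tri.swap23 {m1 m2 m3 : ℤ} (h : Tri K m1 m2 m3) : Tri K m1 m3 m2 := by
  obtain ⟨x1, x2, x3, h1, h2, h3, hs, ht⟩ := h
  refine ⟨x1, x3, x2, h1, h3, h2, fun e1 e2 e3 a b c => ?_, fun g a b c => ht g a c b⟩
  obtain ⟨g, p, q, r⟩ := hs e1 e3 e2 a c b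
  exact ⟨g, p, r, q⟩

theorem sq_one_cases {e : K} (h : e * e = 1) : e = 1 ∨ e = -1 :=
  mul_self_eq_one_iff.mp h

/-- Replace `m2` by `m1 m2 / k²`. -/
theorem Tri.repl {m1 m2 m3 : ℤ} (h : Tri K m1 m2 m3) (k m : ℤ) (hk : (k : K) ≠ 0)
    (hm1 : (m1 : K) ≠ 0)
    (hm : m1 * m2 = k ^ 2 * m) : Tri K m1 m m3 := by
  obtain ⟨x1, x2, x3, h1, h2, h3, hs, ht⟩ := h
  have hmK : (m1 : K) * m2 = k ^ 2 * m := by exact_mod_cast congrArg (fun t : ℤ => (t : K)) hm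
  have hx1 : x1 ≠ 0 := by rintro rfl; apply hm1; rw [← h1]; simp
  refine ⟨x1, x1 * x2 / k, x3, h1, ?_, h3, fun e1 e2 e3 a b c => ?_, fun g a b c => ht g a ?_ c⟩
  · rw [div_pow, mul_pow, h1, h2, hmK]; field_simp
  · obtain ⟨g, p, q, r⟩ := hs e1 (e1 * e2) e3 a (by linear_combination b * e1 * e1 + a) c
    refine ⟨g, p, ?_, r⟩
    rw [map_div₀, map_mul, p, q, map_intCast]
    linear_combination (e2 * x1 * x2 / k) * a
  · rw [map_div₀, map_mul, a, map_intCast, div_left_inj' hk] at b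
    exact mul_left_cancel₀ hx1 b
end

theorem tri_exists (K : Type*) [Field K] [NumberField K] [IsTotallyComplex K] [IsGalois ℚ K]
    (u : ℕ) (hu : Odd u) (hcl : ∀ I : Ideal (𝓞 K), ∃ a, I ^ u = Ideal.span {a})
    (hG : ∀ g : K ≃ₐ[ℚ] K, ∀ t, g (g t) = t) (hcomm : ∀ g h : K ≃ₐ[ℚ] K, ∀ t, g (h t) = h (g t))
    (hcard : Fintype.card (K ≃ₐ[ℚ] K) = 8)
    (c : K ≃ₐ[ℚ] K) (m1 : ℤ) (x1 : K) (h1 : x1 ^ 2 = (m1 : K)) (hc1 : c x1 = -x1) (hm1 : Pstar m1) :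
    ∃ m2 m3, Pstar m2 ∧ Pstar m3 ∧ Tri K m1 m2 m3 := by
  classical
  -- nontrivial element fixing x1
  obtain ⟨g2, hg2, hg21⟩ : ∃ g : K ≃ₐ[ℚ] K, g ≠ 1 ∧ g x1 = x1 := by
    by_contra hno
    push Not at hno
    have hinj : Function.Injective (fun g : K ≃ₐ[ℚ] K => decide (g x1 = x1)) := by
      intro g h hgh
      simp only [decide_eq_decide] at hgh
      by_contra hne
      have hx : (h * g) x1 = x1 := by
        change h (g x1) = x1
        rcases sign_act K h1 g with e | e
        · rw [e, hgh.mp e]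
        · rcases sign_act K h1 h with e' | e'
          · rw [hgh.mpr e', e']
          · rw [e, map_neg, e', neg_neg]
      have h1' : h * g ≠ 1 := by
        intro h0
        apply hne
        ext t
        have := congrArg (fun f : K ≃ₐ[ℚ] K => h (f t)) h0
        simp only [AlgEquiv.mul_apply, AlgEquiv.one_apply, hG] at this
        exact this
      exact hno _ h1' hx
    have := Fintype.card_le_of_injective _ hinj
    rw [hcard] at this
    simp at this
  obtain ⟨m2, hm2, x2, h2, hg22⟩ := S1 K u hu hcl hG hcomm g2 hg2
  obtain ⟨g3, hg3, hg31, hg32⟩ : ∃ g : K ≃ₐ[ℚ] K, g ≠ 1 ∧ g x1 = x1 ∧ g x2 = x2 := by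
    by_contra hno
    push Not at hno
    have hinj : Function.Injective (fun g : K ≃ₐ[ℚ] K => (decide (g x1 = x1), decide (g x2 = x2))) := by
      intro g h hgh
      simp only [Prod.mk.injEq, decide_eq_decide] at hgh
      obtain ⟨hgh, hgh2⟩ := hgh
      by_contra hne
      have hx : (h * g) x1 = x1 := by
        change h (g x1) = x1
        rcases sign_act K h1 g with e | e
        · rw [e, hgh.mp e]
        · rcases sign_act K h1 h with e' | e'
          · rw [hgh.mpr e', e']
          · rw [e, map_neg, e', neg_neg]
      have hx2 : (h * g) x2 = x2 := by
        change h (g x2) = x2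
        rcases sign_act K h2 g with e | e
        · rw [e, hgh2.mp e]
        · rcases sign_act K h2 h with e' | e'
          · rw [hgh2.mpr e', e']
          · rw [e, map_neg, e', neg_neg]
      have h1' : h * g ≠ 1 := by
        intro h0
        apply hne
        ext t
        have := congrArg (fun f : K ≃ₐ[ℚ] K => h (f t)) h0
        simp only [AlgEquiv.mul_apply, AlgEquiv.one_apply, hG] at this
        exact this
      exact hno _ h1' hx hx2
    have := Fintype.card_le_of_injective _ hinj
    rw [hcard] at this
    simp at this
  obtain ⟨m3, hm3, x3, h3, hg33⟩ := S1 K u hu hcl hG hcomm g3 hg3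
  have surj : ∀ e1 e2 e3 : K, e1 * e1 = 1 → e2 * e2 = 1 → e3 * e3 = 1 → ∃ g : K ≃ₐ[ℚ] K,
      g x1 = e1 * x1 ∧ g x2 = e2 * x2 ∧ g x3 = e3 * x3 := by
    intro e1 e2 e3 a1 a2 a3
    obtain ⟨k1, hk1⟩ : ∃ k : K ≃ₐ[ℚ] K, k x1 = e1 * x1 := by
      rcases sq_one_cases a1 with rfl | rfl
      · exact ⟨1, by simp⟩
      · exact ⟨c, by rw [hc1]; ring⟩
    obtain ⟨k2, hk21, hk22⟩ : ∃ k : K ≃ₐ[ℚ] K, k x1 = e1 * x1 ∧ k x2 = e2 * x2 := by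
      rcases sq_one_cases a2 with rfl | rfl <;> rcases sign_act K h2 k1 with e | e
      · exact ⟨k1, hk1, by rw [e]; ring⟩
      · exact ⟨k1 * g2, by rw [AlgEquiv.mul_apply, hg21, hk1],
          by rw [AlgEquiv.mul_apply, hg22, map_neg, e]; ring⟩
      · exact ⟨k1 * g2, by rw [AlgEquiv.mul_apply, hg21, hk1],
          by rw [AlgEquiv.mul_apply, hg22, map_neg, e]; ring⟩
      · exact ⟨k1, hk1, by rw [e]; ring⟩
    rcases sq_one_cases a3 with rfl | rfl <;> rcases sign_act K h3 k2 with e | e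
    · exact ⟨k2, hk21, hk22, by rw [e]; ring⟩
    · exact ⟨k2 * g3, by rw [AlgEquiv.mul_apply, hg31, hk21], by rw [AlgEquiv.mul_apply, hg32, hk22],
          by rw [AlgEquiv.mul_apply, hg33, map_neg, e]; ring⟩
    · exact ⟨k2 * g3, by rw [AlgEquiv.mul_apply, hg31, hk21], by rw [AlgEquiv.mul_apply, hg32, hk22],
          by rw [AlgEquiv.mul_apply, hg33, map_neg, e]; ring⟩
    · exact ⟨k2, hk21, hk22, by rw [e]; ring⟩
  refine ⟨m2, m3, hm2, hm3, x1, x2, x3, h1, h2, h3, surj, ?_⟩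
  have hx1 := sq_ne_zero' K h1 hm1.ne_zero
  have hx2 := sq_ne_zero' K h2 hm2.ne_zero
  have hx3 := sq_ne_zero' K h3 hm3.ne_zero
  let f : (K ≃ₐ[ℚ] K) → Bool × Bool × Bool := fun g => (decide (g x1 = x1), decide (g x2 = x2), decide (g x3 = x3))
  have hf : Function.Surjective f := by
    rintro ⟨b1, b2, b3⟩
    let ε : Bool → K := fun b => if b then 1 else -1
    have hε : ∀ b, ε b * ε b = 1 := by intro b; cases b <;> simp [ε]
    have hdec : ∀ (b : Bool) (x : K), x ≠ 0 → decide (ε b * x = x) = b := by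
      intro b x hx
      cases b
      · simp only [ε, decide_eq_false_iff_not]
        intro h
        apply hx
        simp at h
        linear_combination (-1/2) * h
      · simp [ε]
    obtain ⟨g, p, q, r⟩ := surj (ε b1) (ε b2) (ε b3) (hε _) (hε _) (hε _)
    exact ⟨g, by simp only [f, p, q, r, hdec _ _ hx1, hdec _ _ hx2, hdec _ _ hx3]⟩
  have hbij : Function.Bijective f := (Fintype.bijective_iff_surjective_and_card f).mpr ⟨hf, by rw [hcard]; simp⟩
  intro g p q r
  apply hbij.1
  simp [f, p, q, r]

end

section

/-- Action of a field automorphism on integers. -/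
noncomputable def act {K : Type*} [Field K] [Algebra ℚ K] (g : K ≃ₐ[ℚ] K) : 𝓞 K ≃+* 𝓞 K :=
  RingOfIntegers.mapRingEquiv (g : K ≃+* K)

theorem act_coe {K : Type*} [Field K] [Algebra ℚ K] (g : K ≃ₐ[ℚ] K) (x : 𝓞 K) :
    algebraMap (𝓞 K) K (act g x) = g (algebraMap (𝓞 K) K x) := rfl

theorem int_dvd_of_O {K : Type*} [Field K] [NumberField K] {a b : ℤ}
    (h : (a : 𝓞 K) ∣ (b : 𝓞 K)) : a ∣ b := by
  by_cases ha : a = 0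
  · subst ha
    simp at h
    simp [h]
  · obtain ⟨y, hy⟩ := h
    have haQ : (a : ℚ) ≠ 0 := by exact_mod_cast ha
    have haK : (a : K) ≠ 0 := by exact_mod_cast ha
    have h1 : algebraMap ℚ K ((b : ℚ) / a) = algebraMap (𝓞 K) K y := by
      have := congrArg (algebraMap (𝓞 K) K) hy
      rw [map_mul, map_intCast, map_intCast] at this
      rw [map_div₀, map_intCast, map_intCast, this]
      field_simp
    have h2 : IsIntegral ℤ ((b : ℚ) / a) := by
      rw [← isIntegral_algebraMap_iff (algebraMap ℚ K).injective, h1]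
      exact RingOfIntegers.isIntegral_coe y
    obtain ⟨n, hn⟩ := IsIntegrallyClosed.isIntegral_iff.mp h2
    refine ⟨n, ?_⟩
    have h3 : (b : ℚ) = a * n := by
      rw [eq_comm, eq_intCast, ← eq_comm] at hn
      field_simp at hn
      linear_combination -hn
    exact_mod_cast h3

theorem int_of_fixed {K : Type*} [Field K] [NumberField K] [IsGalois ℚ K] (t : 𝓞 K)
    (h : ∀ g : K ≃ₐ[ℚ] K, act g t = t) : ∃ n : ℤ, (n : 𝓞 K) = t := by
  obtain ⟨q, hq⟩ := (IsGalois.mem_range_algebraMap_iff_fixed (F := ℚ) (algebraMap (𝓞 K) K t)).mpr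
    (fun g => by rw [← act_coe, h])
  have h2 : IsIntegral ℤ q := by
    rw [← isIntegral_algebraMap_iff (algebraMap ℚ K).injective, hq]
    exact RingOfIntegers.isIntegral_coe t
  obtain ⟨n, hn⟩ := IsIntegrallyClosed.isIntegral_iff.mp h2
  refine ⟨n, O_inj ?_⟩
  rw [← hq, ← hn]
  simp

/-- An element fixed by everything but the ramified direction cannot have square `ℓ·unit`. -/
theorem C1 (K : Type*) [Field K] [NumberField K] [IsGalois ℚ K]
    (hG : ∀ g : K ≃ₐ[ℚ] K, ∀ t, g (g t) = t) (hcomm : ∀ g h : K ≃ₐ[ℚ] K, ∀ t, g (h t) = h (g t))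
    (c g2 g3 : K ≃ₐ[ℚ] K)
    (hgen : ∀ t : K, c t = t → g2 t = t → g3 t = t → ∀ g : K ≃ₐ[ℚ] K, g t = t)
    (l : ℕ) (hl : l.Prime) (m2 m3 : ℤ) (hm2 : ¬ (l : ℤ) ∣ m2) (hm3 : ¬ (l : ℤ) ∣ m3)
    (t2 t3 D2 D3 : 𝓞 K) (hD2 : t2 - act g2 t2 = D2) (hD3 : t3 - act g3 t3 = D3)
    (hD22 : D2 ^ 2 = m2) (hD33 : D3 ^ 2 = m3)
    (hc2 : act c t2 = t2) (hc3 : act c t3 = t3) (h23 : act g2 t3 = t3)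
    (γ : 𝓞 K) (hγc : act c γ = γ) (η : (𝓞 K)ˣ) (hγ : γ ^ 2 = l * η) : False := by
  have aa : ∀ g : K ≃ₐ[ℚ] K, ∀ x, act g (act g x) = x := fun g x => O_inj (by
    rw [act_coe, act_coe, hG])
  have ac : ∀ g h : K ≃ₐ[ℚ] K, ∀ x, act g (act h x) = act h (act g x) := fun g h x => O_inj (by
    rw [act_coe, act_coe, act_coe, act_coe, hcomm])
  have hlK : ∀ g : K ≃ₐ[ℚ] K, ∀ y : 𝓞 K, (l : 𝓞 K) ∣ y → (l : 𝓞 K) ∣ act g y := by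
    rintro g y ⟨z, rfl⟩
    exact ⟨act g z, by rw [map_mul, map_natCast]⟩
  have hpl : Prime (l : ℤ) := Nat.prime_iff_prime_int.mp hl
  -- trace of nilpotent
  have htr : ∀ y : 𝓞 K, act c y = y → (l : 𝓞 K) ∣ y ^ 2 →
      (l : 𝓞 K) ∣ (y + act g2 y) + act g3 (y + act g2 y) := by
    intro y hy hl2
    set T := (y + act g2 y) + act g3 (y + act g2 y) with hT
    obtain ⟨n, hn⟩ : ∃ n : ℤ, (n : 𝓞 K) = T := by
      apply int_of_fixed
      intro g
      apply O_inj
      rw [act_coe]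
      apply hgen
      · rw [← act_coe]
        congr 1
        rw [hT]
        simp only [map_add, ac c g2, ac c g3, hy]
      · rw [← act_coe]
        congr 1
        rw [hT]
        simp only [map_add, ac g2 g3, aa]
        ring
      · rw [← act_coe]
        congr 1
        rw [hT]
        simp only [map_add, aa]
        ring
    have hrad : ∀ g : K ≃ₐ[ℚ] K, ∀ x, (x : 𝓞 K) ∈ (Ideal.span {(l : 𝓞 K)}).radical →
        act g x ∈ (Ideal.span {(l : 𝓞 K)}).radical := by
      rintro g x ⟨k, hk⟩
      refine ⟨k, ?_⟩
      rw [Ideal.mem_span_singleton] at hk ⊢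
      rw [← map_pow]
      exact hlK g _ hk
    have hy' : y ∈ (Ideal.span {(l : 𝓞 K)}).radical := ⟨2, Ideal.mem_span_singleton.mpr hl2⟩
    have hy2 := Ideal.add_mem _ hy' (hrad g2 y hy')
    obtain ⟨k, hk⟩ := Ideal.add_mem _ hy2 (hrad g3 _ hy2)
    rw [← hT, ← hn, Ideal.mem_span_singleton] at hk
    have h3 : (l : ℤ) ∣ n ^ k := int_dvd_of_O (K := K) (by push_cast; exact hk)
    have h4 := hpl.dvd_of_dvd_pow h3
    rw [← hn]
    obtain ⟨r, hr⟩ := h4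
    exact ⟨r, by rw [hr]; push_cast; rfl⟩
  have hγl : (l : 𝓞 K) ∣ γ ^ 2 := ⟨η, hγ⟩
  have step : ∀ x : 𝓞 K, act c x = x → (l : 𝓞 K) ∣ x ^ 2 → (l : 𝓞 K) ∣ D3 * (x + act g2 x) := by
    intro x hx hx2
    have e1 := htr x hx hx2
    have e2 := htr (t3 * x) (by rw [map_mul, hc3, hx]) (by rw [mul_pow]; exact hx2.mul_left _)
    have e3 : D3 * (x + act g2 x) = ((t3 * x + act g2 (t3 * x)) + act g3 (t3 * x + act g2 (t3 * x)))
        - act g3 t3 * ((x + act g2 x) + act g3 (x + act g2 x)) := by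
      rw [← hD3]
      simp only [map_mul, map_add, h23]
      ring
    rw [e3]
    exact dvd_sub e2 (e1.mul_left _)
  have f1 := step γ hγc hγl
  have f2 := step (t2 * γ) (by rw [map_mul, hc2, hγc]) (by rw [mul_pow]; exact hγl.mul_left _)
  have f3 : D3 * D2 * γ = D3 * (t2 * γ + act g2 (t2 * γ)) - act g2 t2 * (D3 * (γ + act g2 γ)) := by
    rw [← hD2, map_mul]; ring
  have f4 : (l : 𝓞 K) ∣ D3 * D2 * γ := f3 ▸ dvd_sub f2 (f1.mul_left _)
  obtain ⟨y, hy⟩ := f4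
  have f5 : (l : 𝓞 K) * (m2 * m3 * η) = l * (l * y ^ 2) := by
    have : (D3 * D2 * γ) ^ 2 = (l * y) ^ 2 := by rw [hy]
    rw [mul_pow, mul_pow, hγ, hD22, hD33] at this
    linear_combination this
  have hl0 : (l : 𝓞 K) ≠ 0 := by exact_mod_cast hl.ne_zero
  have f6 := mul_left_cancel₀ hl0 f5
  have f7 : ((l : ℤ) : 𝓞 K) ∣ ((m2 * m3 : ℤ) : 𝓞 K) := by
    refine ⟨y ^ 2 * (η⁻¹ : (𝓞 K)ˣ), ?_⟩
    have : (η : 𝓞 K) * (η⁻¹ : (𝓞 K)ˣ) = 1 := Units.mul_inv η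
    push_cast
    linear_combination (η⁻¹ : (𝓞 K)ˣ).val * f6 - (m2 * m3 : 𝓞 K) * this
  rcases hpl.dvd_or_dvd (int_dvd_of_O f7) with h | h
  · exact hm2 h
  · exact hm3 h

end

section

theorem torsion_trick (K : Type*) [Field K] [NumberField K] (g : K ≃ₐ[ℚ] K) (η : (𝓞 K)ˣ)
    (hη : η ∈ Units.torsion K) : ∃ ζ ∈ Units.torsion K, η * Units.map (act g).toRingHom.toMonoidHom η = ζ ^ 2 := by
  let F : (𝓞 K)ˣ →* (𝓞 K)ˣ := Units.map (act g).toRingHom.toMonoidHom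
  have hF : ∀ x : Units.torsion K, F x ∈ Units.torsion K := fun x =>
    MonoidHom.isOfFinOrder F x.2
  let f : Units.torsion K →* Units.torsion K := (F.comp (Units.torsion K).subtype).codRestrict _ hF
  obtain ⟨k, hk⟩ := MonoidHom.map_cyclic f
  have hm1 : (-1 : (𝓞 K)ˣ) ∈ Units.torsion K := by
    change IsOfFinOrder _
    exact isOfFinOrder_iff_pow_eq_one.mpr ⟨2, by norm_num, by simp⟩
  have hFm : F (-1) = -1 := by ext; simp [F]
  have hodd : Odd k := by
    by_contra he
    rw [Int.not_odd_iff_even] at he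
    have h1 := congrArg (fun z : Units.torsion K => (z : (𝓞 K)ˣ)) (hk ⟨-1, hm1⟩)
    have h2 : F (-1) = (-1) ^ k := by
      simp only [Subgroup.coe_zpow] at h1
      exact h1
    rw [hFm, he.neg_one_zpow] at h2
    have := congrArg (fun z : (𝓞 K)ˣ => (z : 𝓞 K)) h2
    have h3 : (-1 : 𝓞 K) = 1 := by simpa using this
    have h4 : (2 : 𝓞 K) = 0 := by linear_combination -h3
    exact two_ne_zero h4
  obtain ⟨j, hj⟩ := hodd
  refine ⟨η ^ (j + 1), Subgroup.zpow_mem _ hη _, ?_⟩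
  have h1 := congrArg (fun z : Units.torsion K => (z : (𝓞 K)ˣ)) (hk ⟨η, hη⟩)
  have h2 : F η = η ^ k := by
    simp only [Subgroup.coe_zpow] at h1
    exact h1
  change η * F η = _
  rw [h2, hj, ← zpow_natCast, ← zpow_mul]
  conv_lhs => rw [← zpow_one_add]
  congr 1
  push_cast
  ring

theorem C2 (K : Type*) [Field K] [NumberField K]
    (u : ℕ) (hu : Odd u) (hcl : ∀ I : Ideal (𝓞 K), ∃ a, I ^ u = Ideal.span {a})
    (hcomm : ∀ g h : K ≃ₐ[ℚ] K, ∀ t, g (h t) = h (g t))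
    (c g : K ≃ₐ[ℚ] K) (hc : ∀ φ : K →+* ℂ, ∀ x, φ (c x) = starRingEnd ℂ (φ x))
    (l : ℕ) (hl : l.Prime) (ε ε0 : (𝓞 K)ˣ)
    (π w w' : 𝓞 K) (hπ : π ^ 2 = l * ε) (hgπ : act g π = π) (hcπ : act c π = ε0 * π)
    (hgw : act g w = w') (hcw : act c w = w) (hww : (l : 𝓞 K) ∣ w * w')
    (hcop : IsCoprime π (w + w')) :
    ∃ γ : 𝓞 K, act c γ = γ ∧ ∃ η : (𝓞 K)ˣ, γ ^ 2 = l * η := by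
  have hl0 : (l : 𝓞 K) ≠ 0 := by exact_mod_cast hl.ne_zero
  have hπ0 : π ≠ 0 := by
    rintro rfl
    have : (l : 𝓞 K) * ε = 0 := by rw [← hπ]; simp
    rcases mul_eq_zero.mp this with h | h
    · exact hl0 h
    · exact ε.ne_zero h
  obtain ⟨α, hα⟩ := hcl (Ideal.span {π, w})
  have hprod : Ideal.span {π, w} * Ideal.span {π, w'} = Ideal.span {π} := by
    apply le_antisymm
    · rw [Ideal.span_mul_span', Ideal.span_le]
      rintro z ⟨a, ha, b, hb, rfl⟩
      rw [SetLike.mem_coe, Ideal.mem_span_singleton]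
      simp only [Set.mem_insert_iff, Set.mem_singleton_iff] at ha hb
      rcases ha with rfl | rfl
      · exact dvd_mul_right _ _
      · rcases hb with rfl | rfl
        · exact dvd_mul_left _ _
        · refine dvd_trans ?_ hww
          refine ⟨π * (ε⁻¹ : (𝓞 K)ˣ), ?_⟩
          have : (ε : 𝓞 K) * (ε⁻¹ : (𝓞 K)ˣ) = 1 := Units.mul_inv ε
          linear_combination -(ε⁻¹ : (𝓞 K)ˣ).val * hπ - (l : 𝓞 K) * this
    · rw [Ideal.span_singleton_le_iff_mem]
      obtain ⟨a, b, hab⟩ := hcop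
      have e : π = a * (π * π) + b * (w * π) + b * (π * w') := by linear_combination (-π) * hab
      have m1 : π ∈ Ideal.span {π, w} := Ideal.subset_span (by simp)
      have m2 : w ∈ Ideal.span {π, w} := Ideal.subset_span (by simp)
      have m3 : π ∈ Ideal.span {π, w'} := Ideal.subset_span (by simp)
      have m4 : w' ∈ Ideal.span {π, w'} := Ideal.subset_span (by simp)
      have m5 := Ideal.add_mem _ (Ideal.add_mem _ (Ideal.mul_mem_left _ a (Ideal.mul_mem_mul m1 m3))
        (Ideal.mul_mem_left _ b (Ideal.mul_mem_mul m2 m3))) (Ideal.mul_mem_left _ b (Ideal.mul_mem_mul m1 m4))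
      rwa [← e] at m5
  have hmapg : (Ideal.span {π, w}).map (act g) = Ideal.span {π, w'} := by
    rw [Ideal.map_span, Set.image_pair, hgπ, hgw]
  have hmapc : (Ideal.span {π, w}).map (act c) = Ideal.span {π, w} := by
    rw [Ideal.map_span, Set.image_pair, hcπ, hcw]
    rw [Ideal.span_insert, Ideal.span_insert, Ideal.span_singleton_mul_left_unit ε0.isUnit]
  have hcα : Ideal.span {act c α} = Ideal.span {α} := by
    have := congrArg (Ideal.map (act c)) hα
    rw [Ideal.map_pow, hmapc, hα, Ideal.map_span, Set.image_singleton] at this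
    exact this.symm
  have hgα : Ideal.span {π, w'} ^ u = Ideal.span {act g α} := by
    have := congrArg (Ideal.map (act g)) hα
    rw [Ideal.map_pow, hmapg, Ideal.map_span, Set.image_singleton] at this
    exact this
  have hαα : Ideal.span {α * act g α} = Ideal.span {π ^ u} := by
    rw [← Ideal.span_singleton_mul_span_singleton, ← hα, ← hgα, ← mul_pow, hprod,
      Ideal.span_singleton_pow]
  have hα0 : α ≠ 0 := by
    rintro rfl
    rw [zero_mul, eq_comm, Ideal.span_singleton_eq_span_singleton] at hαα
    exact pow_ne_zero u hπ0 (hαα.eq_zero_iff.mpr rfl)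
  obtain ⟨η, hη⟩ := (Ideal.span_singleton_eq_span_singleton.mp hcα).symm
  have abs_c : ∀ φ : K →+* ℂ, ∀ x, ‖φ (c x)‖ = ‖φ x‖ := by
    intro φ x
    rw [hc, RCLike.norm_conj]
  have hηtor : η ∈ Units.torsion K := by
    rw [Units.mem_torsion]
    intro v
    have h1 := abs_c v.embedding (algebraMap (𝓞 K) K α)
    rw [← act_coe, ← hη, map_mul, map_mul, norm_mul] at h1
    have h2 : ‖v.embedding (algebraMap (𝓞 K) K α)‖ ≠ 0 := by
      simpa using hα0
    have h3 : ‖v.embedding (algebraMap (𝓞 K) K η)‖ = 1 := by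
      apply mul_left_cancel₀ h2
      rw [h1, mul_one]
    rw [← h3]
    exact (InfinitePlace.norm_embedding_eq v _).symm
  obtain ⟨ζ, hζ, hζ2⟩ := torsion_trick K g η hηtor
  have hcζ : act c (ζ : 𝓞 K) * ζ = 1 := by
    obtain ⟨φ⟩ : Nonempty (K →+* ℂ) := inferInstance
    apply O_inj
    apply φ.injective
    rw [map_mul, map_mul, act_coe, hc, map_one, map_one, mul_comm, Complex.mul_conj]
    rw [Units.mem_torsion] at hζ
    have := hζ (InfinitePlace.mk φ)
    rw [InfinitePlace.apply] at this
    rw [Complex.normSq_eq_norm_sq, this]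
    simp
  have hη2 : (η : 𝓞 K) * act g η = (ζ : 𝓞 K) ^ 2 := by
    have := congrArg (fun z : (𝓞 K)ˣ => (z : 𝓞 K)) hζ2
    simpa using this
  have ac : ∀ x, act c (act g x) = act g (act c x) := fun x => O_inj (by
    rw [act_coe, act_coe, act_coe, act_coe, hcomm])
  have hfix : act c (ζ * (α * act g α)) = ζ * (α * act g α) := by
    rw [map_mul, map_mul, ac, ← hη, map_mul]
    linear_combination (α * act g α * act c (ζ : 𝓞 K)) * hη2 + (α * act g α * ζ) * hcζ
  obtain ⟨v, hv⟩ := (Ideal.span_singleton_eq_span_singleton.mp hαα).symm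
  obtain ⟨s, hs⟩ := hu
  have hγ' : (ζ : 𝓞 K) * (α * act g α) = (l : 𝓞 K) ^ s * (ζ * v * ε ^ s * π) := by
    rw [← hv, hs, pow_succ, pow_mul, hπ]; ring
  have hls : (l : 𝓞 K) ^ s ≠ 0 := pow_ne_zero _ hl0
  refine ⟨ζ * v * ε ^ s * π, ?_, (ζ * v * ε ^ s) ^ 2 * ε, ?_⟩
  · apply mul_left_cancel₀ hls
    rw [hγ'] at hfix
    rw [map_mul (act c) ((l : 𝓞 K) ^ s), map_pow, map_natCast] at hfix
    exact hfix
  · push_cast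
    linear_combination ((ζ : 𝓞 K) * v * ε ^ s) ^ 2 * hπ

end

section

theorem C3a (K : Type*) [Field K] [NumberField K] [IsGalois ℚ K]
    (u : ℕ) (hu : Odd u) (hcl : ∀ I : Ideal (𝓞 K), ∃ a, I ^ u = Ideal.span {a})
    (hG : ∀ g : K ≃ₐ[ℚ] K, ∀ t, g (g t) = t) (hcomm : ∀ g h : K ≃ₐ[ℚ] K, ∀ t, g (h t) = h (g t))
    (c : K ≃ₐ[ℚ] K) (hc : ∀ φ : K →+* ℂ, ∀ x, φ (c x) = starRingEnd ℂ (φ x))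
    (x1 x2 x3 : K) (m1 m2 m3 : ℤ) (h1 : x1 ^ 2 = (m1 : K)) (h2 : x2 ^ 2 = (m2 : K)) (h3 : x3 ^ 2 = (m3 : K))
    (hs : ∀ e1 e2 e3 : K, e1 * e1 = 1 → e2 * e2 = 1 → e3 * e3 = 1 → ∃ g : K ≃ₐ[ℚ] K,
      g x1 = e1 * x1 ∧ g x2 = e2 * x2 ∧ g x3 = e3 * x3)
    (ht : ∀ g : K ≃ₐ[ℚ] K, g x1 = x1 → g x2 = x2 → g x3 = x3 → g = 1)
    (hc1 : c x1 = -x1) (hc2 : c x2 = x2) (hc3 : c x3 = x3)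
    (l : ℕ) (hl : l.Prime) (hm2 : ¬ (l : ℤ) ∣ m2) (hm3 : ¬ (l : ℤ) ∣ m3)
    (ε ε0 : (𝓞 K)ˣ) (π : 𝓞 K) (hπ : π ^ 2 = l * ε)
    (hgπ : ∀ g : K ≃ₐ[ℚ] K, g x1 = x1 → act g π = π) (hcπ : act c π = ε0 * π)
    (t2 t3 : 𝓞 K) (r2 r3 : ℚ) (ht2 : algebraMap (𝓞 K) K t2 = r2 + x2 / 2)
    (ht3 : algebraMap (𝓞 K) K t3 = r3 + x3 / 2)
    (x : K) (hx : x = x2 ∨ x = x3 ∨ x = x2 * x3) (w w' : 𝓞 K) (a r : ℚ)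
    (hw : algebraMap (𝓞 K) K w = (a + x) * r) (hw' : algebraMap (𝓞 K) K w' = (a - x) * r)
    (hww : (l : 𝓞 K) ∣ w * w') (hcop : IsCoprime π (w + w')) : False := by
  have hneg : (-1 : K) * (-1) = 1 := by norm_num
  have hone : (1 : K) * 1 = 1 := by norm_num
  obtain ⟨g2, g21, g22, g23⟩ := hs 1 (-1) 1 hone hneg hone
  obtain ⟨g3, g31, g32, g33⟩ := hs 1 1 (-1) hone hone hneg
  simp only [one_mul, neg_mul] at g21 g22 g23 g31 g32 g33
  have hgen : ∀ t : K, c t = t → g2 t = t → g3 t = t → ∀ g : K ≃ₐ[ℚ] K, g t = t := by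
    intro t hct hg2t hg3t
    have s1 : ∀ g : K ≃ₐ[ℚ] K, g x1 = x1 → g x2 = x2 → g t = t := by
      intro g p q
      rcases sign_act K h3 g with e | e
      · rw [ht g p q e]; rfl
      · have := ht (g * g3) (by rw [AlgEquiv.mul_apply, g31, p]) (by rw [AlgEquiv.mul_apply, g32, q])
          (by rw [AlgEquiv.mul_apply, g33, map_neg, e, neg_neg])
        have h := congrArg (fun f : K ≃ₐ[ℚ] K => f t) this
        simp only [AlgEquiv.mul_apply, hg3t] at h
        exact h
    have s2 : ∀ g : K ≃ₐ[ℚ] K, g x1 = x1 → g t = t := by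
      intro g p
      rcases sign_act K h2 g with e | e
      · exact s1 g p e
      · have := s1 (g * g2) (by rw [AlgEquiv.mul_apply, g21, p])
          (by rw [AlgEquiv.mul_apply, g22, map_neg, e, neg_neg])
        simpa only [AlgEquiv.mul_apply, hg2t] using this
    intro g
    rcases sign_act K h1 g with e | e
    · exact s2 g e
    · have := s2 (g * c) (by rw [AlgEquiv.mul_apply, hc1, map_neg, e, neg_neg])
      simpa only [AlgEquiv.mul_apply, hct] using this
  obtain ⟨D2, hD2⟩ := toO (isInt_sqrt h2)
  obtain ⟨D3, hD3⟩ := toO (isInt_sqrt h3)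
  have hcx : c x = x := by
    rcases hx with rfl | rfl | rfl
    · exact hc2
    · exact hc3
    · rw [map_mul, hc2, hc3]
  obtain ⟨g, hg1, hgx⟩ : ∃ g : K ≃ₐ[ℚ] K, g x1 = x1 ∧ g x = -x := by
    rcases hx with rfl | rfl | rfl
    · exact ⟨g2, g21, g22⟩
    · exact ⟨g3, g31, g33⟩
    · exact ⟨g2, g21, by rw [map_mul, g22, g23]; ring⟩
  obtain ⟨γ, hγ, η, hη⟩ := C2 K u hu hcl hcomm c g hc l hl ε ε0 π w w' hπ (hgπ g hg1) hcπ
    (O_inj (by rw [act_coe, hw, hw', map_mul, map_add, hgx, map_ratCast, map_ratCast]; ring))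
    (O_inj (by rw [act_coe, hw, map_mul, map_add, hcx, map_ratCast, map_ratCast])) hww hcop
  refine C1 K hG hcomm c g2 g3 hgen l hl m2 m3 hm2 hm3 t2 t3 D2 D3 ?_ ?_ ?_ ?_ ?_ ?_ ?_ γ hγ η hη
  · apply O_inj
    rw [map_sub, act_coe, ht2, hD2, map_add, map_div₀, map_ratCast, map_ofNat, g22]; ring
  · apply O_inj
    rw [map_sub, act_coe, ht3, hD3, map_add, map_div₀, map_ratCast, map_ofNat, g33]; ring
  · apply O_inj; rw [map_pow, hD2, h2, map_intCast]
  · apply O_inj; rw [map_pow, hD3, h3, map_intCast]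
  · apply O_inj; rw [act_coe, ht2, map_add, map_div₀, map_ratCast, map_ofNat, hc2]
  · apply O_inj; rw [act_coe, ht3, map_add, map_div₀, map_ratCast, map_ofNat, hc3]
  · apply O_inj; rw [act_coe, ht3, map_add, map_div₀, map_ratCast, map_ofNat, g23]

theorem pstar_val (p : ℕ) (hpo : Odd p) :
    (p % 4 = 1 ∧ ((-1) ^ ((p - 1) / 2) * (p : ℤ)) = p) ∨ (p % 4 = 3 ∧ ((-1) ^ ((p - 1) / 2) * (p : ℤ)) = -p) := by
  obtain ⟨k, hk⟩ := hpo
  have : (p - 1) / 2 = k := by omega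
  rw [this]
  rcases Nat.even_or_odd k with h | h
  · left; rw [h.neg_one_pow]; obtain ⟨j, hj⟩ := h; exact ⟨by omega, by ring⟩
  · right; rw [h.neg_one_pow]; obtain ⟨j, hj⟩ := h; exact ⟨by omega, by ring⟩

theorem Pstar.pos_cases {m : ℤ} (h : Pstar m) (hm : 0 < m) :
    m = 8 ∨ ∃ p : ℕ, p.Prime ∧ p % 4 = 1 ∧ m = p := by
  rcases h with h | h | h | ⟨p, hp, hpo, h⟩
  · exact Or.inl h
  · omega
  · omega
  · rcases pstar_val p hpo with ⟨a, b⟩ | ⟨a, b⟩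
    · exact Or.inr ⟨p, hp, a, by rw [h, b]⟩
    · rw [b] at h; omega

theorem Pstar.neg_cases {m : ℤ} (h : Pstar m) (hm : m < 0) :
    m = -4 ∨ m = -8 ∨ ∃ p : ℕ, p.Prime ∧ p % 4 = 3 ∧ m = -p := by
  rcases h with h | h | h | ⟨p, hp, hpo, h⟩
  · omega
  · exact Or.inl h
  · exact Or.inr (Or.inl h)
  · rcases pstar_val p hpo with ⟨a, b⟩ | ⟨a, b⟩
    · rw [b] at h; omega
    · exact Or.inr (Or.inr ⟨p, hp, a, by rw [h, b]⟩)

theorem conj_pos {K : Type*} [Field K] [NumberField K] (c : K ≃ₐ[ℚ] K)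
    (hc : ∀ φ : K →+* ℂ, ∀ x, φ (c x) = starRingEnd ℂ (φ x)) {x : K} {m : ℤ}
    (h : x ^ 2 = (m : K)) (hm : 0 < m) : c x = x := by
  obtain ⟨φ⟩ : Nonempty (K →+* ℂ) := inferInstance
  rcases sign_act K h c with e | e
  · exact e
  · exfalso
    have h1 := hc φ x
    rw [e, map_neg] at h1
    have h2 : (φ x) ^ 2 = (m : ℂ) := by rw [← map_pow, h, map_intCast]
    have h3 : (φ x) * starRingEnd ℂ (φ x) = -(m : ℂ) := by rw [← h1, ← h2]; ring
    rw [Complex.mul_conj] at h3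
    have h4 : Complex.normSq (φ x) = -(m : ℝ) := by exact_mod_cast h3
    have h5 := Complex.normSq_nonneg (φ x)
    have h6 : (0 : ℝ) < m := by exact_mod_cast hm
    linarith

theorem conj_neg {K : Type*} [Field K] [NumberField K] (c : K ≃ₐ[ℚ] K)
    (hc : ∀ φ : K →+* ℂ, ∀ x, φ (c x) = starRingEnd ℂ (φ x)) {x : K} {m : ℤ}
    (h : x ^ 2 = (m : K)) (hm : m < 0) : c x = -x := by
  obtain ⟨φ⟩ : Nonempty (K →+* ℂ) := inferInstance
  rcases sign_act K h c with e | e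
  · exfalso
    have h1 := hc φ x
    rw [e] at h1
    have h2 : (φ x) ^ 2 = (m : ℂ) := by rw [← map_pow, h, map_intCast]
    have h3 : (φ x) * starRingEnd ℂ (φ x) = (m : ℂ) := by rw [← h1, ← h2]; ring
    rw [Complex.mul_conj] at h3
    have h4 : Complex.normSq (φ x) = (m : ℝ) := by exact_mod_cast h3
    have h5 := Complex.normSq_nonneg (φ x)
    have h6 : (m : ℝ) < 0 := by exact_mod_cast hm
    linarith
  · exact e

end

section

theorem half_int {K : Type*} [Field K] [CharZero K] {x : K} {m k : ℤ} (h : x ^ 2 = (m : K)) (hk : m = 4 * k + 1) :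
    IsIntegral ℤ ((1 + x) / 2) := by
  refine isInt_quad _ 1 k isIntegral_one (isIntegral_intCast k) ?_
  have : (m : K) = 4 * k + 1 := by rw [hk]; push_cast; ring
  linear_combination (1/4) * h + (1/4) * this

theorem half_ex {K : Type*} [Field K] [CharZero K] {x : K} {m : ℤ} (h : x ^ 2 = (m : K)) (hP : Pstar m) (hm : 0 < m) :
    ∃ (t : 𝓞 K) (r : ℚ), algebraMap (𝓞 K) K t = r + x / 2 := by
  rcases hP.pos_cases hm with h8 | ⟨p, hp, hp4, hmp⟩
  · obtain ⟨t, ht⟩ := toO (x := x / 2) (isInt_sqrt (d := 2) (by rw [div_pow, h, h8]; norm_num))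
    exact ⟨t, 0, by rw [ht]; simp⟩
  · obtain ⟨t, ht⟩ := toO (half_int (k := p / 4) h (by omega))
    exact ⟨t, 1 / 2, by rw [ht]; push_cast; ring⟩

theorem C3 (K : Type*) [Field K] [NumberField K] [IsGalois ℚ K]
    (u : ℕ) (hu : Odd u) (hcl : ∀ I : Ideal (𝓞 K), ∃ a, I ^ u = Ideal.span {a})
    (hG : ∀ g : K ≃ₐ[ℚ] K, ∀ t, g (g t) = t) (hcomm : ∀ g h : K ≃ₐ[ℚ] K, ∀ t, g (h t) = h (g t))
    (c : K ≃ₐ[ℚ] K) (hc : ∀ φ : K →+* ℂ, ∀ x, φ (c x) = starRingEnd ℂ (φ x))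
    (m1 m2 m3 : ℤ) (hT : Tri K m1 m2 m3) (P1 : Pstar m1) (P2 : Pstar m2) (P3 : Pstar m3)
    (n1 : m1 < 0) (n2 : 0 < m2) (n3 : 0 < m3)
    (hne2 : ¬ ((m1 = -4 ∨ m1 = -8) ∧ m2 = 8)) (hne3 : ¬ ((m1 = -4 ∨ m1 = -8) ∧ m3 = 8)) : False := by
  obtain ⟨x1, x2, x3, h1, h2, h3, hs, ht⟩ := hT
  have hc1 := conj_neg c hc h1 n1
  have hc2 := conj_pos c hc h2 n2
  have hc3 := conj_pos c hc h3 n3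
  obtain ⟨t2, r2, ht2⟩ := half_ex h2 P2 n2
  obtain ⟨t3, r3, ht3⟩ := half_ex h3 P3 n3
  have h23 : (x2 * x3) ^ 2 = ((m2 * m3 : ℤ) : K) := by rw [mul_pow, h2, h3]; push_cast; rfl
  by_cases hm1 : m1 = -4 ∨ m1 = -8
  · -- the even case
    have d2 : ∃ p : ℕ, p.Prime ∧ p % 4 = 1 ∧ m2 = p := by
      rcases P2.pos_cases n2 with h | h
      · exact absurd ⟨hm1, h⟩ hne2
      · exact h
    have d3 : ∃ p : ℕ, p.Prime ∧ p % 4 = 1 ∧ m3 = p := by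
      rcases P3.pos_cases n3 with h | h
      · exact absurd ⟨hm1, h⟩ hne3
      · exact h
    obtain ⟨p2, -, hp2, e2⟩ := d2
    obtain ⟨p3, -, hp3, e3⟩ := d3
    obtain ⟨x, m, hx, hxm, hm⟩ : ∃ (x : K) (m : ℤ), (x = x2 ∨ x = x3 ∨ x = x2 * x3) ∧ x ^ 2 = (m : K) ∧ m % 8 = 1 := by
      by_cases k2 : m2 % 8 = 1
      · exact ⟨x2, m2, by simp, h2, k2⟩
      by_cases k3 : m3 % 8 = 1
      · exact ⟨x3, m3, by simp, h3, k3⟩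
      refine ⟨x2 * x3, m2 * m3, by simp, h23, ?_⟩
      have k2' : m2 % 8 = 5 := by omega
      have k3' : m3 % 8 = 5 := by omega
      rw [Int.mul_emod, k2', k3']; rfl
    obtain ⟨k, hk⟩ : ∃ k, m = 8 * k + 1 := ⟨m / 8, by omega⟩
    obtain ⟨w, hw⟩ := toO (half_int (k := 2 * k) hxm (by omega))
    obtain ⟨w', hw'⟩ := toO (half_int (x := -x) (k := 2 * k) (by rw [neg_sq]; exact hxm) (by omega))
    have hmK : (m : K) = 8 * k + 1 := by rw [hk]; push_cast; ring
    have hww : ((2 : ℕ) : 𝓞 K) ∣ w * w' := ⟨-k, O_inj (by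
      rw [map_mul, hw, hw', map_mul, map_natCast, map_neg, map_intCast]
      push_cast
      linear_combination (-1/4) * hxm - (1/4) * hmK)⟩
    have hsum : w + w' = 1 := O_inj (by rw [map_add, hw, hw', map_one]; ring)
    have key : ∀ (ε ε0 : (𝓞 K)ˣ) (π : 𝓞 K) (hπ : π ^ 2 = (2 : ℕ) * ε)
      (hgπ : ∀ g : K ≃ₐ[ℚ] K, g x1 = x1 → act g π = π) (hcπ : act c π = ε0 * π), False := by
      intro ε ε0 π hπ hgπ hcπ
      refine C3a K u hu hcl hG hcomm c hc x1 x2 x3 m1 m2 m3 h1 h2 h3 hs ht hc1 hc2 hc3 2 Nat.prime_two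
        ?_ ?_ ε ε0 π hπ hgπ hcπ t2 t3 r2 r3 ht2 ht3 x hx w w' 1 (1 / 2) ?_ ?_ hww ?_
      · push_cast; omega
      · push_cast; omega
      · rw [hw]; push_cast; ring
      · rw [hw']; push_cast; ring
      · rw [hsum]; exact isCoprime_one_right
    rcases hm1 with hm1 | hm1
    · have hi : (x1 / 2) ^ 2 = ((-1 : ℤ) : K) := by rw [div_pow, h1, hm1]; norm_num
      obtain ⟨I, hI⟩ := toO (isInt_sqrt hi)
      have hII : I * I = -1 := O_inj (by rw [map_mul, hI, map_neg, map_one, ← pow_two, hi]; simp)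
      have hcI : act c I = -I := O_inj (by
        rw [act_coe, hI, map_div₀, hc1, map_ofNat, map_neg, hI]; ring)
      let ε : (𝓞 K)ˣ := ⟨I, -I, by linear_combination -hII, by linear_combination -hII⟩
      refine key ε (-ε) (1 + I) ?_ ?_ ?_
      · change _ = _ * I
        push_cast
        linear_combination hII
      · intro g hg
        apply O_inj
        rw [act_coe, map_add, map_one, hI, map_add, map_one, map_div₀, hg, map_ofNat]
      · rw [map_add, map_one, hcI]
        change _ = -I * _
        linear_combination hII
    · have hi : (x1 / 2) ^ 2 = ((-2 : ℤ) : K) := by rw [div_pow, h1, hm1]; norm_num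
      obtain ⟨I, hI⟩ := toO (isInt_sqrt hi)
      refine key (-1) (-1) I ?_ ?_ ?_
      · apply O_inj
        rw [map_pow, hI, hi]
        simp
        exact (map_ofNat (algebraMap (𝓞 K) K) 2).symm
      · intro g hg
        apply O_inj
        rw [act_coe, hI, map_div₀, hg, map_ofNat]
      · apply O_inj
        rw [act_coe, hI, map_div₀, hc1, map_ofNat]
        simp [hI]
        ring
  · obtain ⟨q, hq, hq4, hmq⟩ : ∃ p : ℕ, p.Prime ∧ p % 4 = 3 ∧ m1 = -p := by
      rcases P1.neg_cases n1 with h | h | h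
      · exact absurd (Or.inl h) hm1
      · exact absurd (Or.inr h) hm1
      · exact h
    have hqp : Prime (q : ℤ) := Nat.prime_iff_prime_int.mp hq
    have hq2 : ¬ (q : ℤ) ∣ 2 := by
      intro h
      have h' : q ∣ 2 := by exact_mod_cast h
      have := (Nat.prime_dvd_prime_iff_eq hq Nat.prime_two).mp h'
      omega
    have hnd : ∀ m, Pstar m → 0 < m → ¬ (q : ℤ) ∣ m := by
      intro m hP hm hd
      rcases hP.pos_cases hm with h | ⟨p, hp, hp4, h⟩
      · rw [h, show (8 : ℤ) = 2 ^ 3 by norm_num] at hd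
        exact hq2 (hqp.dvd_of_dvd_pow hd)
      · rw [h] at hd
        have h' : q ∣ p := by exact_mod_cast hd
        have := (Nat.prime_dvd_prime_iff_eq hq hp).mp h'
        omega
    have hd2 := hnd m2 P2 n2
    have hd3 := hnd m3 P3 n3
    haveI : Fact q.Prime := ⟨hq⟩
    obtain ⟨x, m, hx, hxm, hmd, c0, hc0⟩ : ∃ (x : K) (m : ℤ), (x = x2 ∨ x = x3 ∨ x = x2 * x3) ∧ x ^ 2 = (m : K) ∧
        ¬ (q : ℤ) ∣ m ∧ ∃ c0 : ℤ, (q : ℤ) ∣ c0 ^ 2 - m := by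
      have lift : ∀ m : ℤ, IsSquare (m : ZMod q) → ∃ c0 : ℤ, (q : ℤ) ∣ c0 ^ 2 - m := by
        rintro m ⟨r, hr⟩
        obtain ⟨c0, rfl⟩ := ZMod.intCast_surjective r
        refine ⟨c0, ?_⟩
        rw [← ZMod.intCast_zmod_eq_zero_iff_dvd]
        push_cast
        rw [hr]; ring
      have hz : ∀ m : ℤ, ¬ (q : ℤ) ∣ m → (m : ZMod q) ≠ 0 := by
        intro m hm h0
        exact hm ((ZMod.intCast_zmod_eq_zero_iff_dvd m q).mp h0)
      by_cases k2 : IsSquare (m2 : ZMod q)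
      · exact ⟨x2, m2, by simp, h2, hd2, lift _ k2⟩
      by_cases k3 : IsSquare (m3 : ZMod q)
      · exact ⟨x3, m3, by simp, h3, hd3, lift _ k3⟩
      refine ⟨x2 * x3, m2 * m3, by simp, h23, fun h => (hqp.dvd_or_dvd h).elim hd2 hd3, lift _ ?_⟩
      have hd23 : ¬ (q : ℤ) ∣ m2 * m3 := fun h => (hqp.dvd_or_dvd h).elim hd2 hd3
      rw [← quadraticChar_one_iff_isSquare (hz _ hd23)]
      push_cast
      rw [map_mul, quadraticChar_neg_one_iff_not_isSquare.mpr k2, quadraticChar_neg_one_iff_not_isSquare.mpr k3]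
      norm_num
    obtain ⟨k, hk⟩ := hc0
    have hkK : (c0 : K) ^ 2 - m = q * k := by exact_mod_cast congrArg (fun t : ℤ => (t : K)) hk
    obtain ⟨π, hπ⟩ := toO (isInt_sqrt h1)
    obtain ⟨X, hX⟩ := toO (isInt_sqrt hxm)
    have hπ2 : π ^ 2 = q * ((-1 : (𝓞 K)ˣ) : 𝓞 K) := O_inj (by
      rw [map_pow, hπ, h1, hmq]; simp)
    refine C3a K u hu hcl hG hcomm c hc x1 x2 x3 m1 m2 m3 h1 h2 h3 hs ht hc1 hc2 hc3 q hq
        hd2 hd3 (-1) (-1) π hπ2 ?_ ?_ t2 t3 r2 r3 ht2 ht3 x hx (c0 + X) (c0 - X) c0 1 ?_ ?_ ?_ ?_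
    · intro g hg
      apply O_inj; rw [act_coe, hπ, hg]
    · apply O_inj; rw [act_coe, hπ, hc1]; simp [hπ]
    · rw [map_add, map_intCast, hX]; push_cast; ring
    · rw [map_sub, map_intCast, hX]; push_cast; ring
    · refine ⟨k, O_inj ?_⟩
      rw [map_mul, map_add, map_sub, map_intCast, hX, map_mul, map_natCast, map_intCast]
      linear_combination hkK - hxm
    · have hi : IsCoprime ((q : ℤ)) (2 * c0) := by
        rw [hqp.coprime_iff_not_dvd]
        intro h
        rcases hqp.dvd_or_dvd h with h | h
        · exact hq2 h
        · apply hmd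
          have : m = c0 * c0 - q * k := by linear_combination -hk
          rw [this]
          exact dvd_sub (h.mul_right _) (dvd_mul_right _ _)
      have h' := hi.map (Int.castRingHom (𝓞 K))
      simp only [eq_intCast] at h'
      have e : ((q : ℤ) : 𝓞 K) = π * (-π) := by
        push_cast at hπ2 ⊢
        linear_combination hπ2
      rw [e] at h'
      have := h'.of_mul_left_left
      push_cast at this
      convert this using 1
      ring

end

section

theorem ideal_sq_inj {R : Type*} [CommRing R] [IsDedekindDomain R] {I J : Ideal R}
    (h : I ^ 2 = J ^ 2) : I = J := by
  exact dvd_antisymm ((UniqueFactorizationMonoid.pow_dvd_pow_iff_dvd two_ne_zero).mp h.dvd)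
    ((UniqueFactorizationMonoid.pow_dvd_pow_iff_dvd two_ne_zero).mp h.symm.dvd)

/-- Genus theory: classes of order two are represented by ramified ideals. -/
theorem genus {R : Type*} [CommRing R] [IsDedekindDomain R] [CharZero R]
    (τ : R ≃+* R) (hτ : ∀ x, τ (τ x) = x) (hfix : ∀ x, τ x = x → ∃ n : ℤ, (n : R) = x)
    (hdvd : ∀ a b : ℤ, (a : R) ∣ b → a ∣ b)
    (hnorm : ∀ (I : Ideal R) (β : R) (B : ℤ), I ^ 2 = Ideal.span {β} → β * τ β = B → ∃ b : ℤ, B = b ^ 2)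
    (s : R) (hs : τ s = -s) (hs0 : s ≠ 0)
    (θ D : R) (Δ : ℤ) (hD : θ - τ θ = D) (hDD : D ^ 2 = Δ) (hΔ : Δ ≠ 0)
    (𝔟 : Ideal R) (β : R) (hβ0 : β ≠ 0) (hβ : 𝔟 ^ 2 = Ideal.span {β}) :
    ∃ (𝔯 : Ideal R) (n : ℤ) (γ : R), 𝔯 ^ 2 = Ideal.span {(n : R)} ∧ n ∣ Δ ∧ 𝔯 * 𝔟 = Ideal.span {γ} := by
  obtain ⟨B, hB⟩ := hfix (β * τ β) (by rw [map_mul, hτ, mul_comm])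
  obtain ⟨b, hb⟩ := hnorm 𝔟 β B hβ hB.symm
  have hbR : β * τ β = (b : R) ^ 2 := by rw [← hB, hb]; push_cast; rfl
  have hτβ0 : τ β ≠ 0 := by simpa using hβ0
  have hb0 : (b : R) ≠ 0 := by
    intro h
    rw [h] at hbR
    simp [hβ0] at hbR
  have hτint : ∀ n : ℤ, τ (n : R) = n := fun n => map_intCast τ n
  set 𝔟' := 𝔟.map (τ : R →+* R) with h𝔟'
  have h𝔟'2 : 𝔟' ^ 2 = Ideal.span {τ β} := by
    rw [h𝔟', ← Ideal.map_pow, hβ, Ideal.map_span, Set.image_singleton]; rfl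
  have hbb : 𝔟 * 𝔟' = Ideal.span {(b : R)} := by
    apply ideal_sq_inj
    rw [mul_pow, hβ, h𝔟'2, Ideal.span_singleton_mul_span_singleton, hbR, Ideal.span_singleton_pow]
  obtain ⟨α, hα0, hα⟩ : ∃ α : R, α ≠ 0 ∧ α * b = β * τ α := by
    by_cases h : β + b = 0
    · refine ⟨s, hs0, ?_⟩
      rw [hs]; linear_combination s * h
    · refine ⟨β + b, h, ?_⟩
      rw [map_add, hτint]
      linear_combination -hbR
  have hα' : τ α * b = τ β * α := by
    have := congrArg τ hα
    rwa [map_mul, map_mul, hτ, hτint] at this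
  have hτα0 : τ α ≠ 0 := by simpa using hα0
  have hspb0 : Ideal.span {(b : R)} ≠ 0 := by simpa using hb0
  have h𝔟0 : 𝔟 ≠ 0 := by
    intro h; rw [h, zero_mul] at hbb; exact hspb0 hbb.symm
  set 𝔠 := Ideal.span {α} * 𝔟' with h𝔠
  have h𝔠𝔟 : 𝔠 * 𝔟 = Ideal.span {α * b} := by
    rw [h𝔠, mul_assoc, mul_comm 𝔟', hbb, Ideal.span_singleton_mul_span_singleton]
  obtain ⟨A, hA⟩ := hfix (α * τ α) (by rw [map_mul, hτ, mul_comm])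
  have h𝔠2 : 𝔠 ^ 2 = Ideal.span {((A * b : ℤ) : R)} := by
    rw [h𝔠, mul_pow, h𝔟'2, Ideal.span_singleton_pow, Ideal.span_singleton_mul_span_singleton]
    congr 2
    push_cast
    rw [hA]
    linear_combination -α * hα'
  have hm0 : ((A * b : ℤ) : R) ≠ 0 := by
    push_cast
    rw [hA]
    exact mul_ne_zero (mul_ne_zero hα0 hτα0) hb0
  -- stability
  have h𝔠s : 𝔠 = Ideal.span {τ α} * 𝔟 := by
    apply mul_right_cancel₀ h𝔟0
    rw [h𝔠𝔟, mul_assoc, ← sq, hβ, Ideal.span_singleton_mul_span_singleton, hα, mul_comm]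
  have hstab : ∀ x ∈ 𝔠, τ x ∈ 𝔠 := by
    intro x hx
    have : (τ : R →+* R) x ∈ 𝔠.map (τ : R →+* R) := Ideal.mem_map_of_mem _ hx
    rw [h𝔠s, Ideal.map_mul, Ideal.map_span, Set.image_singleton] at this
    rw [h𝔠]
    have e : (τ : R →+* R) (τ α) = α := hτ α
    rw [e] at this
    exact this
  -- c0
  obtain ⟨c0, hc0⟩ : ∃ c0 : ℤ, ∀ n : ℤ, (n : R) ∈ 𝔠 ↔ c0 ∣ n := by
    have := (inferInstance : (𝔠.comap (Int.castRingHom R)).IsPrincipal)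
    obtain ⟨c0, h⟩ := this
    refine ⟨c0, fun n => ?_⟩
    rw [← Ideal.mem_span_singleton]
    change n ∈ 𝔠.comap (Int.castRingHom R) ↔ _
    rw [h]
  have hmem : ((A * b : ℤ) : R) ∈ 𝔠 := by
    have : ((A * b : ℤ) : R) ∈ 𝔠 ^ 2 := by rw [h𝔠2]; exact Ideal.mem_span_singleton_self _
    rw [sq] at this
    exact Ideal.mul_le_left this
  have hc00 : (c0 : R) ≠ 0 := by
    intro h
    have h' : c0 = 0 := by exact_mod_cast h
    have := (hc0 _).mp hmem
    rw [h', zero_dvd_iff] at this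
    exact hm0 (by rw [this]; simp)
  have hD0 : D ≠ 0 := by
    rintro rfl
    apply hΔ
    have : (Δ : R) = 0 := by rw [← hDD]; simp
    exact_mod_cast this
  have hle : Ideal.span {(c0 : R)} ∣ Ideal.span {D} * 𝔠 := by
    rw [Ideal.dvd_iff_le, Ideal.span_singleton_mul_le_iff]
    intro x hx
    have tr : ∀ y ∈ 𝔠, (c0 : R) ∣ y + τ y := by
      intro y hy
      obtain ⟨n, hn⟩ := hfix (y + τ y) (by rw [map_add, hτ, add_comm])
      have : (n : R) ∈ 𝔠 := by rw [hn]; exact 𝔠.add_mem hy (hstab y hy)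
      obtain ⟨k, hk⟩ := (hc0 n).mp this
      exact ⟨k, by rw [← hn, hk]; push_cast; rfl⟩
    rw [Ideal.mem_span_singleton]
    have h1 := tr (τ x) (hstab x hx)
    have h2 := tr (θ * τ x) (𝔠.mul_mem_left _ (hstab x hx))
    rw [hτ] at h1
    rw [map_mul, hτ] at h2
    have := dvd_sub h2 (h1.mul_left (τ θ))
    have h3 := dvd_sub (h1.mul_left θ) h2
    rw [← hD]
    convert h3 using 1
    ring
  obtain ⟨𝔯, h𝔯⟩ := hle
  have hspc0 : Ideal.span {(c0 : R)} ≠ 0 := by simpa using hc00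
  have hc0c : (c0 : R) ∈ 𝔠 := (hc0 c0).mpr dvd_rfl
  obtain ⟨𝔡, h𝔡⟩ : 𝔠 ∣ Ideal.span {(c0 : R)} := by
    rw [Ideal.dvd_iff_le, Ideal.span_singleton_le_iff_mem]; exact hc0c
  have h𝔠0 : 𝔠 ≠ 0 := by
    intro h; rw [h, zero_mul] at h𝔡; exact hspc0 h𝔡
  have hrD : 𝔯 ∣ Ideal.span {D} := by
    refine ⟨𝔡, mul_left_cancel₀ h𝔠0 ?_⟩
    rw [mul_comm 𝔠, h𝔯, h𝔡]; ring
  have hr2 : Ideal.span {((c0 ^ 2 : ℤ) : R)} * 𝔯 ^ 2 = Ideal.span {((Δ * (A * b) : ℤ) : R)} := by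
    have := congrArg (· ^ 2) h𝔯
    simp only [mul_pow, Ideal.span_singleton_pow, h𝔠2, hDD, Ideal.span_singleton_mul_span_singleton] at this
    push_cast at this ⊢
    exact this.symm
  have hd2 : c0 ^ 2 ∣ Δ * (A * b) := by
    apply hdvd
    rw [← Ideal.span_singleton_le_span_singleton, ← Ideal.dvd_iff_le]
    exact ⟨_, hr2.symm⟩
  obtain ⟨n, hn⟩ := hd2
  have hc02 : Ideal.span {((c0 ^ 2 : ℤ) : R)} ≠ 0 := by
    have : c0 ≠ 0 := by exact_mod_cast hc00
    simp [this]
  have hr3 : 𝔯 ^ 2 = Ideal.span {(n : R)} := by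
    apply mul_left_cancel₀ hc02
    rw [hr2, hn, Ideal.span_singleton_mul_span_singleton]
    push_cast; rfl
  have hcD : (c0 : R) ∣ D * (α * b) := by
    rw [← Ideal.span_singleton_le_span_singleton, ← Ideal.dvd_iff_le]
    refine ⟨𝔯 * 𝔟, ?_⟩
    rw [← mul_assoc (Ideal.span {(c0 : R)}), ← h𝔯, mul_assoc (Ideal.span {D}), h𝔠𝔟,
      Ideal.span_singleton_mul_span_singleton]
  obtain ⟨γ, hγ⟩ := hcD
  refine ⟨𝔯, n, γ, hr3, ?_, ?_⟩
  · apply hdvd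
    rw [← Ideal.span_singleton_le_span_singleton, ← Ideal.dvd_iff_le, ← hr3, ← hDD,
      ← Ideal.span_singleton_pow]
    exact pow_dvd_pow_of_dvd hrD 2
  · apply mul_left_cancel₀ hspc0
    rw [← mul_assoc, ← h𝔯, mul_assoc, h𝔠𝔟, Ideal.span_singleton_mul_span_singleton, hγ,
      Ideal.span_singleton_mul_span_singleton]

end

section

theorem cl_pow {R : Type*} [CommRing R] [IsDedekindDomain R] (c : ClassGroup R) :
    ∃ I : Ideal R, I ≠ 0 ∧ ∀ n, c ^ n = 1 ↔ ∃ a, I ^ n = Ideal.span {a} := by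
  obtain ⟨I, rfl⟩ := ClassGroup.mk0_surjective c
  refine ⟨I, nonZeroDivisors.ne_zero I.2, fun n => ?_⟩
  rw [← map_pow, ← Subtype.coe_eta (I ^ n) (I ^ n).2, ClassGroup.mk0_eq_one_iff, Submodule.isPrincipal_iff]
  simp only [SubmonoidClass.coe_pow]

/-- Data of an imaginary quadratic field `ℚ(√-M)`. -/
structure QuadData (k : Type*) [Field k] [NumberField k] (M : ℤ) where
  /-- conjugation -/
  σ : k ≃ₐ[ℚ] k
  /-- square root -/
  s : k
  hM : 0 < M
  hs : s ^ 2 = -(M : k)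
  hσ : σ s = -s
  hrep : ∀ x : k, ∃ a b : ℚ, x = a + b * s

namespace QuadData
variable {k : Type*} [Field k] [NumberField k] {M : ℤ}

theorem norm_form (Q : QuadData k M) (a b : ℚ) : ((a : k) + b * Q.s) * Q.σ ((a : k) + b * Q.s) = ((a ^ 2 + M * b ^ 2 : ℚ) : k) := by
  rw [map_add, map_mul, map_ratCast, map_ratCast, Q.hσ]
  push_cast
  linear_combination -(b : k) ^ 2 * Q.hs

theorem s_ne (Q : QuadData k M) : Q.s ≠ 0 := by
  intro h
  have := Q.hs
  rw [h] at this
  have hM := Q.hM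
  have h2 : (M : k) = 0 := by linear_combination this
  have : M = 0 := by exact_mod_cast h2
  omega

theorem σσ (Q : QuadData k M) (x : k) : Q.σ (Q.σ x) = x := by
  obtain ⟨a, b, rfl⟩ := Q.hrep x
  simp only [map_add, map_mul, map_ratCast, Q.hσ, map_neg, neg_neg]

theorem fixed (Q : QuadData k M) (x : k) (h : Q.σ x = x) : ∃ a : ℚ, x = a := by
  obtain ⟨a, b, rfl⟩ := Q.hrep x
  refine ⟨a, ?_⟩
  rw [map_add, map_mul, map_ratCast, map_ratCast, Q.hσ] at h
  have : (2 : k) * (b * Q.s) = 0 := by linear_combination -h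
  have := (mul_eq_zero.mp this).resolve_left two_ne_zero
  rw [this, add_zero]

theorem indep (Q : QuadData k M) (a b : ℚ) (h : (a : k) + b * Q.s = 0) : a = 0 ∧ b = 0 := by
  have h1 := Q.norm_form a b
  rw [h, zero_mul] at h1
  have h2 : a ^ 2 + M * b ^ 2 = 0 := by exact_mod_cast h1.symm
  have hM : (0 : ℚ) < M := by exact_mod_cast Q.hM
  have ha : a ^ 2 = 0 := by nlinarith [sq_nonneg a, mul_nonneg hM.le (sq_nonneg b)]
  have ha' : a = 0 := by simpa using ha
  have hb : (M : ℚ) * b ^ 2 = 0 := by linarith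
  have : b ^ 2 = 0 := (mul_eq_zero.mp hb).resolve_left hM.ne'
  exact ⟨ha', by simpa using this⟩

theorem finrank_two (Q : QuadData k M) : Module.finrank ℚ k = 2 := by
  have li : LinearIndependent ℚ ![(1 : k), Q.s] := by
    rw [LinearIndependent.pair_iff]
    intro a b h
    apply Q.indep
    rw [Rat.smul_def, Rat.smul_def, mul_one] at h
    exact h
  have sp : ⊤ ≤ Submodule.span ℚ (Set.range ![(1 : k), Q.s]) := by
    intro x _
    obtain ⟨a, b, rfl⟩ := Q.hrep x
    simp only [Matrix.range_cons, Matrix.range_empty, Set.union_empty, Set.singleton_union]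
    rw [Submodule.mem_span_pair]
    exact ⟨a, b, by rw [Rat.smul_def, Rat.smul_def, mul_one]⟩
  rw [Module.finrank_eq_card_basis (Module.Basis.mk li sp), Fintype.card_fin]

theorem ττ (Q : QuadData k M) (x : 𝓞 k) : act Q.σ (act Q.σ x) = x := O_inj (by rw [act_coe, act_coe, Q.σσ])

theorem fixedO (Q : QuadData k M) (x : 𝓞 k) (h : act Q.σ x = x) : ∃ n : ℤ, (n : 𝓞 k) = x := by
  obtain ⟨q, hq⟩ := Q.fixed (algebraMap (𝓞 k) k x) (by rw [← act_coe, h])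
  have h2 : IsIntegral ℤ q := by
    rw [← isIntegral_algebraMap_iff (algebraMap ℚ k).injective]
    change IsIntegral ℤ ((algebraMap ℚ k) q)
    rw [eq_ratCast, ← hq]
    exact RingOfIntegers.isIntegral_coe x
  obtain ⟨n, hn⟩ := IsIntegrallyClosed.isIntegral_iff.mp h2
  refine ⟨n, O_inj ?_⟩
  rw [hq, ← hn]
  simp

theorem absNorm_int (Q : QuadData k M) (n : ℤ) : Ideal.absNorm (Ideal.span {(n : 𝓞 k)}) = n.natAbs ^ 2 := by
  have : (n : 𝓞 k) = algebraMap ℤ (𝓞 k) n := by simp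
  rw [Ideal.absNorm_span_singleton, this, Algebra.norm_algebraMap, RingOfIntegers.rank, Q.finrank_two,
    Int.natAbs_pow]

theorem absNorm_el (Q : QuadData k M) (β : 𝓞 k) : ∃ x y : ℚ, (Ideal.absNorm (Ideal.span {β}) : ℚ) = x ^ 2 + M * y ^ 2 ∧
    ((algebraMap (𝓞 k) k β) * Q.σ (algebraMap (𝓞 k) k β) = ((x ^ 2 + M * y ^ 2 : ℚ) : k)) := by
  obtain ⟨x, y, hxy⟩ := Q.hrep (algebraMap (𝓞 k) k β)
  obtain ⟨B, hB⟩ := Q.fixedO (β * act Q.σ β) (by rw [map_mul, Q.ττ, mul_comm])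
  have h1 := Q.norm_form x y
  have h2 : (algebraMap (𝓞 k) k β) * Q.σ (algebraMap (𝓞 k) k β) = (B : k) := by
    rw [← act_coe, ← map_mul, ← hB, map_intCast]
  have h3 : (B : ℚ) = x ^ 2 + M * y ^ 2 := by
    rw [hxy, h1] at h2
    exact_mod_cast h2.symm
  have hM : (0 : ℚ) < M := by exact_mod_cast Q.hM
  have hB0 : 0 ≤ B := by
    have : (0 : ℚ) ≤ B := by rw [h3]; positivity
    exact_mod_cast this
  refine ⟨x, y, ?_, by rw [h2, ← h3]; simp⟩
  rw [← h3]
  have h4 : Ideal.absNorm (Ideal.span {β}) ^ 2 = B.natAbs ^ 2 := by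
    rw [← Q.absNorm_int, hB, ← Ideal.span_singleton_mul_span_singleton, map_mul, sq]
    congr 1
    rw [Ideal.absNorm_span_singleton, Ideal.absNorm_span_singleton]
    congr 1
    exact (Algebra.norm_eq_of_algEquiv ((act Q.σ).toIntAlgEquiv) β).symm
  have h5 := Nat.pow_left_injective (n := 2) (by norm_num) h4
  have h6 : ((Ideal.absNorm (Ideal.span {β}) : ℕ) : ℤ) = B := by
    rw [h5]; exact Int.natAbs_of_nonneg hB0
  exact_mod_cast h6

theorem genusQ (Q : QuadData k M) (θ : 𝓞 k) (Δ : ℤ) (hD : (θ - act Q.σ θ) ^ 2 = Δ) (hΔ : Δ ≠ 0)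
    (𝔟 : Ideal (𝓞 k)) (β : 𝓞 k) (hβ0 : β ≠ 0) (hβ : 𝔟 ^ 2 = Ideal.span {β}) :
    ∃ (𝔯 : Ideal (𝓞 k)) (n : ℤ) (γ : 𝓞 k), 𝔯 ^ 2 = Ideal.span {(n : 𝓞 k)} ∧ n ∣ Δ ∧
      𝔯 * 𝔟 = Ideal.span {γ} := by
  have hsi : IsIntegral ℤ Q.s := isInt_sqrt (d := -M) (by rw [Q.hs]; push_cast; rfl)
  obtain ⟨S, hS⟩ := toO hsi
  refine genus (act Q.σ) Q.ττ Q.fixedO (fun a b h => int_dvd_of_O h) ?_ S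
    (O_inj (by rw [act_coe, hS, Q.hσ, map_neg, hS])) ?_ θ _ Δ rfl hD hΔ 𝔟 β hβ0 hβ
  · intro I β B hI hB
    refine ⟨Ideal.absNorm I, ?_⟩
    obtain ⟨x, y, h1, h2⟩ := Q.absNorm_el β
    rw [← hI, map_pow] at h1
    rw [← act_coe, ← map_mul, hB, map_intCast, ← h1] at h2
    exact_mod_cast h2
  · intro h
    apply Q.s_ne
    rw [← hS, h, map_zero]

theorem princ_of_assoc (𝔯 𝔟 : Ideal (𝓞 k)) (n : ℤ) (hn : n ≠ 0) (γ t : 𝓞 k) (h1 : 𝔯 ^ 2 = Ideal.span {(n : 𝓞 k)})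
    (h2 : 𝔯 * 𝔟 = Ideal.span {γ}) (ht : Associated (t ^ 2) (n : 𝓞 k)) : ∃ a, 𝔟 = Ideal.span {a} := by
  have h3 : 𝔯 = Ideal.span {t} := by
    apply ideal_sq_inj
    rw [h1, Ideal.span_singleton_pow, Ideal.span_singleton_eq_span_singleton]
    exact ht.symm
  have ht0 : t ≠ 0 := by
    rintro rfl
    have := ht.symm
    simp at this
    exact hn this
  have hdvd : t ∣ γ := by
    rw [← Ideal.span_singleton_le_span_singleton, ← Ideal.dvd_iff_le]
    exact ⟨𝔟, by rw [← h2, h3]⟩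
  obtain ⟨a, rfl⟩ := hdvd
  refine ⟨a, mul_left_cancel₀ (a := Ideal.span {t}) (by simpa using ht0) ?_⟩
  rw [← h3, h2, h3, Ideal.span_singleton_mul_span_singleton]

theorem D1 (Q : QuadData k M) (θ : 𝓞 k) (Δ : ℤ) (hD : (θ - act Q.σ θ) ^ 2 = Δ) (hΔ : Δ ≠ 0)
    (H : ∀ n : ℤ, n ∣ Δ → ∃ t : 𝓞 k, Associated (t ^ 2) (n : 𝓞 k))
    (c : ClassGroup (𝓞 k)) (hc : c ^ 2 = 1) : c = 1 := by
  obtain ⟨𝔟, hb0, hcb⟩ := cl_pow c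
  obtain ⟨β, hβ⟩ := (hcb 2).mp hc
  have hβ0 : β ≠ 0 := by
    rintro rfl
    apply pow_ne_zero 2 hb0
    rw [hβ]; simp
  obtain ⟨𝔯, n, γ, h1, h2, h3⟩ := Q.genusQ θ Δ hD hΔ 𝔟 β hβ0 hβ
  obtain ⟨t, ht⟩ := H n h2
  obtain ⟨a, ha⟩ := princ_of_assoc 𝔯 𝔟 n (ne_zero_of_dvd_ne_zero hΔ h2) γ t h1 h3 ht
  rw [← pow_one c]
  exact (hcb 1).mpr ⟨a, by rw [pow_one, ha]⟩

theorem D2 (Q : QuadData k M) (θ : 𝓞 k) (Δ : ℤ) (hD : (θ - act Q.σ θ) ^ 2 = Δ) (hΔ : Δ ≠ 0)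
    (H : ∀ n : ℤ, n ∣ Δ → (∃ t : 𝓞 k, Associated (t ^ 2) (n : 𝓞 k)) ∨
      ¬ ∃ x y a : ℚ, a ≠ 0 ∧ x ^ 2 + M * y ^ 2 = (n.natAbs : ℚ) * a ^ 2)
    (c : ClassGroup (𝓞 k)) (hc : c ^ 4 = 1) : c ^ 2 = 1 := by
  obtain ⟨𝔞, hb0, hcb⟩ := cl_pow c
  obtain ⟨β, hβ⟩ := (hcb 4).mp hc
  have hβ0 : β ≠ 0 := by
    rintro rfl
    apply pow_ne_zero 4 hb0
    rw [hβ]; simp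
  obtain ⟨𝔯, n, γ, h1, h2, h3⟩ := Q.genusQ θ Δ hD hΔ (𝔞 ^ 2) β hβ0 (by rw [← pow_mul, hβ])
  apply (hcb 2).mpr
  rcases H n h2 with ⟨t, ht⟩ | hno
  · obtain ⟨a, ha⟩ := princ_of_assoc 𝔯 (𝔞 ^ 2) n (ne_zero_of_dvd_ne_zero hΔ h2) γ t h1 h3 ht
    exact ⟨a, ha⟩
  · exfalso
    apply hno
    obtain ⟨x, y, hxy, -⟩ := Q.absNorm_el γ
    refine ⟨x, y, Ideal.absNorm 𝔞, ?_, ?_⟩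
    · have : Ideal.absNorm 𝔞 ≠ 0 := by
        rw [Ne, Ideal.absNorm_eq_zero_iff]; exact hb0
      exact_mod_cast this
    · rw [← hxy, ← h3, map_mul, map_pow]
      have : Ideal.absNorm 𝔯 = n.natAbs := by
        apply Nat.pow_left_injective (n := 2) (by norm_num)
        change _ ^ 2 = _ ^ 2
        rw [← map_pow, h1, Q.absNorm_int]
      rw [this]
      push_cast
      rfl
end QuadData

/-- Class groups of subfields. -/
theorem cl_sub (k K : Type*) [Field k] [NumberField k] [Field K] [NumberField K] [Algebra k K] (u : ℕ)
    (hcl : ∀ I : Ideal (𝓞 K), ∃ a, I ^ u = Ideal.span {a}) (hK : Module.finrank ℚ K = 8)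
    (c : ClassGroup (𝓞 k)) : c ^ (8 * u) = 1 := by
  have hdiv : Module.finrank k K ∣ 8 := by
    rw [← hK, ← Module.finrank_mul_finrank ℚ k K]
    exact dvd_mul_left _ _
  suffices h : c ^ (u * Module.finrank k K) = 1 by
    obtain ⟨m, hm⟩ := hdiv
    rw [hm, mul_comm, ← mul_assoc, pow_mul, h, one_pow]
  obtain ⟨𝔞, hb0, hcb⟩ := cl_pow c
  apply (hcb _).mpr
  obtain ⟨a, ha⟩ := hcl (𝔞.map (algebraMap (𝓞 k) (𝓞 K)))
  have h := congrArg (Ideal.relNorm (𝓞 k)) ha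
  rw [map_pow, Ideal.relNorm_singleton, Ideal.relNorm_algebraMap, ← pow_mul] at h
  have hf : Module.finrank (𝓞 k) (𝓞 K) = Module.finrank k K :=
    (Algebra.IsAlgebraic.finrank_of_isFractionRing (𝓞 k) k (𝓞 K) K).symm
  rw [hf, mul_comm] at h
  exact ⟨_, h⟩

end

section

theorem prim_exists (a b : ℤ) (x y z : ℚ) (h : x ^ 2 = a * y ^ 2 + b * z ^ 2)
    (h0 : ¬ (x = 0 ∧ y = 0 ∧ z = 0)) :
    ∃ X Y Z : ℤ, X ^ 2 = a * Y ^ 2 + b * Z ^ 2 ∧ ∀ p : ℤ, Prime p → ¬ (p ∣ X ∧ p ∣ Y ∧ p ∣ Z) := by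
  have step : ∀ N : ℕ, ∀ X Y Z : ℤ, X.natAbs + Y.natAbs + Z.natAbs = N → N ≠ 0 →
      X ^ 2 = a * Y ^ 2 + b * Z ^ 2 → ∃ X Y Z : ℤ, X ^ 2 = a * Y ^ 2 + b * Z ^ 2 ∧
        ∀ p : ℤ, Prime p → ¬ (p ∣ X ∧ p ∣ Y ∧ p ∣ Z) := by
    intro N
    induction N using Nat.strong_induction_on with
    | _ N ih =>
      intro X Y Z hN hN0 hE
      by_cases hp : ∀ p : ℤ, Prime p → ¬ (p ∣ X ∧ p ∣ Y ∧ p ∣ Z)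
      · exact ⟨X, Y, Z, hE, hp⟩
      · push Not at hp
        obtain ⟨p, hp, ⟨X', rfl⟩, ⟨Y', rfl⟩, ⟨Z', rfl⟩⟩ := hp
        have hp2 : 2 ≤ p.natAbs := (Int.prime_iff_natAbs_prime.mp hp).two_le
        rw [Int.natAbs_mul, Int.natAbs_mul, Int.natAbs_mul, ← mul_add, ← mul_add] at hN
        have hS : X'.natAbs + Y'.natAbs + Z'.natAbs ≠ 0 := by
          intro h; rw [h] at hN; simp at hN; exact hN0 hN.symm
        refine ih _ ?_ X' Y' Z' rfl hS ?_
        · have : 0 < X'.natAbs + Y'.natAbs + Z'.natAbs := Nat.pos_of_ne_zero hS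
          rw [← hN]
          nlinarith
        · apply mul_left_cancel₀ (pow_ne_zero 2 hp.ne_zero)
          linear_combination hE
  have hx := Rat.mul_den_eq_num x
  have hy := Rat.mul_den_eq_num y
  have hz := Rat.mul_den_eq_num z
  have dx := x.den_nz
  have dy := y.den_nz
  have dz := z.den_nz
  refine step _ (x.num * y.den * z.den) (y.num * x.den * z.den) (z.num * x.den * y.den) rfl ?_ ?_
  · intro h
    have h1 : x.num * y.den * z.den = 0 := by omega
    have h2 : y.num * x.den * z.den = 0 := by omega
    have h3 : z.num * x.den * y.den = 0 := by omega
    apply h0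
    simp [dx, dy, dz] at h1 h2 h3
    exact ⟨h1, h2, h3⟩
  · have : ((x.num * y.den * z.den : ℤ) : ℚ) ^ 2 = a * ((y.num * x.den * z.den : ℤ) : ℚ) ^ 2
        + b * ((z.num * x.den * y.den : ℤ) : ℚ) ^ 2 := by
      push_cast
      rw [← hx, ← hy, ← hz]
      linear_combination ((x.den : ℚ) * y.den * z.den) ^ 2 * h
    exact_mod_cast this

theorem prim_coprime (a b X Y Z : ℤ) (ha : Prime a) (hb : Prime b) (hab : ¬ a ∣ b)
    (h : X ^ 2 = a * Y ^ 2 + b * Z ^ 2) (hp : ∀ p : ℤ, Prime p → ¬ (p ∣ X ∧ p ∣ Y ∧ p ∣ Z)) :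
    IsCoprime X (a * Y ^ 2) := by
  apply isCoprime_of_prime_dvd
  · rintro ⟨h1, h2⟩
    rw [h1, h2] at h
    have hY : Y = 0 := by
      rcases mul_eq_zero.mp h2 with h | h
      · exact absurd h ha.ne_zero
      · simpa using h
    have hZ : Z = 0 := by
      have : b * Z ^ 2 = 0 := by linear_combination -h
      rcases mul_eq_zero.mp this with h | h
      · exact absurd h hb.ne_zero
      · simpa using h
    exact hp 2 Int.prime_two ⟨by simp [h1], by simp [hY], by simp [hZ]⟩
  · intro l hl hX hY
    have hZ : l ∣ b * Z ^ 2 := by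
      have : b * Z ^ 2 = X * X - a * Y ^ 2 := by linear_combination -h
      rw [this]; exact dvd_sub (hX.mul_right _) hY
    have main : ∀ a b Y Z : ℤ, Prime a → X ^ 2 = a * Y ^ 2 + b * Z ^ 2 → a ∣ X → a ∣ Z → a ∣ Y := by
      rintro a b Y Z ha h ⟨x, rfl⟩ ⟨z, rfl⟩
      have : Y ^ 2 = a * (x ^ 2 - b * z ^ 2) := by
        apply mul_left_cancel₀ ha.ne_zero
        linear_combination -h
      exact ha.dvd_of_dvd_pow (n := 2) ⟨_, this⟩
    rcases hl.dvd_or_dvd hY with h1 | h1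
    · have hla : Associated l a := (hl.dvd_prime_iff_associated ha).mp h1
      rcases hl.dvd_or_dvd hZ with h2 | h2
      · exact hab (hla.symm.dvd.trans h2)
      · have hZ' := hl.dvd_of_dvd_pow h2
        have hY' := main a b Y Z ha h (hla.symm.dvd.trans hX) (hla.symm.dvd.trans hZ')
        exact hp l hl ⟨hX, hla.dvd.trans hY', hZ'⟩
    · have hY' := hl.dvd_of_dvd_pow h1
      rcases hl.dvd_or_dvd hZ with h2 | h2
      · have hlb : Associated l b := (hl.dvd_prime_iff_associated hb).mp h2
        have hZ' := main b a Z Y hb (by linear_combination h) (hlb.symm.dvd.trans hX) (hlb.symm.dvd.trans hY')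
        exact hp l hl ⟨hX, hY', hlb.dvd.trans hZ'⟩
      · exact hp l hl ⟨hX, hY', hl.dvd_of_dvd_pow h2⟩

theorem prim_sol (a b : ℤ) (x y z : ℚ) (ha : Prime a) (hb : Prime b) (hab : ¬ a ∣ b) (hba : ¬ b ∣ a)
    (h : x ^ 2 = a * y ^ 2 + b * z ^ 2) (h0 : ¬ (x = 0 ∧ y = 0 ∧ z = 0)) :
    ∃ X Y Z : ℤ, X ^ 2 = a * Y ^ 2 + b * Z ^ 2 ∧ IsCoprime X (a * Y ^ 2) ∧ IsCoprime X (b * Z ^ 2) := by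
  obtain ⟨X, Y, Z, hE, hp⟩ := prim_exists a b x y z h h0
  exact ⟨X, Y, Z, hE, prim_coprime a b X Y Z ha hb hab hE hp,
    prim_coprime b a X Z Y hb ha hba (by linear_combination hE) (fun p h ⟨h1, h2, h3⟩ => hp p h ⟨h1, h3, h2⟩)⟩

theorem norm_sol (P Q : ℕ) (hP : P.Prime) (hQ : Q.Prime) (hPQ : P ≠ Q) (r t : ℤ) (ht : t ≠ 0)
    (hrt : (P : ℤ) = r ^ 2 + t ^ 2) (x y a n m : ℚ) (ha : a ≠ 0) (hm : m ≠ 0)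
    (hn : n = P * m ^ 2 ∨ n = Q * m ^ 2) (h : x ^ 2 + (P * Q) * y ^ 2 = n * a ^ 2) :
    ∃ X Y Z : ℤ, X ^ 2 = (-Q : ℤ) * Y ^ 2 + P * Z ^ 2 ∧ IsCoprime X ((-Q : ℤ) * Y ^ 2) ∧
      IsCoprime X (P * Z ^ 2) := by
  have hP0 : (P : ℚ) ≠ 0 := by exact_mod_cast hP.ne_zero
  have hQ0 : (Q : ℚ) ≠ 0 := by exact_mod_cast hQ.ne_zero
  have hrtQ : (P : ℚ) = r ^ 2 + t ^ 2 := by exact_mod_cast hrt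
  have htQ : (t : ℚ) ≠ 0 := by exact_mod_cast ht
  obtain ⟨A, X, Y, hA0, hA⟩ : ∃ A X Y : ℚ, A ≠ 0 ∧ A ^ 2 = P * X ^ 2 + Q * Y ^ 2 := by
    rcases hn with hn | hn
    · refine ⟨m * a, x / P, y, mul_ne_zero hm ha, ?_⟩
      rw [hn] at h
      field_simp
      linear_combination -h
    · refine ⟨m * a, y, x / Q, mul_ne_zero hm ha, ?_⟩
      rw [hn] at h
      field_simp
      linear_combination -h
  have hPp : Prime (P : ℤ) := Nat.prime_iff_prime_int.mp hP
  have hQp : Prime (-Q : ℤ) := (Nat.prime_iff_prime_int.mp hQ).neg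
  refine prim_sol (-Q) P (A * r + P * X) (Y * t) (A + r * X) hQp hPp ?_ ?_ ?_ ?_
  · rw [neg_dvd, Int.natCast_dvd_natCast, Nat.prime_dvd_prime_iff_eq hQ hP]; exact hPQ.symm
  · rw [dvd_neg, Int.natCast_dvd_natCast, Nat.prime_dvd_prime_iff_eq hP hQ]; exact hPQ
  · push_cast
    linear_combination (r ^ 2 - P) * hA - (Q * Y ^ 2) * hrtQ
  · rintro ⟨h1, h2, h3⟩
    have hY : Y = 0 := (mul_eq_zero.mp h2).resolve_right htQ
    rw [hY] at hA
    have hX : t ^ 2 * X ^ 2 = 0 := by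
      have : A = -(r * X) := by linear_combination h3
      rw [this] at hA
      linear_combination -hA - X ^ 2 * hrtQ
    have hX' : X = 0 := by
      rcases mul_eq_zero.mp hX with h | h
      · exact absurd h (pow_ne_zero 2 htQ)
      · simpa using h
    rw [hX'] at h3
    exact hA0 (by linear_combination h3)

theorem two_sol (p : ℕ) (hp : p.Prime) (hp4 : p % 4 = 1) (x y a n : ℚ) (ha : a ≠ 0)
    (hn : n = 2 ∨ n = 2 * p) (h : x ^ 2 + p * y ^ 2 = n * a ^ 2) : p % 8 = 1 := by
  have hp0 : (p : ℚ) ≠ 0 := by exact_mod_cast hp.ne_zero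
  obtain ⟨A, X, Y, hA0, hA⟩ : ∃ A X Y : ℚ, A ≠ 0 ∧ X ^ 2 = 2 * A ^ 2 + (-p) * Y ^ 2 := by
    rcases hn with hn | hn
    · exact ⟨a, x, y, ha, by rw [hn] at h; linear_combination h⟩
    · refine ⟨a, y, x / p, ha, ?_⟩
      rw [hn] at h
      field_simp
      linear_combination h
  have h2 : ¬ (2 : ℤ) ∣ -p := by omega
  have h2' : ¬ (-p : ℤ) ∣ 2 := by
    intro h
    have h' : (p : ℤ) ∣ 2 := by rwa [neg_dvd] at h
    have := Int.le_of_dvd (by norm_num) h'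
    have := hp.two_le
    omega
  have hpp : Prime (p : ℤ) := Nat.prime_iff_prime_int.mp hp
  obtain ⟨U, V, W, hE, hc, -⟩ := prim_sol 2 (-p) X A Y Int.prime_two hpp.neg h2 h2' (by push_cast; exact hA)
    (fun h => hA0 h.2.1)
  haveI := Fact.mk hp
  have hEp : (U : ZMod p) ^ 2 = 2 * (V : ZMod p) ^ 2 := by
    have := congrArg (fun t : ℤ => (t : ZMod p)) hE
    push_cast at this
    rw [this]; simp
  have hV : (V : ZMod p) ≠ 0 := by
    intro hV
    rw [hV] at hEp
    have hU : (U : ZMod p) = 0 := by simpa using hEp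
    rw [ZMod.intCast_zmod_eq_zero_iff_dvd] at hV hU
    exact hpp.not_unit (hc.isUnit_of_dvd' hU ((hV.mul_left 2).mul_right V |>.trans (by rw [sq, mul_assoc])))
  have hsq : IsSquare (2 : ZMod p) := by
    refine ⟨U / V, ?_⟩
    field_simp
    exact hEp.symm
  rw [ZMod.exists_sq_eq_two_iff (by omega)] at hsq
  omega

end

section

section
variable (K : Type*) [Field K] [NumberField K] [IsTotallyComplex K]

theorem redei1 (u : ℕ) (hu : Odd u) (hcl : ∀ I : Ideal (𝓞 K), ∃ a, I ^ u = Ideal.span {a})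
    (a b x y z : ℤ) (α β : K) (hα : α ^ 2 = (a : K)) (hβ : β ^ 2 = (b : K))
    (g : K ≃ₐ[ℚ] K) (hg : ∀ t, g (g t) = t) (hgα : g α = -α) (hgβ : g β = -β)
    (ha : a % 4 = 1) (h : x ^ 2 = a * y ^ 2 + b * z ^ 2) (hodd : Odd (b * z ^ 2))
    (hx : Odd x) (hy : Even y) (hcop : IsCoprime x (a * y ^ 2)) : False := by
  obtain ⟨y', rfl⟩ := hy
  obtain ⟨H, hH⟩ := toO (half_int (k := a / 4) hα (by omega))
  have key : ∀ x : ℤ, x ^ 2 = a * (y' + y') ^ 2 + b * z ^ 2 → IsCoprime x (a * (y' + y') ^ 2) →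
      (x - 2 * y') % 4 = 1 → False := by
    intro x h hcop hx
    obtain ⟨j, hj⟩ : ∃ j, x - 2 * y' = 4 * j + 1 := ⟨(x - 2 * y') / 4, by omega⟩
    refine redei K u hu hcl a b x (y' + y') z α β hα hβ h hodd hcop 1 (j + y' * H) ?_ g hg hgα hgβ
    have hjK : (x : K) = 2 * y' + 4 * j + 1 := by
      have : x = 2 * y' + 4 * j + 1 := by linear_combination hj
      rw [this]; push_cast; ring
    rw [map_one, map_add, map_mul, map_intCast, map_intCast, hH, hjK]
    push_cast
    ring
  obtain ⟨m, hm⟩ := hx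
  rcases Int.even_or_odd' (m - y') with ⟨e, he | he⟩
  · exact key x h hcop (by omega)
  · exact key (-x) (by linear_combination h) hcop.neg_left (by omega)

theorem redei2 (u : ℕ) (hu : Odd u) (hcl : ∀ I : Ideal (𝓞 K), ∃ a, I ^ u = Ideal.span {a})
    (a b x y z : ℤ) (α β : K) (hα : α ^ 2 = (a : K)) (hβ : β ^ 2 = (b : K))
    (g : K ≃ₐ[ℚ] K) (hg : ∀ t, g (g t) = t) (hgα : g α = -α) (hgβ : g β = -β)
    (ha : a = 2 ∨ a = -2) (h : x ^ 2 = a * y ^ 2 + b * z ^ 2) (hodd : Odd (b * z ^ 2))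
    (hx : Odd x) (hy : Even y) (hcop : IsCoprime x (a * y ^ 2)) : False := by
  obtain ⟨y', rfl⟩ := hy
  obtain ⟨A, hA⟩ := toO (isInt_sqrt hα)
  obtain ⟨m, hm⟩ := hx
  rcases Int.even_or_odd' y' with ⟨f, hf | hf⟩
  · have key : ∀ x : ℤ, x ^ 2 = a * (y' + y') ^ 2 + b * z ^ 2 → IsCoprime x (a * (y' + y') ^ 2) →
        x % 4 = 1 → False := by
      intro x h hcop hx
      obtain ⟨j, hj⟩ : ∃ j, x = 4 * j + 1 := ⟨x / 4, by omega⟩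
      refine redei K u hu hcl a b x (y' + y') z α β hα hβ h hodd hcop 1 (j + f * A) ?_ g hg hgα hgβ
      rw [map_one, map_add, map_mul, map_intCast, map_intCast, hA, hj, hf]
      push_cast
      ring
    rcases Int.even_or_odd' m with ⟨e, he | he⟩
    · exact key x h hcop (by omega)
    · exact key (-x) (by linear_combination h) hcop.neg_left (by omega)
  · have key : ∀ x : ℤ, x ^ 2 = a * (y' + y') ^ 2 + b * z ^ 2 → IsCoprime x (a * (y' + y') ^ 2) →
        x % 4 = 3 → False := by
      intro x h hcop hx
      obtain ⟨j, hj⟩ : ∃ j, x = 4 * j + 1 + a := ⟨(x - 1 - a) / 4, by rcases ha with rfl | rfl <;> omega⟩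
      refine redei K u hu hcl a b x (y' + y') z α β hα hβ h hodd hcop (1 + A) (j + f * A) ?_ g hg hgα hgβ
      rw [map_add, map_one, map_add, map_mul, map_intCast, map_intCast, hA, hj, hf]
      push_cast
      linear_combination -hα
    rcases Int.even_or_odd' m with ⟨e, he | he⟩
    · exact key (-x) (by linear_combination h) hcop.neg_left (by omega)
    · exact key x h hcop (by omega)

/-- both odd -/
theorem redei_odd (u : ℕ) (hu : Odd u) (hcl : ∀ I : Ideal (𝓞 K), ∃ a, I ^ u = Ideal.span {a})
    (p q : ℕ) (hp4 : p % 4 = 1) (hq4 : q % 4 = 3) (X Y Z : ℤ)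
    (α β : K) (hα : α ^ 2 = ((-q : ℤ) : K)) (hβ : β ^ 2 = ((p : ℤ) : K))
    (g : K ≃ₐ[ℚ] K) (hg : ∀ t, g (g t) = t) (hgα : g α = -α) (hgβ : g β = -β)
    (h : X ^ 2 = (-q : ℤ) * Y ^ 2 + p * Z ^ 2) (h1 : IsCoprime X ((-q : ℤ) * Y ^ 2))
    (h2 : IsCoprime X ((p : ℤ) * Z ^ 2)) : False := by
  have hpo : Odd (p : ℤ) := by rw [Int.odd_iff]; omega
  have hqo : Odd (-q : ℤ) := by rw [Int.odd_iff]; omega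
  rcases Int.even_or_odd Y with hY | hY
  · have hX : Odd X := by
      by_contra hX
      rw [Int.not_odd_iff_even] at hX
      exact Int.prime_two.not_unit (h1.isUnit_of_dvd' hX.two_dvd ((hY.pow_of_ne_zero two_ne_zero).mul_left _).two_dvd)
    have hZ : Odd ((p : ℤ) * Z ^ 2) := by
      have : (p : ℤ) * Z ^ 2 = X ^ 2 - (-q : ℤ) * Y ^ 2 := by linear_combination -h
      rw [this]
      exact hX.pow.sub_even ((hY.pow_of_ne_zero two_ne_zero).mul_left _)
    exact redei1 K u hu hcl (-q) p X Y Z α β hα hβ g hg hgα hgβ (by omega) h hZ hX hY h1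
  · rcases Int.even_or_odd Z with hZ | hZ
    · have hX : Odd X := by
        by_contra hX
        rw [Int.not_odd_iff_even] at hX
        exact Int.prime_two.not_unit (h2.isUnit_of_dvd' hX.two_dvd ((hZ.pow_of_ne_zero two_ne_zero).mul_left _).two_dvd)
      exact redei1 K u hu hcl p (-q) X Z Y β α hβ hα g hg hgβ hgα (by omega) (by linear_combination h)
        (hqo.mul hY.pow) hX hZ h2
    · -- contradiction mod 4
      obtain ⟨y, rfl⟩ := hY
      obtain ⟨z, rfl⟩ := hZ
      obtain ⟨P, hP⟩ : ∃ P : ℤ, (p : ℤ) = 4 * P + 1 := ⟨p / 4, by omega⟩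
      obtain ⟨Q, hQ⟩ : ∃ Q : ℤ, (q : ℤ) = 4 * Q + 3 := ⟨q / 4, by omega⟩
      have : X ^ 2 = 4 * (-Q * (2 * y + 1) ^ 2 - 3 * (y ^ 2 + y) + P * (2 * z + 1) ^ 2 + z ^ 2 + z - 1) + 2 := by
        rw [h, hP, hQ]; ring
      rcases Int.even_or_odd' X with ⟨x, rfl | rfl⟩
      · ring_nf at this; omega
      · ring_nf at this; omega

theorem redei_neg8 (u : ℕ) (hu : Odd u) (hcl : ∀ I : Ideal (𝓞 K), ∃ a, I ^ u = Ideal.span {a})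
    (p : ℕ) (hp4 : p % 4 = 1) (X Y Z : ℤ)
    (α β : K) (hα : α ^ 2 = ((-2 : ℤ) : K)) (hβ : β ^ 2 = ((p : ℤ) : K))
    (g : K ≃ₐ[ℚ] K) (hg : ∀ t, g (g t) = t) (hgα : g α = -α) (hgβ : g β = -β)
    (h : X ^ 2 = (-2 : ℤ) * Y ^ 2 + p * Z ^ 2) (h1 : IsCoprime X ((-2 : ℤ) * Y ^ 2)) : False := by
  have hX : Odd X := by
    by_contra hX
    rw [Int.not_odd_iff_even] at hX
    exact Int.prime_two.not_unit (h1.isUnit_of_dvd' hX.two_dvd ⟨-Y ^ 2, by ring⟩)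
  have hpZ : Odd ((p : ℤ) * Z ^ 2) := by
    have : (p : ℤ) * Z ^ 2 = X ^ 2 + 2 * Y ^ 2 := by linear_combination -h
    rw [this]
    exact hX.pow.add_even (even_two_mul _)
  have hY : Even Y := by
    rw [← Int.not_odd_iff_even]
    rintro ⟨y, rfl⟩
    have hZ : Odd Z := by
      by_contra hZ
      rw [Int.not_odd_iff_even] at hZ
      exact (Int.not_odd_iff_even.mpr ((hZ.pow_of_ne_zero two_ne_zero).mul_left (p : ℤ))) hpZ
    obtain ⟨x, rfl⟩ := hX
    obtain ⟨z, rfl⟩ := hZ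
    obtain ⟨P, hP⟩ : ∃ P : ℤ, (p : ℤ) = 4 * P + 1 := ⟨p / 4, by omega⟩
    rw [hP] at h
    have : (4 : ℤ) ∣ 2 := ⟨-(x ^ 2 + x) - 2 * y ^ 2 - 2 * y + P * (2 * z + 1) ^ 2 + z ^ 2 + z, by
      linear_combination h⟩
    omega
  exact redei2 K u hu hcl (-2) p X Y Z α β hα hβ g hg hgα hgβ (Or.inr rfl) h hpZ hX hY h1

theorem redei_8 (u : ℕ) (hu : Odd u) (hcl : ∀ I : Ideal (𝓞 K), ∃ a, I ^ u = Ideal.span {a})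
    (q : ℕ) (hq4 : q % 4 = 3) (X Y Z : ℤ)
    (α β : K) (hα : α ^ 2 = ((-q : ℤ) : K)) (hβ : β ^ 2 = ((2 : ℤ) : K))
    (g : K ≃ₐ[ℚ] K) (hg : ∀ t, g (g t) = t) (hgα : g α = -α) (hgβ : g β = -β)
    (h : X ^ 2 = (-q : ℤ) * Y ^ 2 + 2 * Z ^ 2) (h2 : IsCoprime X ((2 : ℤ) * Z ^ 2)) : False := by
  have hX : Odd X := by
    by_contra hX
    rw [Int.not_odd_iff_even] at hX
    exact Int.prime_two.not_unit (h2.isUnit_of_dvd' hX.two_dvd ⟨Z ^ 2, by ring⟩)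
  have hqY : Odd ((-q : ℤ) * Y ^ 2) := by
    have : (-q : ℤ) * Y ^ 2 = X ^ 2 - 2 * Z ^ 2 := by linear_combination -h
    rw [this]
    exact hX.pow.sub_even (even_two_mul _)
  have hZ : Even Z := by
    rw [← Int.not_odd_iff_even]
    rintro ⟨z, rfl⟩
    have hY : Odd Y := by
      by_contra hY
      rw [Int.not_odd_iff_even] at hY
      exact (Int.not_odd_iff_even.mpr ((hY.pow_of_ne_zero two_ne_zero).mul_left (-q : ℤ))) hqY
    obtain ⟨x, rfl⟩ := hX
    obtain ⟨y, rfl⟩ := hY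
    obtain ⟨Q, hQ⟩ : ∃ Q : ℤ, (q : ℤ) = 4 * Q + 3 := ⟨q / 4, by omega⟩
    rw [hQ] at h
    have : (4 : ℤ) ∣ 2 := ⟨(x ^ 2 + x) - 2 * z ^ 2 - 2 * z + Q * (2 * y + 1) ^ 2 + 3 * y ^ 2 + 3 * y + 1, by
      linear_combination -h⟩
    omega
  exact redei2 K u hu hcl 2 (-q) X Z Y β α hβ hα g hg hgβ hgα (Or.inl rfl) (by linear_combination h) hqY hX hZ h2

theorem redei_neg4 (u : ℕ) (hu : Odd u) (hcl : ∀ I : Ideal (𝓞 K), ∃ a, I ^ u = Ideal.span {a})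
    (p : ℕ) (hp : p.Prime) (hp8 : p % 8 = 1)
    (α β : K) (hα : α ^ 2 = ((-1 : ℤ) : K)) (hβ : β ^ 2 = ((p : ℤ) : K))
    (g : K ≃ₐ[ℚ] K) (hg : ∀ t, g (g t) = t) (hgα : g α = -α) (hgβ : g β = -β) : False := by
  obtain ⟨A, hA⟩ := toO (isInt_sqrt hα)
  haveI := Fact.mk hp
  have key : ∀ r s : ℤ, r ^ 2 + s ^ 2 = p → r % 4 = 1 → Even s → False := by
    intro r s hrs hr ⟨t, ht⟩
    obtain ⟨i, hi⟩ : ∃ i, r = 4 * i + 1 := ⟨r / 4, by omega⟩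
    obtain ⟨P, hP⟩ : ∃ P : ℤ, (p : ℤ) = 8 * P + 1 := ⟨p / 8, by omega⟩
    have ht2 : Even t := by
      rw [← Int.not_odd_iff_even]
      rintro ⟨v, rfl⟩
      rw [hi, ht, hP] at hrs
      have : (8 : ℤ) ∣ 4 := ⟨P - 2 * i ^ 2 - i - 2 * v ^ 2 - 2 * v, by linear_combination hrs⟩
      omega
    obtain ⟨v, rfl⟩ := ht2
    have hpo : Odd ((p : ℤ) * 1 ^ 2) := by rw [one_pow, mul_one, Int.odd_iff]; omega
    refine redei K u hu hcl (-1) p r s 1 α β hα hβ (by linear_combination hrs) hpo ?_ 1 (i + v * A) ?_ g hg hgα hgβ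
    · apply isCoprime_of_prime_dvd
      · rintro ⟨h1, h2⟩; omega
      · intro l hl h1 h2
        have h3 : l ∣ s := by
          apply hl.dvd_of_dvd_pow (n := 2)
          have : s ^ 2 = (-1 * s ^ 2) * (-1) := by ring
          rw [this]; exact h2.mul_right _
        obtain ⟨a, ha⟩ := h1
        obtain ⟨b, hb⟩ := h3
        have h4 : l * l ∣ (p : ℤ) := ⟨a ^ 2 + b ^ 2, by rw [← hrs, ha, hb]; ring⟩
        have hsq : Squarefree (p : ℤ) := (Nat.prime_iff_prime_int.mp hp).squarefree
        exact hl.not_unit (hsq l h4)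
    · rw [map_one, map_add, map_mul, map_intCast, map_intCast, hA, hi, ht]
      push_cast
      ring
  have key2 : ∀ r s : ℤ, r ^ 2 + s ^ 2 = p → Odd r → Even s → False := by
    rintro r s h ⟨m, hm⟩ hs
    rcases Int.even_or_odd' m with ⟨e, he | he⟩
    · exact key r s h (by omega) hs
    · exact key (-r) s (by linear_combination h) (by omega) hs
  obtain ⟨r, s, hrs⟩ := Nat.Prime.sq_add_sq (p := p) (by omega)
  have hrs' : (r : ℤ) ^ 2 + (s : ℤ) ^ 2 = p := by exact_mod_cast hrs
  have hpo : Odd (p : ℤ) := by rw [Int.odd_iff]; omega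
  rcases Int.even_or_odd (r : ℤ) with hr | hr <;> rcases Int.even_or_odd (s : ℤ) with hs | hs
  · rw [← hrs', ← Int.not_even_iff_odd] at hpo
    exact hpo ((hr.pow_of_ne_zero two_ne_zero).add (hs.pow_of_ne_zero two_ne_zero))
  · exact key2 s r (by linear_combination hrs') hs hr
  · exact key2 r s hrs' hr hs
  · rw [← hrs', ← Int.not_even_iff_odd] at hpo
    exact hpo (hr.pow.add_odd hs.pow)
end

end

section

theorem assoc_pm {R : Type*} [CommRing R] {x : R} {n : ℤ} (m : ℕ) (hn : n.natAbs = m)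
    (h : x = (m : R) ∨ x = -(m : R)) : Associated x (n : R) := by
  have hn' : (n : R) = (m : R) ∨ (n : R) = -(m : R) := by
    rcases Int.natAbs_eq n with e | e
    · left; rw [e, hn]; push_cast; rfl
    · right; rw [e, hn]; push_cast; rfl
  rcases h with rfl | rfl <;> rcases hn' with e | e <;> rw [e]
  · exact (Associated.refl _).neg_right
  · exact (Associated.refl _).neg_left

theorem sum_sq_ex {p : ℕ} (hp : p.Prime) (hp4 : p % 4 = 1) : ∃ r t : ℤ, t ≠ 0 ∧ (p : ℤ) = r ^ 2 + t ^ 2 := by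
  haveI := Fact.mk hp
  obtain ⟨r, t, h⟩ := Nat.Prime.sq_add_sq (p := p) (by omega)
  refine ⟨r, t, ?_, by exact_mod_cast h.symm⟩
  intro h0
  have h0' : t = 0 := by exact_mod_cast h0
  rw [h0'] at h
  have : IsSquare p := ⟨r, by rw [← h]; ring⟩
  exact hp.prime.not_isSquare this

theorem dvd_cases8 {d l : ℕ} (hl : l.Prime) (h : d ∣ 8 * l) :
    d = 1 ∨ d = 2 ∨ d = 4 ∨ d = 8 ∨ d = l ∨ d = 2 * l ∨ d = 4 * l ∨ d = 8 * l := by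
  obtain ⟨a, b, ha, hb, rfl⟩ := (Nat.dvd_mul).mp h
  have ha' : a ∈ Nat.divisors 8 := by simpa using ha
  have : Nat.divisors 8 = {1, 2, 4, 8} := by decide
  rw [this] at ha'
  simp at ha'
  rcases (Nat.dvd_prime hl).mp hb with rfl | rfl <;> rcases ha' with rfl | rfl | rfl | rfl <;> simp

namespace QuadData
variable {k : Type*} [Field k] [NumberField k]

theorem exS {M : ℤ} (Q : QuadData k M) : ∃ S : 𝓞 k, algebraMap (𝓞 k) k S = Q.s ∧ S ^ 2 = -(M : 𝓞 k) := by
  obtain ⟨S, hS⟩ := toO (isInt_sqrt (d := -M) (x := Q.s) (by rw [Q.hs]; push_cast; rfl))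
  refine ⟨S, hS, O_inj ?_⟩
  rw [map_pow, hS, Q.hs, map_neg, map_intCast]

theorem theta {M : ℤ} (Q : QuadData k M) (r : ℚ) (θ : 𝓞 k) (h : algebraMap (𝓞 k) k θ = r + Q.s / 2) :
    (θ - act Q.σ θ) ^ 2 = ((-M : ℤ) : 𝓞 k) := by
  apply O_inj
  rw [map_pow, map_sub, act_coe, h, map_add, map_ratCast, map_div₀, Q.hσ, map_ofNat, map_intCast]
  push_cast
  linear_combination Q.hs

theorem thetaOdd {M : ℤ} (Q : QuadData k M) (hM : M % 4 = 3) : ∃ θ : 𝓞 k, (θ - act Q.σ θ) ^ 2 = ((-M : ℤ) : 𝓞 k) := by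
  obtain ⟨θ, hθ⟩ := toO (half_int (x := Q.s) (m := -M) (k := -M / 4) (by rw [Q.hs]; push_cast; rfl) (by omega))
  exact ⟨θ, Q.theta (1 / 2) θ (by rw [hθ]; push_cast; ring)⟩

theorem thetaEven {M N : ℤ} (Q : QuadData k M) (hM : M = 4 * N) : ∃ θ : 𝓞 k, (θ - act Q.σ θ) ^ 2 = ((-M : ℤ) : 𝓞 k) ∧
    θ ^ 2 = -(N : 𝓞 k) := by
  have h : (Q.s / 2) ^ 2 = ((-N : ℤ) : k) := by
    rw [div_pow, Q.hs, hM]; push_cast; ring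
  obtain ⟨θ, hθ⟩ := toO (isInt_sqrt h)
  refine ⟨θ, Q.theta 0 θ (by rw [hθ]; push_cast; ring), O_inj ?_⟩
  rw [map_pow, hθ, h, map_neg, map_intCast]
  push_cast
  rfl

theorem D1q {q : ℕ} (Q : QuadData k q) (hq : q.Prime) (hq4 : q % 4 = 3)
    (c : ClassGroup (𝓞 k)) (hc : c ^ 2 = 1) : c = 1 := by
  obtain ⟨θ, hθ⟩ := Q.thetaOdd (by omega)
  obtain ⟨S, -, hS⟩ := Q.exS
  refine Q.D1 θ _ hθ (by have := hq.pos; omega) (fun n hn => ?_) c hc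
  have hn' : n.natAbs ∣ q := by
    rw [← Int.natAbs_dvd_natAbs] at hn; simpa using hn
  rcases (Nat.dvd_prime hq).mp hn' with h | h
  · exact ⟨1, assoc_pm 1 h (by simp)⟩
  · exact ⟨S, assoc_pm q h (Or.inr (by rw [hS]; simp))⟩

theorem D1four (Q : QuadData k 4) (c : ClassGroup (𝓞 k)) (hc : c ^ 2 = 1) : c = 1 := by
  obtain ⟨θ, hθ, hθ2⟩ := Q.thetaEven (N := 1) (by norm_num)
  refine Q.D1 θ _ hθ (by norm_num) (fun n hn => ?_) c hc
  have hn' : n.natAbs ∣ 4 := by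
    rw [← Int.natAbs_dvd_natAbs] at hn; simpa using hn
  have ha' : n.natAbs ∈ Nat.divisors 4 := by simpa using hn'
  have : Nat.divisors 4 = {1, 2, 4} := by decide
  rw [this] at ha'
  simp only [Finset.mem_insert, Finset.mem_singleton] at ha'
  push_cast at hθ2
  rcases ha' with h | h | h
  · exact ⟨1, assoc_pm 1 h (by simp)⟩
  · refine ⟨1 + θ, Associated.trans ?_ (assoc_pm (x := 2) 2 h (by simp))⟩
    refine ⟨⟨-θ, θ, by linear_combination -hθ2, by linear_combination -hθ2⟩, ?_⟩
    change (1 + θ) ^ 2 * (-θ) = 2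
    linear_combination (-2 - θ) * hθ2
  · exact ⟨2, assoc_pm 4 h (by norm_num)⟩

theorem D1eight (Q : QuadData k 8) (c : ClassGroup (𝓞 k)) (hc : c ^ 2 = 1) : c = 1 := by
  obtain ⟨θ, hθ, hθ2⟩ := Q.thetaEven (N := 2) (by norm_num)
  refine Q.D1 θ _ hθ (by norm_num) (fun n hn => ?_) c hc
  have hn' : n.natAbs ∣ 8 := by
    rw [← Int.natAbs_dvd_natAbs] at hn; simpa using hn
  have ha' : n.natAbs ∈ Nat.divisors 8 := by simpa using hn'
  have : Nat.divisors 8 = {1, 2, 4, 8} := by decide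
  rw [this] at ha'
  simp only [Finset.mem_insert, Finset.mem_singleton] at ha'
  push_cast at hθ2
  rcases ha' with h | h | h | h
  · exact ⟨1, assoc_pm 1 h (by simp)⟩
  · exact ⟨θ, assoc_pm 2 h (by simp [hθ2])⟩
  · exact ⟨2, assoc_pm 4 h (by norm_num)⟩
  · refine ⟨2 * θ, assoc_pm 8 h (Or.inr ?_)⟩
    rw [mul_pow, hθ2]; norm_num

theorem D1neg {m : ℤ} (Q : QuadData k (-m)) (hP : Pstar m) (hm : m < 0)
    (c : ClassGroup (𝓞 k)) (hc : c ^ 2 = 1) : c = 1 := by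
  rcases hP.neg_cases hm with rfl | rfl | ⟨q, hq, hq4, rfl⟩
  · exact D1four Q c hc
  · exact D1eight Q c hc
  · rw [neg_neg] at Q
    exact D1q Q hq hq4 c hc

theorem D2odd {p q : ℕ} (Q : QuadData k (q * p)) (hp : p.Prime) (hq : q.Prime) (hp4 : p % 4 = 1) (hq4 : q % 4 = 3)
    (hno : ∀ X Y Z : ℤ, X ^ 2 = (-q : ℤ) * Y ^ 2 + p * Z ^ 2 → IsCoprime X ((-q : ℤ) * Y ^ 2) →
      IsCoprime X ((p : ℤ) * Z ^ 2) → False)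
    (c : ClassGroup (𝓞 k)) (hc : c ^ 4 = 1) : c ^ 2 = 1 := by
  have hpq : p ≠ q := by rintro rfl; omega
  obtain ⟨θ, hθ⟩ := Q.thetaOdd (by rw [Int.mul_emod]; have h1 : (q : ℤ) % 4 = 3 := by omega
                                   have h2 : (p : ℤ) % 4 = 1 := by omega
                                   rw [h1, h2]; norm_num)
  obtain ⟨S, -, hS⟩ := Q.exS
  obtain ⟨r, t, ht, hrt⟩ := sum_sq_ex hp hp4
  refine Q.D2 θ _ hθ (by simp [hp.ne_zero, hq.ne_zero]) (fun n hn => ?_) c hc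
  have hn' : n.natAbs ∣ q * p := by
    rw [← Int.natAbs_dvd_natAbs] at hn; simpa [Int.natAbs_mul] using hn
  have bad : ((n.natAbs : ℚ) = p * 1 ^ 2 ∨ (n.natAbs : ℚ) = q * 1 ^ 2) →
      ¬ ∃ x y a : ℚ, a ≠ 0 ∧ x ^ 2 + ((q * p : ℤ) : ℚ) * y ^ 2 = (n.natAbs : ℚ) * a ^ 2 := by
    rintro h ⟨x, y, a, ha, hxy⟩
    obtain ⟨X, Y, Z, h1, h2, h3⟩ := norm_sol p q hp hq hpq r t ht hrt x y a _ 1 ha one_ne_zero h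
      (by push_cast at hxy; linear_combination hxy)
    exact hno X Y Z h1 h2 h3
  obtain ⟨a, b, ha, hb, hab⟩ := (Nat.dvd_mul).mp hn'
  rcases (Nat.dvd_prime hq).mp ha with rfl | rfl <;> rcases (Nat.dvd_prime hp).mp hb with rfl | rfl
  · exact Or.inl ⟨1, assoc_pm 1 (by rw [← hab]) (by simp)⟩
  · exact Or.inr (bad (Or.inl (by rw [← hab]; simp)))
  · exact Or.inr (bad (Or.inr (by rw [← hab]; simp)))
  · exact Or.inl ⟨S, assoc_pm _ hab.symm (Or.inr (by rw [hS]; simp))⟩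

theorem D2even {P R l : ℕ} (Q : QuadData k (8 * l)) (hl : l.Prime) (hl2 : l ≠ 2)
    (hPR : (P = 2 ∧ R = l) ∨ (P = l ∧ R = 2)) (hP4 : P = 2 ∨ P % 4 = 1)
    (hno : ∀ X Y Z : ℤ, X ^ 2 = (-R : ℤ) * Y ^ 2 + P * Z ^ 2 → IsCoprime X ((-R : ℤ) * Y ^ 2) →
      IsCoprime X ((P : ℤ) * Z ^ 2) → False)
    (c : ClassGroup (𝓞 k)) (hc : c ^ 4 = 1) : c ^ 2 = 1 := by
  have hPp : P.Prime := by rcases hPR with ⟨rfl, rfl⟩ | ⟨rfl, rfl⟩ <;> first | exact Nat.prime_two | exact hl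
  have hRp : R.Prime := by rcases hPR with ⟨rfl, rfl⟩ | ⟨rfl, rfl⟩ <;> first | exact Nat.prime_two | exact hl
  have hPRne : P ≠ R := by rcases hPR with ⟨rfl, rfl⟩ | ⟨rfl, rfl⟩ <;> omega
  have hPRl : (P : ℚ) * R = 2 * l := by rcases hPR with ⟨rfl, rfl⟩ | ⟨rfl, rfl⟩ <;> push_cast <;> ring
  obtain ⟨θ, hθ, hθ2⟩ := Q.thetaEven (N := 2 * l) (by ring)
  push_cast at hθ2
  obtain ⟨r, t, ht, hrt⟩ : ∃ r t : ℤ, t ≠ 0 ∧ (P : ℤ) = r ^ 2 + t ^ 2 := by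
    rcases hP4 with rfl | h
    · exact ⟨1, 1, one_ne_zero, by norm_num⟩
    · exact sum_sq_ex hPp h
  refine Q.D2 θ _ hθ (by simp [hl.ne_zero]) (fun n hn => ?_) c hc
  have hn' : n.natAbs ∣ 8 * l := by
    rw [← Int.natAbs_dvd_natAbs] at hn; simpa [Int.natAbs_mul] using hn
  have bad : ∀ m : ℚ, m ≠ 0 → ((n.natAbs : ℚ) = 2 * m ^ 2 ∨ (n.natAbs : ℚ) = l * m ^ 2) →
      ¬ ∃ x y a : ℚ, a ≠ 0 ∧ x ^ 2 + ((8 * l : ℤ) : ℚ) * y ^ 2 = (n.natAbs : ℚ) * a ^ 2 := by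
    rintro m hm h ⟨x, y, a, ha, hxy⟩
    have h' : (n.natAbs : ℚ) = P * m ^ 2 ∨ (n.natAbs : ℚ) = R * m ^ 2 := by
      rcases hPR with ⟨rfl, rfl⟩ | ⟨rfl, rfl⟩
      · simpa using h
      · simpa using h.symm
    obtain ⟨X, Y, Z, h1, h2, h3⟩ := norm_sol P R hPp hRp hPRne r t ht hrt x (2 * y) a _ m ha hm h'
      (by rw [hPRl]; push_cast at hxy; linear_combination hxy)
    exact hno X Y Z h1 h2 h3
  rcases dvd_cases8 hl hn' with h | h | h | h | h | h | h | h
  · exact Or.inl ⟨1, assoc_pm 1 h (by simp)⟩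
  · exact Or.inr (bad 1 one_ne_zero (Or.inl (by rw [h]; norm_num)))
  · exact Or.inl ⟨2, assoc_pm 4 h (by norm_num)⟩
  · exact Or.inr (bad 2 two_ne_zero (Or.inl (by rw [h]; norm_num)))
  · exact Or.inr (bad 1 one_ne_zero (Or.inr (by rw [h]; norm_num)))
  · exact Or.inl ⟨θ, assoc_pm _ h (Or.inr (by rw [hθ2]; push_cast; ring))⟩
  · exact Or.inr (bad 2 two_ne_zero (Or.inr (by rw [h]; push_cast; ring)))
  · exact Or.inl ⟨2 * θ, assoc_pm _ h (Or.inr (by rw [mul_pow, hθ2]; push_cast; ring))⟩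

theorem D2four {p : ℕ} (Q : QuadData k (4 * p)) (hp : p.Prime) (hp4 : p % 4 = 1)
    (hno : p % 8 ≠ 1)
    (c : ClassGroup (𝓞 k)) (hc : c ^ 4 = 1) : c ^ 2 = 1 := by
  obtain ⟨θ, hθ, hθ2⟩ := Q.thetaEven (N := p) (by ring)
  push_cast at hθ2
  refine Q.D2 θ _ hθ (by simp [hp.ne_zero]) (fun n hn => ?_) c hc
  have hn' : n.natAbs ∣ 4 * p := by
    rw [← Int.natAbs_dvd_natAbs] at hn; simpa [Int.natAbs_mul] using hn
  have bad : ((n.natAbs : ℚ) = 2 ∨ (n.natAbs : ℚ) = 2 * p) →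
      ¬ ∃ x y a : ℚ, a ≠ 0 ∧ x ^ 2 + ((4 * p : ℤ) : ℚ) * y ^ 2 = (n.natAbs : ℚ) * a ^ 2 := by
    rintro h ⟨x, y, a, ha, hxy⟩
    exact hno (two_sol p hp hp4 x (2 * y) a _ ha h (by push_cast at hxy; linear_combination hxy))
  obtain ⟨a, b, ha, hb, hab⟩ := (Nat.dvd_mul).mp hn'
  have ha' : a ∈ Nat.divisors 4 := by simpa using ha
  have : Nat.divisors 4 = {1, 2, 4} := by decide
  rw [this] at ha'
  simp only [Finset.mem_insert, Finset.mem_singleton] at ha'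
  rcases (Nat.dvd_prime hp).mp hb with rfl | rfl <;> rcases ha' with rfl | rfl | rfl
  · exact Or.inl ⟨1, assoc_pm 1 hab.symm (by simp)⟩
  · exact Or.inr (bad (Or.inl (by rw [← hab]; norm_num)))
  · exact Or.inl ⟨2, assoc_pm 4 hab.symm (by norm_num)⟩
  · exact Or.inl ⟨θ, assoc_pm _ hab.symm (Or.inr (by rw [hθ2]; push_cast; ring))⟩
  · exact Or.inr (bad (Or.inr (by rw [← hab]; push_cast; ring)))
  · exact Or.inl ⟨2 * θ, assoc_pm _ hab.symm (Or.inr (by rw [mul_pow, hθ2]; push_cast; ring))⟩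

/-- Combination: the real prime discriminant case. -/
theorem D2pos (K : Type*) [Field K] [NumberField K] [IsTotallyComplex K]
    (u : ℕ) (hu : Odd u) (hcl : ∀ I : Ideal (𝓞 K), ∃ a, I ^ u = Ideal.span {a})
    {m n : ℤ} (Q : QuadData k (-(m * n))) (hPm : Pstar m) (hm : m < 0) (hPn : Pstar n) (hn : 0 < n)
    (hne : ¬ ((m = -4 ∨ m = -8) ∧ n = 8))
    (α β : K) (hα : α ^ 2 = (m : K)) (hβ : β ^ 2 = (n : K))
    (g : K ≃ₐ[ℚ] K) (hg : ∀ t, g (g t) = t) (hgα : g α = -α) (hgβ : g β = -β)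
    (c : ClassGroup (𝓞 k)) (hc : c ^ 4 = 1) : c ^ 2 = 1 := by
  have hgα2 : g (α / 2) = -(α / 2) := by rw [map_div₀, hgα, map_ofNat, neg_div]
  have hgβ2 : g (β / 2) = -(β / 2) := by rw [map_div₀, hgβ, map_ofNat, neg_div]
  rcases hPn.pos_cases hn with rfl | ⟨p, hp, hp4, rfl⟩
  · rcases hPm.neg_cases hm with rfl | rfl | ⟨q, hq, hq4, rfl⟩
    · exact absurd ⟨Or.inl rfl, rfl⟩ hne
    · exact absurd ⟨Or.inr rfl, rfl⟩ hne
    · have e : -(-(q : ℤ) * 8) = 8 * q := by ring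
      rw [e] at Q
      refine Q.D2even (P := 2) (R := q) hq (by omega) (Or.inl ⟨rfl, rfl⟩) (Or.inl rfl) ?_ c hc
      intro X Y Z h1 h2 h3
      refine redei_8 K u hu hcl q hq4 X Y Z α (β / 2) hα ?_ g hg hgα hgβ2 (by exact_mod_cast h1) (by exact_mod_cast h3)
      rw [div_pow, hβ]; norm_num
  · rcases hPm.neg_cases hm with rfl | rfl | ⟨q, hq, hq4, rfl⟩
    · have e : -(-4 * (p : ℤ)) = 4 * p := by ring
      rw [e] at Q
      refine Q.D2four hp hp4 ?_ c hc
      intro h8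
      refine redei_neg4 K u hu hcl p hp h8 (α / 2) β ?_ hβ g hg hgα2 hgβ
      rw [div_pow, hα]; norm_num
    · have e : -(-8 * (p : ℤ)) = 8 * p := by ring
      rw [e] at Q
      refine Q.D2even (P := p) (R := 2) hp (by omega) (Or.inr ⟨rfl, rfl⟩) (Or.inr hp4) ?_ c hc
      intro X Y Z h1 h2 h3
      refine redei_neg8 K u hu hcl p hp4 X Y Z (α / 2) β ?_ hβ g hg hgα2 hgβ (by exact_mod_cast h1) (by exact_mod_cast h2)
      rw [div_pow, hα]; norm_num
    · have e : -(-(q : ℤ) * (p : ℤ)) = q * p := by ring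
      rw [e] at Q
      refine Q.D2odd hp hq hp4 hq4 ?_ c hc
      intro X Y Z h1 h2 h3
      exact redei_odd K u hu hcl p q hp4 hq4 X Y Z α β hα hβ g hg hgα hgβ h1 h2 h3
end QuadData

end

section

theorem sq0 (m : ℤ) : ((m : ℂ) ^ ((1 : ℂ) / 2)) ^ 2 = (m : ℂ) := by
  have := Complex.cpow_nat_inv_pow (m : ℂ) (n := 2) two_ne_zero
  rw [one_div]
  exact_mod_cast this

theorem s0_mem (m : ℤ) : (m : ℂ) ^ ((1 : ℂ) / 2) ∈ Qsqrt m :=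
  IntermediateField.mem_adjoin_simple_self ℚ _

theorem mem_Qsqrt {m : ℤ} {t : ℂ} (h : t ^ 2 = (m : ℂ)) : t ∈ Qsqrt m := by
  rw [← sq0 m] at h
  rcases sq_eq_sq_iff_eq_or_eq_neg.mp h with h | h
  · rw [h]; exact s0_mem m
  · rw [h]; exact neg_mem (s0_mem m)

theorem Qsqrt_le {m : ℤ} {t : ℂ} (h : t ^ 2 = (m : ℂ)) {K : IntermediateField ℚ ℂ} (ht : t ∈ K) : Qsqrt m ≤ K := by
  unfold Qsqrt
  rw [IntermediateField.adjoin_simple_le_iff]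
  rw [← sq0 m] at h
  rcases sq_eq_sq_iff_eq_or_eq_neg.mp h with h | h
  · rw [← h]; exact ht
  · have : (m : ℂ) ^ ((1 : ℂ) / 2) = -t := by rw [h, neg_neg]
    rw [this]; exact neg_mem ht

theorem nf_Qsqrt (m : ℤ) : NumberField (Qsqrt m) := by
  have hi : IsIntegral ℚ ((m : ℂ) ^ ((1 : ℂ) / 2)) := by
    apply IsIntegral.of_pow (n := 2) two_pos
    rw [sq0]
    exact isIntegral_intCast m
  haveI : FiniteDimensional ℚ (Qsqrt m) := IntermediateField.adjoin.finiteDimensional hi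
  exact { to_charZero := inferInstance, to_finiteDimensional := inferInstance }

theorem conj_s0 {m : ℤ} (hm : m < 0) {t : ℂ} (h : t ^ 2 = (m : ℂ)) : starRingEnd ℂ t = -t := by
  have h1 := congrArg Complex.re h
  have h2 := congrArg Complex.im h
  simp [sq] at h1 h2
  have hmR : (m : ℝ) < 0 := by exact_mod_cast hm
  have h3 : t.re * t.im = 0 := by linarith
  have h4 : t.re = 0 := by
    rcases mul_eq_zero.mp h3 with h | h
    · exact h
    · rw [h] at h1; nlinarith [mul_self_nonneg t.re]
  apply Complex.ext <;> simp [h4]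

theorem rep_Qsqrt {m : ℤ} (hm : m < 0) {t : ℂ} (ht : t ∈ Qsqrt m) :
    ∃ a b : ℚ, t = a + b * (m : ℂ) ^ ((1 : ℂ) / 2) := by
  have hs := sq0 m
  set s := (m : ℂ) ^ ((1 : ℂ) / 2) with hsdef
  have hmQ : (m : ℚ) < 0 := by exact_mod_cast hm
  unfold Qsqrt at ht
  induction ht using IntermediateField.adjoin_induction with
  | mem x hx => exact ⟨0, 1, by rw [Set.mem_singleton_iff.mp hx]; simp [hsdef]⟩
  | algebraMap x => exact ⟨x, 0, by simp⟩
  | add x y _ _ hx hy =>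
    obtain ⟨a, b, rfl⟩ := hx
    obtain ⟨c, d, rfl⟩ := hy
    exact ⟨a + c, b + d, by push_cast; ring⟩
  | inv x _ hx =>
    obtain ⟨a, b, rfl⟩ := hx
    by_cases h0 : (a : ℂ) + b * s = 0
    · exact ⟨0, 0, by rw [h0]; simp⟩
    · have hN : a ^ 2 - m * b ^ 2 ≠ 0 := by
        intro h
        have hb : b ^ 2 = 0 := by nlinarith [sq_nonneg a, sq_nonneg b]
        have ha : a ^ 2 = 0 := by rw [hb] at h; linarith
        apply h0
        have ha' : a = 0 := by simpa using ha
        have hb' : b = 0 := by simpa using hb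
        simp [ha', hb']
      refine ⟨a / (a ^ 2 - m * b ^ 2), -b / (a ^ 2 - m * b ^ 2), ?_⟩
      have hNC : ((a : ℂ) ^ 2 - m * b ^ 2) ≠ 0 := by exact_mod_cast hN
      push_cast
      symm
      apply eq_inv_of_mul_eq_one_left
      field_simp
      linear_combination -(b : ℂ) ^ 2 * hs
  | mul x y _ _ hx hy =>
    obtain ⟨a, b, rfl⟩ := hx
    obtain ⟨c, d, rfl⟩ := hy
    refine ⟨a * c + m * (b * d), a * d + b * c, ?_⟩
    push_cast
    linear_combination (b : ℂ) * d * hs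

theorem quad_Qsqrt {m : ℤ} (hm : m < 0) [NumberField (Qsqrt m)] : Nonempty (QuadData (Qsqrt m) (-m)) := by
  have hstab : ∀ t ∈ Qsqrt m, starRingEnd ℂ t ∈ Qsqrt m := by
    intro t ht
    obtain ⟨a, b, rfl⟩ := rep_Qsqrt hm ht
    rw [map_add, map_mul, conj_s0 hm (sq0 m), map_ratCast, map_ratCast]
    exact add_mem (SubfieldClass.ratCast_mem _ _) (mul_mem (SubfieldClass.ratCast_mem _ _) (neg_mem (s0_mem m)))
  let f : Qsqrt m →ₐ[ℚ] Qsqrt m :=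
    ((Complex.conjAe.restrictScalars ℚ).toAlgHom.comp (Qsqrt m).val).codRestrict (Qsqrt m).toSubalgebra
      (fun x => hstab x x.2)
  have hf : ∀ x, ((f x : Qsqrt m) : ℂ) = starRingEnd ℂ (x : ℂ) := fun x => rfl
  have hff : ∀ x, f (f x) = x := fun x => Subtype.ext (by rw [hf, hf]; simp)
  refine ⟨⟨AlgEquiv.ofAlgHom f f (AlgHom.ext hff) (AlgHom.ext hff), ⟨_, s0_mem m⟩, by omega, ?_, ?_, ?_⟩⟩
  · apply Subtype.ext
    push_cast
    rw [sq0]; simp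
  · apply Subtype.ext
    exact conj_s0 hm (sq0 m)
  · intro x
    obtain ⟨a, b, h⟩ := rep_Qsqrt hm x.2
    exact ⟨a, b, Subtype.ext (by push_cast; exact h)⟩

end

section

theorem cl_pow_eight {m : ℤ} [NumberField (Qsqrt m)] {K : IntermediateField ℚ ℂ} [NumberField K] (hle : Qsqrt m ≤ K) (u : ℕ)
    (hcl : ∀ I : Ideal (𝓞 K), ∃ a, I ^ u = Ideal.span {a}) (hK : Module.finrank ℚ K = 8)
    (c : ClassGroup (𝓞 (Qsqrt m))) : (c ^ u) ^ 8 = 1 := by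
  letI : Algebra (Qsqrt m) K := (IntermediateField.inclusion hle).toRingHom.toAlgebra
  have := cl_sub (Qsqrt m) K u hcl hK c
  rw [← pow_mul, mul_comm]; exact this

theorem E1 {m : ℤ} {K : IntermediateField ℚ ℂ} [NumberField K] (hP : Pstar m) (hm : m < 0)
    (u : ℕ) (hcl : ∀ I : Ideal (𝓞 K), ∃ a, I ^ u = Ideal.span {a}) (hK : Module.finrank ℚ K = 8)
    (x : K) (hx : x ^ 2 = (m : K)) : Efield (Qsqrt m) ∣ u := by
  haveI := nf_Qsqrt m
  obtain ⟨Q⟩ := quad_Qsqrt hm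
  have hle : Qsqrt m ≤ K := Qsqrt_le (t := (x : ℂ)) (by have := congrArg (Subtype.val) hx; exact_mod_cast this) x.2
  apply Monoid.exponent_dvd_of_forall_pow_eq_one
  intro c
  have h := cl_pow_eight hle u hcl hK c
  apply Q.D1neg hP hm
  apply Q.D1neg hP hm
  apply Q.D1neg hP hm
  rw [← h]; simp only [← pow_mul, mul_assoc]; norm_num

theorem E2 {m n : ℤ} {K : IntermediateField ℚ ℂ} [NumberField K] [IsTotallyComplex K] (hP : Pstar m) (hm : m < 0)
    (hPn : Pstar n) (hn : 0 < n) (hne : ¬ ((m = -4 ∨ m = -8) ∧ n = 8))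
    (u : ℕ) (hu : Odd u) (hcl : ∀ I : Ideal (𝓞 K), ∃ a, I ^ u = Ideal.span {a}) (hK : Module.finrank ℚ K = 8)
    (x y : K) (hx : x ^ 2 = (m : K)) (hy : y ^ 2 = (n : K))
    (g : K ≃ₐ[ℚ] K) (hg : ∀ t, g (g t) = t) (hgx : g x = -x) (hgy : g y = -y) :
    Efield (Qsqrt (m * n)) ∣ 2 * u := by
  haveI := nf_Qsqrt (m * n)
  obtain ⟨Q⟩ := quad_Qsqrt (m := m * n) (by nlinarith)
  have hxy : (x * y) ^ 2 = ((m * n : ℤ) : K) := by rw [mul_pow, hx, hy]; push_cast; ring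
  have hle : Qsqrt (m * n) ≤ K :=
    Qsqrt_le (t := ((x * y : K) : ℂ)) (by have := congrArg (Subtype.val) hxy; exact_mod_cast this) (x * y).2
  apply Monoid.exponent_dvd_of_forall_pow_eq_one
  intro c
  have h := cl_pow_eight hle u hcl hK c
  have h1 : ((c ^ u) ^ 2) ^ 2 = 1 :=
    Q.D2pos K u hu hcl hP hm hPn hn hne x y hx hy g hg hgx hgy _ (by rw [← h]; simp only [← pow_mul, mul_assoc]; norm_num)
  have h2 : (c ^ u) ^ 2 = 1 :=
    Q.D2pos K u hu hcl hP hm hPn hn hne x y hx hy g hg hgx hgy _ (by rw [← h1]; simp only [← pow_mul, mul_assoc]; norm_num)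
  rw [mul_comm 2 u, pow_mul]; exact h2

theorem K_eq {K : IntermediateField ℚ ℂ} [FiniteDimensional ℚ K] [IsGalois ℚ K] {m1 m2 m3 : ℤ} (hT : Tri K m1 m2 m3) :
    K = Qsqrt m1 ⊔ Qsqrt m2 ⊔ Qsqrt m3 := by
  obtain ⟨x1, x2, x3, h1, h2, h3, -, hfix⟩ := hT
  have g1 : (x1 : ℂ) ^ 2 = m1 := by have := congrArg (Subtype.val) h1; exact_mod_cast this
  have g2 : (x2 : ℂ) ^ 2 = m2 := by have := congrArg (Subtype.val) h2; exact_mod_cast this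
  have g3 : (x3 : ℂ) ^ 2 = m3 := by have := congrArg (Subtype.val) h3; exact_mod_cast this
  apply le_antisymm
  · set F := Qsqrt m1 ⊔ Qsqrt m2 ⊔ Qsqrt m3 with hF
    have e1 : (x1 : ℂ) ∈ F := (le_sup_left.trans le_sup_left : Qsqrt m1 ≤ F) (mem_Qsqrt g1)
    have e2 : (x2 : ℂ) ∈ F := (le_sup_right.trans le_sup_left : Qsqrt m2 ≤ F) (mem_Qsqrt g2)
    have e3 : (x3 : ℂ) ∈ F := (le_sup_right : Qsqrt m3 ≤ F) (mem_Qsqrt g3)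
    let F' : IntermediateField ℚ K := F.comap K.val
    have hbot : F'.fixingSubgroup = ⊥ := by
      rw [eq_bot_iff]
      intro g hg
      rw [IntermediateField.mem_fixingSubgroup_iff] at hg
      rw [Subgroup.mem_bot]
      exact hfix g (hg _ e1) (hg _ e2) (hg _ e3)
    have htop : F' = ⊤ := by
      rw [← IsGalois.fixedField_fixingSubgroup F', hbot, IntermediateField.fixedField_bot]
    intro t ht
    have : (⟨t, ht⟩ : K) ∈ F' := by rw [htop]; exact IntermediateField.mem_top
    exact this
  · exact sup_le (sup_le (Qsqrt_le g1 x1.2) (Qsqrt_le g2 x2.2)) (Qsqrt_le g3 x3.2)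

theorem hcl_of {K : Type*} [Field K] [NumberField K] (u : ℕ) (hupos : 0 < u)
    (h : ∀ c : ClassGroup (𝓞 K), c ^ u = 1) : ∀ I : Ideal (𝓞 K), ∃ a, I ^ u = Ideal.span {a} := by
  intro I
  by_cases hI : I = ⊥
  · refine ⟨0, ?_⟩
    rw [hI, ← Ideal.zero_eq_bot, zero_pow hupos.ne']
    simp
  · have hI' : I ∈ nonZeroDivisors (Ideal (𝓞 K)) := mem_nonZeroDivisors_iff_ne_zero.mpr hI
    have := h (ClassGroup.mk0 ⟨I, hI'⟩)
    rw [← map_pow, ClassGroup.mk0_eq_one_iff] at this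
    obtain ⟨a, ha⟩ := this
    exact ⟨a, ha⟩

theorem conj_ex (K : IntermediateField ℚ ℂ) [FiniteDimensional ℚ K] [IsGalois ℚ K]
    (hcomm : ∀ g h : K ≃ₐ[ℚ] K, ∀ t, g (h t) = h (g t)) :
    ∃ c : K ≃ₐ[ℚ] K, ∀ φ : K →+* ℂ, ∀ x, φ (c x) = starRingEnd ℂ (φ x) := by
  let c : K ≃ₐ[ℚ] K := (Complex.conjAe.restrictScalars ℚ).restrictNormal K
  have hc : ∀ x : K, ((c x : K) : ℂ) = starRingEnd ℂ (x : ℂ) := fun x =>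
    AlgEquiv.restrictNormal_commutes (Complex.conjAe.restrictScalars ℚ) K x
  refine ⟨c, fun φ x => ?_⟩
  let ψ : K →ₐ[ℚ] ℂ := φ.toRatAlgHom
  have hr : ∀ y : K, ∃ z : K, ψ y = (z : ℂ) := by
    intro y
    haveI hN : Normal ℚ K := IsGalois.to_normal
    have hK : ψ.fieldRange = K := @AlgHom.fieldRange_of_normal ℚ ℂ _ _ _ K hN ψ
    have hy : ψ y ∈ ψ.fieldRange := ⟨y, rfl⟩
    rw [hK] at hy
    exact ⟨⟨_, hy⟩, rfl⟩
  let h : K →ₐ[ℚ] K := ψ.codRestrict K.toSubalgebra (fun y => by obtain ⟨z, hz⟩ := hr y; rw [hz]; exact z.2)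
  let h' : K ≃ₐ[ℚ] K := AlgEquiv.ofBijective h (Algebra.IsAlgebraic.algHom_bijective h)
  have hφ : ∀ y, φ y = ((h' y : K) : ℂ) := fun y => rfl
  rw [hφ, hφ, hcomm, hc]

theorem tc_of (K : IntermediateField ℚ ℂ) [NumberField K] (him : IsImaginary K)
    (c : K ≃ₐ[ℚ] K) (hc : ∀ φ : K →+* ℂ, ∀ x, φ (c x) = starRingEnd ℂ (φ x)) : IsTotallyComplex K ∧ c ≠ 1 := by
  have hne : c ≠ 1 := by
    rintro rfl
    obtain ⟨x, hx⟩ := him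
    apply hx
    have := hc (algebraMap K ℂ) x
    exact Complex.conj_eq_iff_im.mp this.symm
  refine ⟨⟨fun v => ?_⟩, hne⟩
  rw [← InfinitePlace.not_isReal_iff_isComplex]
  intro hv
  rw [InfinitePlace.isReal_iff] at hv
  apply hne
  ext x : 1
  apply v.embedding.injective
  rw [hc]
  exact RingHom.congr_fun (ComplexEmbedding.isReal_iff.mp hv) x

end

/-- The last normalisation step: two negative entries are available. -/
theorem fin_step {K : IntermediateField ℚ ℂ} [NumberField K] [IsTotallyComplex K] [IsGalois ℚ K]
    (u : ℕ) (hu : Odd u) (hcl : ∀ I : Ideal (𝓞 K), ∃ a, I ^ u = Ideal.span {a}) (hK : Module.finrank ℚ K = 8)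
    (hG : ∀ g : K ≃ₐ[ℚ] K, ∀ t, g (g t) = t)
    (p₁ p₂ p₃ : ℤ) (hT : Tri K p₁ p₂ p₃) (P1 : Pstar p₁) (P2 : Pstar p₂) (P3 : Pstar p₃)
    (n1 : p₁ < 0) (n2 : p₂ < 0)
    (hne1 : ¬ ((p₁ = -4 ∨ p₁ = -8) ∧ p₃ = 8)) (hne2 : ¬ ((p₂ = -4 ∨ p₂ = -8) ∧ p₃ = 8)) :
    ∃ p₁ p₂ p₃ : ℤ, Pstar p₁ ∧ p₁ < 0 ∧ Pstar p₂ ∧ p₂ < 0 ∧ Pstar p₃ ∧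
      K = Qsqrt p₁ ⊔ Qsqrt p₂ ⊔ Qsqrt p₃ ∧
      Efield (Qsqrt p₁) ∣ u ∧ Efield (Qsqrt p₂) ∣ u ∧
      (p₃ < 0 → Efield (Qsqrt p₃) ∣ u) ∧
      (0 < p₃ → Efield (Qsqrt (p₁ * p₃)) ∣ 2 * u ∧ Efield (Qsqrt (p₂ * p₃)) ∣ 2 * u) := by
  refine ⟨p₁, p₂, p₃, P1, n1, P2, n2, P3, K_eq hT, ?_⟩
  obtain ⟨x1, x2, x3, h1, h2, h3, hex, -⟩ := hT
  refine ⟨E1 P1 n1 u hcl hK x1 h1, E1 P2 n2 u hcl hK x2 h2, fun n3 => E1 P3 n3 u hcl hK x3 h3, fun n3 => ?_⟩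
  obtain ⟨g, g1, g2, g3⟩ := hex (-1) (-1) (-1) (by ring) (by ring) (by ring)
  rw [neg_one_mul] at g1 g2 g3
  exact ⟨E2 P1 n1 P3 n3 hne1 u hu hcl hK x1 x3 h1 h3 g (hG g) g1 g3,
    E2 P2 n2 P3 n3 hne2 u hu hcl hK x2 x3 h2 h3 g (hG g) g2 g3⟩

theorem Tri.repl8 {K : Type*} [Field K] [NumberField K] {m1 m3 : ℤ} (hT : Tri K m1 8 m3) (h : m1 = -4 ∨ m1 = -8) :
    ∃ m, Pstar m ∧ m < 0 ∧ Tri K m1 m m3 := by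
  rcases h with rfl | rfl
  · exact ⟨-8, Or.inr (Or.inr (Or.inl rfl)), by norm_num,
      hT.repl 2 (-8) (by norm_num) (by norm_num) (by norm_num)⟩
  · exact ⟨-4, Or.inr (Or.inl rfl), by norm_num,
      hT.repl 4 (-4) (by norm_num) (by norm_num) (by norm_num)⟩

theorem two_neg {K : IntermediateField ℚ ℂ} [NumberField K] [IsTotallyComplex K] [IsGalois ℚ K]
    (u : ℕ) (hu : Odd u) (hcl : ∀ I : Ideal (𝓞 K), ∃ a, I ^ u = Ideal.span {a}) (hK : Module.finrank ℚ K = 8)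
    (hG : ∀ g : K ≃ₐ[ℚ] K, ∀ t, g (g t) = t)
    (p₁ p₂ p₃ : ℤ) (hT : Tri K p₁ p₂ p₃) (P1 : Pstar p₁) (P2 : Pstar p₂) (P3 : Pstar p₃)
    (n1 : p₁ < 0) (n2 : p₂ < 0) :
    ∃ p₁ p₂ p₃ : ℤ, Pstar p₁ ∧ p₁ < 0 ∧ Pstar p₂ ∧ p₂ < 0 ∧ Pstar p₃ ∧
      K = Qsqrt p₁ ⊔ Qsqrt p₂ ⊔ Qsqrt p₃ ∧
      Efield (Qsqrt p₁) ∣ u ∧ Efield (Qsqrt p₂) ∣ u ∧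
      (p₃ < 0 → Efield (Qsqrt p₃) ∣ u) ∧
      (0 < p₃ → Efield (Qsqrt (p₁ * p₃)) ∣ 2 * u ∧ Efield (Qsqrt (p₂ * p₃)) ∣ 2 * u) := by
  by_cases a1 : (p₁ = -4 ∨ p₁ = -8) ∧ p₃ = 8
  · obtain ⟨a, rfl⟩ := a1
    obtain ⟨m, Pm, nm, hT'⟩ := hT.swap23.repl8 a
    exact fin_step u hu hcl hK hG p₁ p₂ m hT'.swap23 P1 P2 Pm n1 n2 (fun h => by omega) (fun h => by omega)
  by_cases a2 : (p₂ = -4 ∨ p₂ = -8) ∧ p₃ = 8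
  · obtain ⟨a, rfl⟩ := a2
    obtain ⟨m, Pm, nm, hT'⟩ := hT.swap12.swap23.repl8 a
    exact fin_step u hu hcl hK hG p₁ p₂ m hT'.swap23.swap12 P1 P2 Pm n1 n2 (fun h => by omega) (fun h => by omega)
  exact fin_step u hu hcl hK hG p₁ p₂ p₃ hT P1 P2 P3 n1 n2 a1 a2

/-- Theorem on the shape of imaginary triquadratic fields whose class group has
exponent dividing an odd number `u`. -/
theorem stmt8 (u : ℕ) (hu : Odd u) (hupos : 0 < u)
    (K : IntermediateField ℚ ℂ)
    (hK : IsNQuadratic 3 K) (him : IsImaginary K)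
    (hE : Efield K ∣ u) :
    ∃ p₁ p₂ p₃ : ℤ, Pstar p₁ ∧ p₁ < 0 ∧ Pstar p₂ ∧ p₂ < 0 ∧ Pstar p₃ ∧
      K = Qsqrt p₁ ⊔ Qsqrt p₂ ⊔ Qsqrt p₃ ∧
      Efield (Qsqrt p₁) ∣ u ∧ Efield (Qsqrt p₂) ∣ u ∧
      (p₃ < 0 → Efield (Qsqrt p₃) ∣ u) ∧
      (0 < p₃ → Efield (Qsqrt (p₁ * p₃)) ∣ 2 * u ∧ Efield (Qsqrt (p₂ * p₃)) ∣ 2 * u) := by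
  obtain ⟨hfd, hgal, ⟨e⟩⟩ := hK
  haveI : NumberField K := { to_charZero := inferInstance, to_finiteDimensional := hfd }
  have hG : ∀ g : K ≃ₐ[ℚ] K, ∀ t, g (g t) = t := by
    intro g t
    have h : g * g = 1 := by
      apply e.injective
      rw [map_mul, map_one]
      funext i
      have : ∀ z : Multiplicative (ZMod 2), z * z = 1 := by decide
      exact this _
    exact DFunLike.congr_fun h t
  have hcomm : ∀ g h : K ≃ₐ[ℚ] K, ∀ t, g (h t) = h (g t) := by
    intro g h t
    have h : g * h = h * g := by
      apply e.injective
      rw [map_mul, map_mul, mul_comm]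
    exact DFunLike.congr_fun h t
  have hcard' : Nat.card (K ≃ₐ[ℚ] K) = 8 := by
    rw [Nat.card_congr e.toEquiv, Nat.card_eq_fintype_card]
    rfl
  have hcard : Fintype.card (K ≃ₐ[ℚ] K) = 8 := by rw [← Nat.card_eq_fintype_card]; exact hcard'
  have hfin : Module.finrank ℚ K = 8 := by rw [← IsGalois.card_aut_eq_finrank, hcard']
  have hcl : ∀ I : Ideal (𝓞 K), ∃ a, I ^ u = Ideal.span {a} :=
    hcl_of u hupos (fun c => by
      obtain ⟨v, rfl⟩ := hE
      rw [pow_mul]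
      have : c ^ Efield K = 1 := Monoid.pow_exponent_eq_one c
      rw [this, one_pow])
  obtain ⟨c, hc⟩ := conj_ex K hcomm
  obtain ⟨htc, hc1⟩ := tc_of K him c hc
  obtain ⟨m1, P1, x1, h1, hcx⟩ := S1 K u hu hcl hG hcomm c hc1
  have n1 : m1 < 0 := by
    by_contra hn
    have h0 : m1 ≠ 0 := P1.ne_zero
    have := conj_pos c hc h1 (by omega)
    rw [this] at hcx
    have hx0 : x1 = 0 := self_eq_neg.mp hcx
    rw [hx0] at h1
    apply h0
    have : (m1 : K) = 0 := by rw [← h1]; simp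
    exact_mod_cast this
  obtain ⟨m2, m3, P2, P3, hT⟩ := tri_exists K u hu hcl hG hcomm hcard c m1 x1 h1 hcx P1
  have h20 : m2 ≠ 0 := P2.ne_zero
  have h30 : m3 ≠ 0 := P3.ne_zero
  by_cases n2 : m2 < 0
  · exact two_neg u hu hcl hfin hG m1 m2 m3 hT P1 P2 P3 n1 n2
  by_cases n3 : m3 < 0
  · exact two_neg u hu hcl hfin hG m1 m3 m2 hT.swap23 P1 P3 P2 n1 n3
  by_cases a2 : (m1 = -4 ∨ m1 = -8) ∧ m2 = 8
  · obtain ⟨a, rfl⟩ := a2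
    obtain ⟨m, Pm, nm, hT'⟩ := hT.repl8 a
    exact two_neg u hu hcl hfin hG m1 m m3 hT' P1 Pm P3 n1 nm
  by_cases a3 : (m1 = -4 ∨ m1 = -8) ∧ m3 = 8
  · obtain ⟨a, rfl⟩ := a3
    obtain ⟨m, Pm, nm, hT'⟩ := hT.swap23.repl8 a
    exact two_neg u hu hcl hfin hG m1 m m2 hT' P1 Pm P2 n1 nm
  exact (C3 K u hu hcl hG hcomm c hc m1 m2 m3 hT P1 P2 P3 n1 (by omega) (by omega) a2 a3).elim
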